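/- Dichotomy for convergence rates (Corollary 6.2): Under the hypotheses of the main theorem (ω Diophantine; A analytic in x, Hölder in E; gap condition λ_j(E) − λ_{j+1}(E) > κ > 0 on ℰ), there exists c₁ = c₁(κ, A, ℰ, ω) > 0 such that |λ_j(E) − 2λ_{j,2ℓ}(E) + λ_{j,ℓ}(E)| ≤ exp(−c₁ℓ) for all sufficiently large ℓ, all E ∈ ℰ and all 1 ≤ j ≤ d. Moreover there is ℓ₀ = ℓ₀(c₁) such that: if |λ_{j,ℓ₁}(E) − λ_j(E)| > 4·exp(−c₁ℓ₁) for some ℓ₁ ≥ ℓ₀ and some j, then |λ_{j,2^k ℓ₁}(E) − λ_j(E)| > 2^{−(k+1)}·|λ_{j,ℓ₁}(E) − λ_j(E)| for all k ≥ 0. Consequently, for each E and j, either λ_{j,n}(E) → λ_j(E) exponentially fast, or there is C(E) > 0 with |λ_{j,n}(E) − λ_j(E)| > C(E)/n for infinitely many n. -/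

import Mathlib

/-!
Write `S_n` for the integral over the torus of `log ‖Λ^p A^{(n)}_x‖` (`phiInt`), so that `S_n / n` is
the sum `L_n` of the first `p` finite-scale exponents. The heart of the matter is that the second
difference `S_{4n} + 2 S_n - 3 S_{2n}` is `O(exp (-c n))`, uniformly in the parameter.

*Three blocks.* If `Λ^p B` is close to a rank one matrix, then `‖Λ^p (X B Y)‖ ‖Λ^p B‖` is close to
`‖Λ^p (X B)‖ ‖Λ^p (B Y)‖`, because equality holds for rank one matrices (`three_block_log`). The
distance to rank one is controlled by `‖Λ^{p-1} B‖ ‖Λ^{p+1} B‖ / ‖Λ^p B‖ ^ 2`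
(`exists_rankOne_approx`). For `B` a cocycle product of length `n` this ratio is exponentially small
by the gap condition, as soon as the norms are not much larger than expected, and `‖Λ^p B‖` and the
norms of the two-block products are not much smaller.

*Control of the norms.* The upper bounds hold for all phases, by subadditivity and equidistribution
of the rotation (`CocycleHyp.upper_bound`). The lower bounds hold off an exponentially small set of
phases (`CocycleHyp.lower_ldt`): after normalization the entries of `Λ^p A^{(n)}` form a bounded
periodic holomorphic vector function `f` on a strip, and `-log ‖f‖` is Lipschitz up to `O(n)`
logarithmic poles (`global_compare`, obtained by dividing out zeros). The Diophantine condition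
bounds the number of visits of an orbit to a short interval, hence the total contribution of the
poles to orbit sums of length `τ n` (`stripFun_ldt`), and `log ‖Λ^p A^{(n)}‖` is almost constant along
such an orbit.

*From one scale to all.* The integrated identity (`CocycleHyp.three_block`) needs a lower bound on
`S_n`, `S_{2n}` and `S_{3n}`. Near a parameter `e₀` such a bound holds at one large scale by
continuity, and the identity itself propagates it to all scales obtained by doubling
(`CocycleHyp.propagate`). Compactness of the parameter space gives a uniform rate, and telescoping
`2 L_{2^{k+1} n} - L_{2^k n}` in `k` yields `|L - 2 L_{2n} + L_n| ≤ exp (-c n)`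
(`CocycleHyp.sum_rate`). The cases `p = 0` and `p = d` are trivial, as `S_n` is then linear in `n`.

*Dichotomy.* With `y_n = λ_{j,n} - λ_j` the rate reads `2 y_{2ℓ} = y_ℓ + O(exp (-c₁ ℓ))`. If
`|y_ℓ| > 4 exp (-c₁ ℓ)` for one large `ℓ`, then `2^k |y_{2^k ℓ}|` stays above `|y_ℓ| / 2`, because the
errors sum up to less than half of `|y_ℓ|` (`doubling_lower_bound`); this is decay no faster than
`1/n`. Otherwise `|y_ℓ| ≤ 4 exp (-c₁ ℓ)` for all large `ℓ`.
-/

open MeasureTheory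

noncomputable section

/-- The canonical embedding of `K` (= ℝ or ℂ) into `ℂ`. -/
def rcToComplex {K : Type*} [RCLike K] (z : K) : ℂ := ⟨RCLike.re z, RCLike.im z⟩

/-- The operator norm of a matrix, viewed as an operator between Euclidean (ℓ²) spaces. -/
def matOpNorm {K : Type*} [RCLike K] {m n : Type*} [Fintype m] [Fintype n] [DecidableEq n]
    (M : Matrix m n K) : ℝ :=
  ‖LinearMap.toContinuousLinearMap (Matrix.toEuclideanLin M)‖

/-- The cocycle products `A^{(n)}_x(E) = A(x+nω,E)⋯A(x+2ω,E)A(x+ω,E)`. -/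
def cocycle {K : Type*} [RCLike K] {d : ℕ} {ε : Type*}
    (A : ℝ → ε → Matrix (Fin d) (Fin d) K) (ω : ℝ) (n : ℕ) (x : ℝ) (e : ε) :
    Matrix (Fin d) (Fin d) K :=
  ((List.range n).reverse.map (fun j => A (x + (j + 1 : ℕ) * ω) e)).prod

/-- The `p`-th exterior power (compound matrix): the matrix of all `p × p` minors,
indexed by `p`-element subsets of the index set. -/
def compound {K : Type*} [RCLike K] {d : ℕ} (p : ℕ) (M : Matrix (Fin d) (Fin d) K) :
    Matrix {s : Finset (Fin d) // s.card = p} {s : Finset (Fin d) // s.card = p} K :=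
  fun s t =>
    (M.submatrix (fun i => (s.1.orderIsoOfFin s.2 i : Fin d))
      (fun i => (t.1.orderIsoOfFin t.2 i : Fin d))).det

/-- `Σ_{i=1}^p λ_{i,n}(E) = (1/n) ∫_𝕋 log ‖Λ^p A^{(n)}_x(E)‖ dx`. -/
def sumLyapFin {K : Type*} [RCLike K] {d : ℕ} {ε : Type*}
    (A : ℝ → ε → Matrix (Fin d) (Fin d) K) (ω : ℝ) (p n : ℕ) (e : ε) : ℝ :=
  (1 / n : ℝ) * ∫ x in (0:ℝ)..1, Real.log (matOpNorm (compound p (cocycle A ω n x e)))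

/-- The finite-scale Lyapunov exponents `λ_{i,n}(E)` (for `1 ≤ i ≤ d`). -/
def lyapFin {K : Type*} [RCLike K] {d : ℕ} {ε : Type*}
    (A : ℝ → ε → Matrix (Fin d) (Fin d) K) (ω : ℝ) (i n : ℕ) (e : ε) : ℝ :=
  sumLyapFin A ω i n e - sumLyapFin A ω (i - 1) n e

/-- `Σ_{i=1}^p λ_i(E) = lim_n Σ_{i=1}^p λ_{i,n}(E)`; by subadditivity the limit
is the infimum over the scales `n ≥ 1`. -/
def sumLyap {K : Type*} [RCLike K] {d : ℕ} {ε : Type*}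
    (A : ℝ → ε → Matrix (Fin d) (Fin d) K) (ω : ℝ) (p : ℕ) (e : ε) : ℝ :=
  ⨅ n : ℕ, sumLyapFin A ω p (n + 1) e

/-- The Lyapunov exponents `λ_i(E) = lim_n λ_{i,n}(E)` (for `1 ≤ i ≤ d`). -/
def lyap {K : Type*} [RCLike K] {d : ℕ} {ε : Type*}
    (A : ℝ → ε → Matrix (Fin d) (Fin d) K) (ω : ℝ) (i : ℕ) (e : ε) : ℝ :=
  sumLyap A ω i e - sumLyap A ω (i - 1) e

/-- The Diophantine condition `‖nω‖_{ℝ/ℤ} ≥ c(ω) / (n (log n)^a)` for all `n ≥ 2`. -/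
def Diophantine (ω a : ℝ) : Prop :=
  ∃ cω > (0:ℝ), ∀ n : ℕ, 2 ≤ n → ∀ k : ℤ,
    cω / (n * Real.log n ^ a) ≤ |(n : ℝ) * ω - k|

/-- `x ↦ A(x,E)` is analytic, uniformly in `E`: identifying the torus `𝕋 = ℝ/ℤ` with the
unit circle, `A(·,E)` extends holomorphically to a fixed annulus around the circle
(equivalently, to a fixed `1`-periodic strip `{|Im z| < ρ}`), with a uniform bound. -/
def AnalyticOnStrip {K : Type*} [RCLike K] {d : ℕ} {ε : Type*}
    (A : ℝ → ε → Matrix (Fin d) (Fin d) K) : Prop :=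
  ∃ ρ > (0:ℝ), ∃ F : ℂ → ε → Matrix (Fin d) (Fin d) ℂ,
    (∀ e i j, DifferentiableOn ℂ (fun z => F z e i j) {z : ℂ | |z.im| < ρ}) ∧
    (∀ z e, F (z + 1) e = F z e) ∧
    (∀ (x : ℝ) (e : ε), F (x : ℂ) e = (A x e).map rcToComplex) ∧
    (∃ M : ℝ, ∀ z ∈ {z : ℂ | |z.im| < ρ}, ∀ e, matOpNorm (F z e) ≤ M)

/-! ### Cauchy–Binet and compound matrices -/

section

/-- Expansion of `det (M * N)` by multilinearity in the columns; the maps `f` that are not injective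
contribute zero. -/
theorem det_mul_eq_sum_fun {R : Type*} [CommRing R] {p : ℕ} {n : Type*} [Fintype n] [DecidableEq n]
    (M : Matrix (Fin p) n R) (N : Matrix n (Fin p) R) :
    (M * N).det = ∑ f : Fin p → n, (∏ i, N (f i) i) * (M.submatrix id f).det := by
  have h1 : (M * N).det =
      Matrix.detRowAlternating (fun i => ∑ k, N k i • (M.transpose k)) := by
    rw [← Matrix.det_transpose]
    change Matrix.det _ = Matrix.det _
    congr 1
    ext i j
    simp [Matrix.mul_apply, Finset.sum_apply, mul_comm]
  rw [h1]
  erw [MultilinearMap.map_sum]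
  refine Finset.sum_congr rfl fun f _ => ?_
  erw [MultilinearMap.map_smul_univ]
  rw [smul_eq_mul]
  congr 1
  rw [← Matrix.det_transpose]
  rfl

/-- **Cauchy–Binet.** -/
theorem det_mul_eq_sum_subsets {R : Type*} [CommRing R] {p d : ℕ}
    (M : Matrix (Fin p) (Fin d) R) (N : Matrix (Fin d) (Fin p) R) :
    (M * N).det = ∑ T : {s : Finset (Fin d) // s.card = p},
      (M.submatrix id (fun i => (T.1.orderIsoOfFin T.2 i : Fin d))).det *
      (N.submatrix (fun i => (T.1.orderIsoOfFin T.2 i : Fin d)) id).det := by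
  classical
  rw [det_mul_eq_sum_fun]
  have h2 : ∀ T : {s : Finset (Fin d) // s.card = p},
      (M.submatrix id (fun i => (T.1.orderIsoOfFin T.2 i : Fin d))).det *
      (N.submatrix (fun i => (T.1.orderIsoOfFin T.2 i : Fin d)) id).det =
      ∑ τ : Equiv.Perm (Fin p), (∏ i, N (T.1.orderIsoOfFin T.2 (τ i)) i) *
        (M.submatrix id (fun i => (T.1.orderIsoOfFin T.2 (τ i) : Fin d))).det := by
    intro T
    rw [Matrix.det_apply' (N.submatrix _ _), Finset.mul_sum]
    refine Finset.sum_congr rfl fun τ _ => ?_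
    have : (M.submatrix id (fun i => (T.1.orderIsoOfFin T.2 (τ i) : Fin d))).det =
        Equiv.Perm.sign τ * (M.submatrix id (fun i => (T.1.orderIsoOfFin T.2 i : Fin d))).det := by
      rw [← Matrix.det_permute']
      rfl
    rw [this]
    simp only [Matrix.submatrix_apply, id]
    ring
  rw [Finset.sum_congr rfl fun T _ => h2 T, Finset.sum_sigma']
  symm
  refine Finset.sum_of_injOn
    (fun x i => (x.1.1.orderIsoOfFin x.1.2 (x.2 i) : Fin d)) ?_ ?_ ?_ ?_
  · rintro ⟨T, τ⟩ - ⟨T', τ'⟩ - h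
    have hT : ∀ (T : {s : Finset (Fin d) // s.card = p}) (τ : Equiv.Perm (Fin p)),
        Finset.univ.image (fun i => (T.1.orderIsoOfFin T.2 (τ i) : Fin d)) = T.1 := by
      intro T τ
      ext y
      simp only [Finset.mem_image, Finset.mem_univ, true_and]
      constructor
      · rintro ⟨i, rfl⟩; exact Subtype.property _
      · intro hy
        exact ⟨τ.symm ((T.1.orderIsoOfFin T.2).symm ⟨y, hy⟩), by simp⟩
    have hTT : T = T' := by
      apply Subtype.ext
      rw [← hT T τ, ← hT T' τ']
      exact congrArg (fun f => Finset.univ.image f) h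
    subst hTT
    have : τ = τ' := by
      ext i
      have := congrFun h i
      simp only at this
      have := (T.1.orderIsoOfFin T.2).injective (Subtype.ext this)
      rw [this]
    rw [this]
  · intro x _; simp
  · intro f _ hf
    by_cases hinj : Function.Injective f
    · exfalso
      apply hf
      have hc : (Finset.univ.image f).card = p := by
        rw [Finset.card_image_of_injective _ hinj]; simp
      let T : {s : Finset (Fin d) // s.card = p} := ⟨Finset.univ.image f, hc⟩
      have hm : ∀ i, f i ∈ T.1 := fun i => Finset.mem_image_of_mem _ (Finset.mem_univ i)
      let g : Fin p → Fin p := fun i => (T.1.orderIsoOfFin T.2).symm ⟨f i, hm i⟩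
      have hg : Function.Injective g := by
        intro i j hij
        have := (T.1.orderIsoOfFin T.2).symm.injective hij
        exact hinj (congrArg Subtype.val this)
      refine ⟨⟨T, Equiv.ofBijective g (Finite.injective_iff_bijective.mp hg)⟩, by simp, ?_⟩
      funext i
      simp [g]
    · have : ∃ i j, f i = f j ∧ i ≠ j := by
        simpa [Function.Injective] using hinj
      obtain ⟨i, j, hij, hne⟩ := this
      rw [Matrix.det_zero_of_column_eq hne (by intro k; simp [hij]), mul_zero]
  · intro x _; rfl

variable {K : Type*} [RCLike K] {d : ℕ}

/-- Functoriality of the exterior power, `Λ^p (M N) = Λ^p M Λ^p N`. -/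
theorem compound_mul (p : ℕ) (M N : Matrix (Fin d) (Fin d) K) :
    compound p (M * N) = compound p M * compound p N := by
  ext s t
  rw [Matrix.mul_apply]
  simp only [compound]
  rw [Matrix.submatrix_mul M N _ id _ Function.bijective_id, det_mul_eq_sum_subsets]
  rfl

theorem compound_diagonal (p : ℕ) (v : Fin d → K) :
    compound p (Matrix.diagonal v) = Matrix.diagonal (fun s => ∏ i ∈ s.1, v i) := by
  ext s t
  by_cases h : s = t
  · subst h
    rw [Matrix.diagonal_apply_eq]
    simp only [compound]
    rw [Matrix.submatrix_diagonal _ _ (fun a b hab =>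
      (s.1.orderIsoOfFin s.2).injective (Subtype.ext hab)), Matrix.det_diagonal]
    rw [← Finset.prod_coe_sort s.1 v]
    exact Fintype.prod_equiv (s.1.orderIsoOfFin s.2).toEquiv _ _ (fun i => rfl)
  · rw [Matrix.diagonal_apply_ne _ h]
    simp only [compound]
    have : ∃ a ∈ s.1, a ∉ t.1 := by
      by_contra! hc
      exact h (Subtype.ext (Finset.eq_of_subset_of_card_le hc (by rw [s.2, t.2])))
    obtain ⟨a, ha, hat⟩ := this
    refine Matrix.det_eq_zero_of_row_eq_zero ((s.1.orderIsoOfFin s.2).symm ⟨a, ha⟩) fun j => ?_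
    simp only [Matrix.submatrix_apply, OrderIso.apply_symm_apply]
    rw [Matrix.diagonal_apply_ne]
    rintro rfl
    exact hat (Subtype.property _)

theorem compound_one (p : ℕ) : compound p (1 : Matrix (Fin d) (Fin d) K) = 1 := by
  rw [← Matrix.diagonal_one, compound_diagonal]
  simp

theorem compound_conjTranspose (p : ℕ) (M : Matrix (Fin d) (Fin d) K) :
    compound p (M.conjTranspose) = (compound p M).conjTranspose := by
  ext s t
  simp only [compound, Matrix.conjTranspose_apply]
  rw [← Matrix.det_conjTranspose]
  rfl

end

/-! ### Rank one approximation and the three-block norm identity -/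

open scoped Matrix.Norms.L2Operator in
theorem matOpNorm_eq {K : Type*} [RCLike K] {m n : Type*} [Fintype m] [Fintype n] [DecidableEq n]
    (M : Matrix m n K) : matOpNorm M = ‖M‖ := rfl

section rankOne
variable {K : Type*} [RCLike K] {ι : Type*} [Fintype ι] [DecidableEq ι]

open scoped Matrix.Norms.L2Operator in
theorem norm_vecMulVec (u v : ι → K) :
    ‖Matrix.vecMulVec u v‖ = ‖WithLp.toLp 2 u‖ * ‖WithLp.toLp 2 (star v)‖ := by
  rw [← InnerProductSpace.norm_rankOne (𝕜 := K) (WithLp.toLp 2 u) (WithLp.toLp 2 (star v))]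
  rw [← Matrix.l2_opNorm_toEuclideanCLM]
  congr 1
  ext x i
  simp only [Matrix.ofLp_toEuclideanCLM, Matrix.mulVec, dotProduct, Matrix.vecMulVec_apply,
    InnerProductSpace.rankOne_apply, PiLp.smul_apply, PiLp.inner_apply, RCLike.inner_apply,
    Pi.star_apply, RCLike.star_def, RCLike.conj_conj, smul_eq_mul, Finset.sum_mul]
  exact Finset.sum_congr rfl fun j _ => by ring

open scoped Matrix.Norms.L2Operator in
theorem norm_vecMulVec_mul (u v : ι → K) (X Y : Matrix ι ι K) :
    ‖X * Matrix.vecMulVec u v * Y‖ * ‖Matrix.vecMulVec u v‖ =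
      ‖X * Matrix.vecMulVec u v‖ * ‖Matrix.vecMulVec u v * Y‖ := by
  simp only [Matrix.mul_vecMulVec, Matrix.vecMulVec_mul, norm_vecMulVec]
  ring

open scoped Matrix.Norms.L2Operator in
/-- If `M` is close to a rank one matrix, then `‖X M Y‖ ‖M‖` nearly equals `‖X M‖ ‖M Y‖`; for a rank
one matrix the two products are equal. -/
theorem three_block_norm (X M Y : Matrix ι ι K) (u v : ι → K) (r : ℝ) (hr1 : r ≤ 1)
    (h : ‖M - Matrix.vecMulVec u v‖ ≤ r * ‖M‖) :
    |‖X * M * Y‖ * ‖M‖ - ‖X * M‖ * ‖M * Y‖| ≤ 6 * r * (‖X‖ * ‖M‖ ^ 2 * ‖Y‖) := by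
  set T := Matrix.vecMulVec u v with hT
  have hab := norm_vecMulVec_mul u v X Y
  rw [← hT] at hab
  have e1 : |‖M‖ - ‖T‖| ≤ r * ‖M‖ := (abs_norm_sub_norm_le _ _).trans h
  have e2 : |‖X * M‖ - ‖X * T‖| ≤ ‖X‖ * (r * ‖M‖) := by
    refine (abs_norm_sub_norm_le _ _).trans ?_
    rw [← mul_sub]
    exact (norm_mul_le _ _).trans (by gcongr)
  have e3 : |‖M * Y‖ - ‖T * Y‖| ≤ (r * ‖M‖) * ‖Y‖ := by
    refine (abs_norm_sub_norm_le _ _).trans ?_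
    rw [← sub_mul]
    exact (norm_mul_le _ _).trans (by gcongr)
  have e4 : |‖X * M * Y‖ - ‖X * T * Y‖| ≤ ‖X‖ * (r * ‖M‖) * ‖Y‖ := by
    refine (abs_norm_sub_norm_le _ _).trans ?_
    rw [← sub_mul, ← mul_sub]
    refine (norm_mul_le _ _).trans ?_
    gcongr
    exact (norm_mul_le _ _).trans (by gcongr)
  have f1 : ‖M * Y‖ ≤ ‖M‖ * ‖Y‖ := norm_mul_le _ _
  have f2 : ‖X * T‖ ≤ ‖X‖ * ‖T‖ := norm_mul_le _ _
  have f3 : ‖X * T * Y‖ ≤ ‖X‖ * ‖T‖ * ‖Y‖ := (norm_mul_le _ _).trans (by gcongr)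
  have hT2 : ‖T‖ ≤ 2 * ‖M‖ := by
    have := abs_le.mp e1
    nlinarith [norm_nonneg M]
  have hrm : 0 ≤ r * ‖M‖ := (abs_nonneg _).trans e1
  have g : ‖X * M * Y‖ * ‖M‖ - ‖X * M‖ * ‖M * Y‖ =
      (‖X * M * Y‖ - ‖X * T * Y‖) * ‖M‖ + ‖X * T * Y‖ * (‖M‖ - ‖T‖)
      - (‖X * M‖ - ‖X * T‖) * ‖M * Y‖ - ‖X * T‖ * (‖M * Y‖ - ‖T * Y‖) := by
    linear_combination hab
  rw [g]
  have k1 : |(‖X * M * Y‖ - ‖X * T * Y‖) * ‖M‖| ≤ ‖X‖ * (r * ‖M‖) * ‖Y‖ * ‖M‖ := by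
    rw [abs_mul, abs_norm]; gcongr
  have k2 : |‖X * T * Y‖ * (‖M‖ - ‖T‖)| ≤ ‖X‖ * (2 * ‖M‖) * ‖Y‖ * (r * ‖M‖) := by
    rw [abs_mul, abs_norm]
    refine mul_le_mul (f3.trans ?_) e1 (abs_nonneg _) (by positivity)
    gcongr
  have k3 : |(‖X * M‖ - ‖X * T‖) * ‖M * Y‖| ≤ ‖X‖ * (r * ‖M‖) * (‖M‖ * ‖Y‖) := by
    rw [abs_mul, abs_norm]
    exact mul_le_mul e2 f1 (norm_nonneg _) (by positivity)
  have k4 : |‖X * T‖ * (‖M * Y‖ - ‖T * Y‖)| ≤ ‖X‖ * (2 * ‖M‖) * ((r * ‖M‖) * ‖Y‖) := by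
    rw [abs_mul, abs_norm]
    refine mul_le_mul (f2.trans ?_) e3 (abs_nonneg _) (by positivity)
    gcongr
  rw [abs_le] at *
  constructor <;> nlinarith

theorem abs_log_sub_log_le {a b t : ℝ} (hb : 0 < b) (ht : t ≤ 1 / 2) (h : |a - b| ≤ t * b) :
    |Real.log a - Real.log b| ≤ 2 * t := by
  have h1 := abs_le.mp h
  have ht0 : 0 ≤ t := by
    by_contra hc
    nlinarith [abs_nonneg (a - b)]
  have ha : 0 < a := by nlinarith
  have e1 : Real.log a - Real.log b = Real.log (a / b) := (Real.log_div ha.ne' hb.ne').symm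
  have e2 : Real.log b - Real.log a = Real.log (b / a) := (Real.log_div hb.ne' ha.ne').symm
  rw [abs_le]
  constructor
  · have := Real.log_le_sub_one_of_pos (div_pos hb ha)
    have h3 : b / a - 1 ≤ 2 * t := by
      rw [sub_le_iff_le_add, div_le_iff₀ ha]
      nlinarith
    linarith
  · have := Real.log_le_sub_one_of_pos (div_pos ha hb)
    have h3 : a / b - 1 ≤ 2 * t := by
      rw [sub_le_iff_le_add, div_le_iff₀ hb]
      nlinarith
    linarith

end rankOne

section entries
variable {K : Type*} [RCLike K] {ι : Type*} [Fintype ι] [DecidableEq ι]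

theorem norm_entry_le_matOpNorm (M : Matrix ι ι K) (i j : ι) : ‖M i j‖ ≤ matOpNorm M := by
  have h := ContinuousLinearMap.le_opNorm
    (LinearMap.toContinuousLinearMap (Matrix.toEuclideanLin M)) (EuclideanSpace.single j (1 : K))
  have h2 : ‖M i j‖ ≤ ‖Matrix.toEuclideanLin M (EuclideanSpace.single j (1 : K))‖ := by
    refine le_trans (le_of_eq ?_) (PiLp.norm_apply_le _ i)
    simp [Matrix.toLpLin_apply]
  simp only [PiLp.norm_single, norm_one, mul_one] at h
  exact h2.trans h

theorem matOpNorm_le_sum (M : Matrix ι ι K) : matOpNorm M ≤ ∑ i, ∑ j, ‖M i j‖ := by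
  refine ContinuousLinearMap.opNorm_le_bound _ (by positivity) fun x => ?_
  have h1 : ∀ y : EuclideanSpace K ι, ‖y‖ ≤ ∑ i, ‖y i‖ := by
    intro y
    rw [EuclideanSpace.norm_eq]
    refine Real.sqrt_le_left (by positivity) |>.mpr ?_
    exact Finset.sum_sq_le_sq_sum_of_nonneg (fun i _ => norm_nonneg _)
  refine (h1 _).trans ?_
  rw [Finset.sum_mul]
  refine Finset.sum_le_sum fun i _ => ?_
  rw [Finset.sum_mul]
  simp only [LinearMap.coe_toContinuousLinearMap', Matrix.toLpLin_apply, Matrix.mulVec, dotProduct]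
  refine (norm_sum_le _ _).trans (Finset.sum_le_sum fun j _ => ?_)
  rw [norm_mul]
  gcongr
  exact PiLp.norm_apply_le _ j

theorem matOpNorm_nonneg (M : Matrix ι ι K) : 0 ≤ matOpNorm M := norm_nonneg _

open scoped Matrix.Norms.L2Operator in
theorem matOpNorm_mul_le (M N : Matrix ι ι K) : matOpNorm (M * N) ≤ matOpNorm M * matOpNorm N :=
  norm_mul_le M N

end entries

section compounds
variable {K : Type*} [RCLike K] {d : ℕ}

theorem matOpNorm_compound_le (p : ℕ) (M : Matrix (Fin d) (Fin d) K) :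
    matOpNorm (compound p M) ≤
      (Fintype.card {s : Finset (Fin d) // s.card = p} : ℝ) ^ 2 * (p.factorial * matOpNorm M ^ p) := by
  refine (matOpNorm_le_sum _).trans ?_
  have : ∀ s t, ‖compound p M s t‖ ≤ p.factorial * matOpNorm M ^ p := by
    intro s t
    have := Matrix.det_le (abv := IsAbsoluteValue.toAbsoluteValue (norm : K → ℝ))
      (A := (M.submatrix (fun i => (s.1.orderIsoOfFin s.2 i : Fin d))
      (fun i => (t.1.orderIsoOfFin t.2 i : Fin d)))) (x := matOpNorm M)
      (fun i j => norm_entry_le_matOpNorm M _ _)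
    simpa [compound] using this
  calc _ ≤ ∑ s : {s : Finset (Fin d) // s.card = p}, ∑ t : {s : Finset (Fin d) // s.card = p}, (p.factorial * matOpNorm M ^ p) :=
        Finset.sum_le_sum fun s _ => Finset.sum_le_sum fun t _ => this s t
    _ = _ := by simp [pow_two, mul_assoc]


open scoped Matrix.Norms.L2Operator in
theorem norm_mul_diagonal_sq {ι : Type*} [Fintype ι] [DecidableEq ι] (P : Matrix ι ι K)
    (D χ : ι → K) (h : P.conjTranspose * P = Matrix.diagonal D) :
    ‖P * Matrix.diagonal χ‖ * ‖P * Matrix.diagonal χ‖ = ‖fun s => star (χ s) * (D s * χ s)‖ := by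
  have h2 : (P * Matrix.diagonal χ).conjTranspose * (P * Matrix.diagonal χ) =
      Matrix.diagonal (fun s => star (χ s) * (D s * χ s)) := by
    calc _ = (Matrix.diagonal χ).conjTranspose * ((P.conjTranspose * P) * Matrix.diagonal χ) := by
          rw [Matrix.conjTranspose_mul]; simp only [Matrix.mul_assoc]
      _ = _ := by
          rw [h, Matrix.diagonal_conjTranspose, Matrix.diagonal_mul_diagonal,
            Matrix.diagonal_mul_diagonal]
          rfl
  rw [← Matrix.l2_opNorm_conjTranspose_mul_self, h2, Matrix.l2_opNorm_diagonal]

open scoped Matrix.Norms.L2Operator ComplexOrder in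
/-- With `σ` the eigenvalues of `Bᴴ * B` and `V` a matrix of eigenvectors, all the compounds of
`B` are simultaneously diagonalised by the compounds of `V`. -/
theorem exists_compound_diagonalization (B : Matrix (Fin d) (Fin d) K) :
    ∃ (V : Matrix (Fin d) (Fin d) K) (σ : Fin d → ℝ), (∀ i, 0 ≤ σ i) ∧
      (∀ q, (compound q V).conjTranspose * compound q V = 1) ∧
      (∀ q, compound q V * (compound q V).conjTranspose = 1) ∧
      (∀ q, (compound q B * compound q V).conjTranspose * (compound q B * compound q V) =
        Matrix.diagonal (fun s => ((∏ i ∈ s.1, σ i : ℝ) : K))) := by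
  have hps := Matrix.posSemidef_conjTranspose_mul_self B
  have hH := hps.isHermitian
  refine ⟨hH.eigenvectorUnitary, hH.eigenvalues, hps.eigenvalues_nonneg, ?_, ?_, ?_⟩
  · intro q
    rw [← compound_conjTranspose, ← compound_mul]
    have : (hH.eigenvectorUnitary : Matrix (Fin d) (Fin d) K).conjTranspose *
      hH.eigenvectorUnitary = 1 := Unitary.coe_star_mul_self _
    rw [this, compound_one]
  · intro q
    rw [← compound_conjTranspose, ← compound_mul]
    have : (hH.eigenvectorUnitary : Matrix (Fin d) (Fin d) K) *
      (hH.eigenvectorUnitary : Matrix (Fin d) (Fin d) K).conjTranspose = 1 :=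
      Unitary.coe_mul_star_self _
    rw [this, compound_one]
  · intro q
    rw [← compound_mul, ← compound_conjTranspose, ← compound_mul]
    have h := hH.conjStarAlgAut_star_eigenvectorUnitary
    rw [Unitary.conjStarAlgAut_star_apply] at h
    have h2 : (B * (hH.eigenvectorUnitary : Matrix (Fin d) (Fin d) K)).conjTranspose *
        (B * (hH.eigenvectorUnitary : Matrix (Fin d) (Fin d) K)) = Matrix.diagonal (RCLike.ofReal ∘ hH.eigenvalues) := by
      rw [← h, Matrix.conjTranspose_mul, Matrix.star_eq_conjTranspose]
      simp only [Matrix.mul_assoc]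
    rw [h2, compound_diagonal]
    congr 1
    ext s
    simp

open scoped Matrix.Norms.L2Operator in
/-- `Λ^p B` is a rank one matrix up to an error controlled by the ratio of its two
largest singular values. -/
theorem exists_rankOne_approx (B : Matrix (Fin d) (Fin d) K) (p : ℕ) (hp1 : 1 ≤ p) (hpd : p < d) :
    ∃ u v : {s : Finset (Fin d) // s.card = p} → K,
      ‖compound p B - Matrix.vecMulVec u v‖ * ‖compound p B‖ ≤
        ‖compound (p - 1) B‖ * ‖compound (p + 1) B‖ := by
  obtain ⟨V, σ, hσ, hV1, hV2, hdiag⟩ := exists_compound_diagonalization B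
  have hnorm : ∀ q, ‖compound q B * compound q V‖ = ‖compound q B‖ := by
    intro q
    have hc := hV1 q
    exact CStarRing.norm_mul_coe_unitary (compound q B) ⟨compound q V,
      Unitary.mem_iff.mpr ⟨hV1 q, hV2 q⟩⟩
  have hsq : ∀ q, ‖compound q B‖ * ‖compound q B‖ =
      ‖(fun s : {s : Finset (Fin d) // s.card = q} => ((∏ i ∈ s.1, σ i : ℝ) : K))‖ := by
    intro q
    rw [← hnorm q, ← Matrix.l2_opNorm_conjTranspose_mul_self, hdiag q, Matrix.l2_opNorm_diagonal]
  have hprod : ∀ s : Finset (Fin d), 0 ≤ ∏ i ∈ s, σ i := fun s => Finset.prod_nonneg fun i _ => hσ i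
  have hle : ∀ s : Finset (Fin d),
      ∏ i ∈ s, σ i ≤ ‖compound s.card B‖ * ‖compound s.card B‖ := by
    intro s
    rw [hsq]
    refine le_trans (le_of_eq ?_) (norm_le_pi_norm _ (⟨s, rfl⟩ : {t : Finset (Fin d) // t.card = s.card}))
    simp only [RCLike.norm_ofReal]
    rw [abs_of_nonneg (hprod s)]
  have : Nonempty {s : Finset (Fin d) // s.card = p} := by
    obtain ⟨t, -, ht⟩ := Finset.exists_subset_card_eq (s := (Finset.univ : Finset (Fin d))) (n := p)
      (by simpa using hpd.le)
    exact ⟨⟨t, ht⟩⟩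
  obtain ⟨I, hI⟩ := Finite.exists_max
    (fun s : {s : Finset (Fin d) // s.card = p} => ∏ i ∈ s.1, σ i)
  have hIeq : ‖compound p B‖ * ‖compound p B‖ ≤ ∏ i ∈ I.1, σ i := by
    rw [hsq]
    refine (pi_norm_le_iff_of_nonneg (hprod _)).mpr fun s => ?_
    rw [RCLike.norm_ofReal, abs_of_nonneg (hprod _)]
    exact hI s
  have hdp := hdiag p
  have hW1 := hV1 p
  have hW2 := hV2 p
  clear hdiag hV1 hV2 hnorm hsq
  generalize compound p B = N at *
  generalize compound p V = W at *
  refine ⟨(N * W).mulVec (Pi.single I 1), Matrix.vecMul (Pi.single I 1) W.conjTranspose, ?_⟩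
  -- projecting out the top singular direction `I` leaves the remainder `N W diag(χ) Wᴴ`
  set χ : {s : Finset (Fin d) // s.card = p} → K := fun s => if s = I then 0 else 1 with hχ
  have hR : N - Matrix.vecMulVec ((N * W).mulVec (Pi.single I 1))
      (Matrix.vecMul (Pi.single I 1) W.conjTranspose) =
      N * W * Matrix.diagonal χ * W.conjTranspose := by
    have h1 : Matrix.diagonal χ = 1 - Matrix.vecMulVec (Pi.single I 1) (Pi.single I 1) := by
      ext s t
      by_cases hst : s = t
      · subst hst
        by_cases hs : s = I
        · subst hs; simp [hχ, Matrix.vecMulVec_apply]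
        · simp [hχ, Matrix.vecMulVec_apply, hs]
      · rw [Matrix.diagonal_apply_ne _ hst]
        by_cases hs : s = I
        · subst hs; simp [Matrix.vecMulVec_apply, hst, Ne.symm hst]
        · simp [Matrix.vecMulVec_apply, hs, hst]
    rw [h1, ← Matrix.mul_vecMulVec, Matrix.mul_assoc _ _ W.conjTranspose, Matrix.sub_mul,
      Matrix.mul_sub, Matrix.one_mul, Matrix.mul_assoc N W W.conjTranspose, hW2, Matrix.mul_one,
      Matrix.vecMulVec_mul, Matrix.mul_vecMulVec]
  have hRn : ‖N * W * Matrix.diagonal χ * W.conjTranspose‖ = ‖N * W * Matrix.diagonal χ‖ :=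
    CStarRing.norm_mul_coe_unitary _ ⟨W.conjTranspose, Unitary.mem_iff.mpr
      ⟨by simpa [Matrix.star_eq_conjTranspose] using hW2,
       by simpa [Matrix.star_eq_conjTranspose] using hW1⟩⟩
  have hRsq : ‖N * W * Matrix.diagonal χ‖ * ‖N * W * Matrix.diagonal χ‖ * (‖N‖ * ‖N‖) ≤
      (‖compound (p - 1) B‖ * ‖compound (p - 1) B‖) *
        (‖compound (p + 1) B‖ * ‖compound (p + 1) B‖) := by
    have hrhs : 0 ≤ (‖compound (p - 1) B‖ * ‖compound (p - 1) B‖) *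
        (‖compound (p + 1) B‖ * ‖compound (p + 1) B‖) :=
      mul_nonneg (mul_self_nonneg _) (mul_self_nonneg _)
    rw [norm_mul_diagonal_sq (N * W) _ χ hdp]
    by_cases hN0 : ‖N‖ * ‖N‖ = 0
    · rw [hN0, mul_zero]; exact hrhs
    have hN1 : 0 < ‖N‖ * ‖N‖ := lt_of_le_of_ne (mul_self_nonneg _) (Ne.symm hN0)
    rw [← le_div_iff₀ hN1]
    refine (pi_norm_le_iff_of_nonneg (div_nonneg hrhs hN1.le)).mpr fun s => ?_
    by_cases hs : s = I
    · simp only [hχ, hs, if_true, mul_zero, norm_zero]; exact div_nonneg hrhs hN1.le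
    rw [le_div_iff₀ hN1]
    have hns : ‖star (χ s) * (((∏ i ∈ s.1, σ i : ℝ) : K) * χ s)‖ = ∏ i ∈ s.1, σ i := by
      simp only [hχ, hs, if_false, star_one, one_mul, mul_one, RCLike.norm_ofReal]
      exact abs_of_nonneg (hprod _)
    rw [hns]
    -- Exchanging an index `i ∈ I \ s` turns two `p`-subsets into a `(p-1)`- and a `(p+1)`-subset.
    have : ∃ i ∈ I.1, i ∉ s.1 := by
      by_contra! hc
      exact hs (Subtype.ext (Finset.eq_of_subset_of_card_le hc (by rw [s.2, I.2])).symm)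
    obtain ⟨i, hiI, his⟩ := this
    have c1 : (I.1.erase i).card = p - 1 := by rw [Finset.card_erase_of_mem hiI, I.2]
    have c2 : (insert i s.1).card = p + 1 := by rw [Finset.card_insert_of_notMem his, s.2]
    have g1 := hle (I.1.erase i)
    have g2 := hle (insert i s.1)
    rw [c1] at g1
    rw [c2] at g2
    calc (∏ i ∈ s.1, σ i) * (‖N‖ * ‖N‖) ≤ (∏ i ∈ s.1, σ i) * ∏ i ∈ I.1, σ i :=
          mul_le_mul_of_nonneg_left hIeq (hprod _)
      _ = (∏ i ∈ I.1.erase i, σ i) * ∏ i ∈ insert i s.1, σ i := by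
          rw [← Finset.mul_prod_erase I.1 σ hiI, Finset.prod_insert his]; ring
      _ ≤ _ := mul_le_mul g1 g2 (hprod _) (mul_self_nonneg _)
  rw [hR, hRn]
  refine le_of_sq_le_sq ?_ (mul_nonneg (norm_nonneg _) (norm_nonneg _))
  calc _ = ‖N * W * Matrix.diagonal χ‖ * ‖N * W * Matrix.diagonal χ‖ * (‖N‖ * ‖N‖) := by ring
    _ ≤ _ := hRsq
    _ = _ := by ring

/-- Three-block form of the avalanche principle for exterior powers. -/
theorem three_block_log (X B Y : Matrix (Fin d) (Fin d) K) (p : ℕ) (hp1 : 1 ≤ p) (hpd : p < d)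
    (hB : 0 < matOpNorm (compound p B)) (hX : 0 < matOpNorm (compound p (X * B)))
    (hY : 0 < matOpNorm (compound p (B * Y))) (hXBY : 0 < matOpNorm (compound p (X * B * Y)))
    (r g : ℝ) (hr1 : r ≤ 1) (hg : 0 < g)
    (hr : matOpNorm (compound (p - 1) B) * matOpNorm (compound (p + 1) B) ≤
      r * matOpNorm (compound p B) ^ 2)
    (hgr : g * (matOpNorm (compound p X) * matOpNorm (compound p B) ^ 2 * matOpNorm (compound p Y))
      ≤ matOpNorm (compound p (X * B)) * matOpNorm (compound p (B * Y)))
    (hrg : 6 * r / g ≤ 1 / 2) :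
    |Real.log (matOpNorm (compound p (X * B * Y))) + Real.log (matOpNorm (compound p B))
      - Real.log (matOpNorm (compound p (X * B))) - Real.log (matOpNorm (compound p (B * Y)))| ≤
      12 * r / g := by
  obtain ⟨u, v, huv⟩ := exists_rankOne_approx B p hp1 hpd
  simp only [← matOpNorm_eq] at huv
  have h1 : matOpNorm (compound p B - Matrix.vecMulVec u v) ≤ r * matOpNorm (compound p B) := by
    have := huv.trans hr
    rw [pow_two, ← mul_assoc] at this
    exact le_of_mul_le_mul_right this hB
  have h2 := three_block_norm (compound p X) (compound p B) (compound p Y) u v r hr1 h1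
  simp only [← matOpNorm_eq, ← compound_mul] at h2
  have hb := mul_pos hX hY
  have hr0 : 0 ≤ r := by
    by_contra hc
    have : r * matOpNorm (compound p B) < 0 := mul_neg_of_neg_of_pos (by linarith) hB
    have h0 : 0 ≤ matOpNorm (compound p B - Matrix.vecMulVec u v) := matOpNorm_nonneg _
    linarith
  have h3 := abs_log_sub_log_le (t := 6 * r / g) hb hrg (h2.trans (by
    rw [div_mul_eq_mul_div, le_div_iff₀ hg]
    calc _ = 6 * r * (g * (matOpNorm (compound p X) * matOpNorm (compound p B) ^ 2 *
          matOpNorm (compound p Y))) := by ring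
      _ ≤ _ := by gcongr))
  rw [Real.log_mul hXBY.ne' hB.ne', Real.log_mul hX.ne' hY.ne'] at h3
  calc _ = _ := by congr 1; ring
    _ ≤ _ := h3
    _ = _ := by ring

end compounds

/-! ### Cocycle products: growth and subadditivity -/

section cocycleBasics
variable {K : Type*} [RCLike K] {d : ℕ} {ε : Type*}

theorem cocycle_zero (A : ℝ → ε → Matrix (Fin d) (Fin d) K) (ω x : ℝ) (e : ε) :
    cocycle A ω 0 x e = 1 := by
  simp [cocycle]

theorem cocycle_succ (A : ℝ → ε → Matrix (Fin d) (Fin d) K) (ω : ℝ) (n : ℕ) (x : ℝ) (e : ε) :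
    cocycle A ω (n + 1) x e = A (x + (n + 1 : ℕ) * ω) e * cocycle A ω n x e := by
  simp [cocycle, List.range_succ]

theorem cocycle_add (A : ℝ → ε → Matrix (Fin d) (Fin d) K) (ω : ℝ) (m n : ℕ) (x : ℝ) (e : ε) :
    cocycle A ω (m + n) x e = cocycle A ω m (x + n * ω) e * cocycle A ω n x e := by
  induction m with
  | zero => simp [cocycle_zero]
  | succ m ih =>
    rw [show m + 1 + n = (m + n) + 1 by ring, cocycle_succ, ih, cocycle_succ, Matrix.mul_assoc]
    congr 2
    push_cast
    ring

/-- The standing hypotheses on the cocycle, except for the gap condition. The arithmetic condition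
on `ω` enters in the form of the lower bound `‖q ω‖ ≥ c / q²`. -/
structure CocycleHyp [MetricSpace ε] [CompactSpace ε]
    (A : ℝ → ε → Matrix (Fin d) (Fin d) K) (ω : ℝ) : Prop where
  cont : Continuous fun q : ℝ × ε => A q.1 q.2
  per : ∀ x e, A (x + 1) e = A x e
  inv : ∀ x e, IsUnit (A x e)
  anal : AnalyticOnStrip A
  binv : ∃ M : ℝ, ∀ (x : ℝ) (e : ε), matOpNorm (A x e)⁻¹ ≤ M
  dio : ∃ c > (0 : ℝ), ∀ q : ℕ, 1 ≤ q → ∀ k : ℤ, c / (q : ℝ) ^ 2 ≤ |(q : ℝ) * ω - k|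

/-- `log ‖Λ^p A^{(n)}_x(e)‖`. -/
def phi (A : ℝ → ε → Matrix (Fin d) (Fin d) K) (ω : ℝ) (p n : ℕ) (x : ℝ) (e : ε) : ℝ :=
  Real.log (matOpNorm (compound p (cocycle A ω n x e)))

/-- The integral of `phi` over the torus. -/
def phiInt (A : ℝ → ε → Matrix (Fin d) (Fin d) K) (ω : ℝ) (p n : ℕ) (e : ε) : ℝ :=
  ∫ x in (0 : ℝ)..1, phi A ω p n x e

open scoped Matrix.Norms.L2Operator in
theorem matOpNorm_one {ι : Type*} [Fintype ι] [DecidableEq ι] [Nonempty ι] :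
    matOpNorm (1 : Matrix ι ι K) = 1 := by
  have h := Matrix.l2_opNorm_diagonal (𝕜 := K) (fun _ : ι => (1 : K))
  rw [Matrix.diagonal_one] at h
  rw [matOpNorm_eq, h]
  simp

theorem continuous_matOpNorm {ι : Type*} [Fintype ι] [DecidableEq ι] :
    Continuous (matOpNorm : Matrix ι ι K → ℝ) := by
  unfold matOpNorm
  refine continuous_norm.comp ?_
  have h : Continuous ((LinearMap.toContinuousLinearMap.toLinearMap ∘ₗ
    (Matrix.toEuclideanLin (𝕜 := K) (m := ι) (n := ι)).toLinearMap)) :=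
    LinearMap.continuous_of_finiteDimensional _
  exact h

theorem continuous_compound (p : ℕ) :
    Continuous (compound p : Matrix (Fin d) (Fin d) K → _) := by
  refine continuous_matrix fun s t => ?_
  unfold compound
  exact Continuous.matrix_det (continuous_id.matrix_submatrix _ _)

theorem nonempty_subsets {p : ℕ} (hp : p ≤ d) : Nonempty {s : Finset (Fin d) // s.card = p} := by
  obtain ⟨t, -, ht⟩ := Finset.exists_subset_card_eq (s := (Finset.univ : Finset (Fin d))) (n := p)
    (by simpa using hp)
  exact ⟨⟨t, ht⟩⟩

theorem one_le_matOpNorm_compound_mul {p : ℕ} (hp : p ≤ d) {M : Matrix (Fin d) (Fin d) K}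
    (hM : IsUnit M) : 1 ≤ matOpNorm (compound p M) * matOpNorm (compound p M⁻¹) := by
  have := nonempty_subsets hp
  have h := matOpNorm_mul_le (compound p M) (compound p M⁻¹)
  rwa [← compound_mul, Matrix.mul_nonsing_inv _ ((Matrix.isUnit_iff_isUnit_det _).mp hM),
    compound_one, matOpNorm_one] at h

theorem matOpNorm_compound_pos {p : ℕ} (hp : p ≤ d) {M : Matrix (Fin d) (Fin d) K}
    (hM : IsUnit M) : 0 < matOpNorm (compound p M) := by
  have := one_le_matOpNorm_compound_mul hp hM
  rcases (matOpNorm_nonneg (compound p M)).lt_or_eq with h | h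
  · exact h
  · rw [← h, zero_mul] at this; linarith

variable {A : ℝ → ε → Matrix (Fin d) (Fin d) K} {ω : ℝ}

theorem phi_zero {p : ℕ} (hp : p ≤ d) (x : ℝ) (e : ε) : phi A ω p 0 x e = 0 := by
  have := nonempty_subsets hp
  unfold phi
  rw [cocycle_zero, compound_one, matOpNorm_one, Real.log_one]

theorem sumLyapFin_eq (p n : ℕ) (e : ε) : sumLyapFin A ω p n e = phiInt A ω p n e / n := by
  unfold sumLyapFin phiInt phi
  ring

/-- `Λ^0` is trivial. -/
theorem phi_zero_left (n : ℕ) (x : ℝ) (e : ε) : phi A ω 0 n x e = 0 := by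
  have : compound 0 (cocycle A ω n x e) = 1 := by
    ext s t
    have : s = t := Subtype.ext (by
      rw [Finset.card_eq_zero.mp s.2, Finset.card_eq_zero.mp t.2])
    subst this
    simp [compound]
  have hn := nonempty_subsets (d := d) (Nat.zero_le d)
  unfold phi
  rw [this, matOpNorm_one, Real.log_one]

theorem abs_phiInt_le {p : ℕ} (hp : p ≤ d) {C : ℝ}
    (hC : ∀ p ≤ d, ∀ n x e, |phi A ω p n x e| ≤ C * n) (n : ℕ) (e : ε) :
    |phiInt A ω p n e| ≤ C * n := by
  have := intervalIntegral.norm_integral_le_of_norm_le_const (a := 0) (b := 1)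
    (f := fun x => phi A ω p n x e) (C := C * n) (fun x _ => by simpa using hC p hp n x e)
  simpa [phiInt] using this

variable [MetricSpace ε] [CompactSpace ε]

theorem CocycleHyp.isUnit_cocycle (H : CocycleHyp A ω) (n : ℕ) (x : ℝ) (e : ε) :
    IsUnit (cocycle A ω n x e) := by
  induction n with
  | zero => rw [cocycle_zero]; exact isUnit_one
  | succ n ih => rw [cocycle_succ]; exact (H.inv _ _).mul ih

theorem CocycleHyp.norm_pos (H : CocycleHyp A ω) {p : ℕ} (hp : p ≤ d) (n : ℕ) (x : ℝ) (e : ε) :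
    0 < matOpNorm (compound p (cocycle A ω n x e)) :=
  matOpNorm_compound_pos hp (H.isUnit_cocycle n x e)

theorem CocycleHyp.cocycle_periodic (H : CocycleHyp A ω) (n : ℕ) (x : ℝ) (e : ε) :
    cocycle A ω n (x + 1) e = cocycle A ω n x e := by
  induction n with
  | zero => simp [cocycle_zero]
  | succ n ih => rw [cocycle_succ, cocycle_succ, ih, add_right_comm, H.per]

theorem CocycleHyp.phi_periodic (H : CocycleHyp A ω) (p n : ℕ) (x : ℝ) (e : ε) :
    phi A ω p n (x + 1) e = phi A ω p n x e := by
  unfold phi; rw [H.cocycle_periodic]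

theorem CocycleHyp.continuous_cocycle (H : CocycleHyp A ω) (n : ℕ) :
    Continuous fun q : ℝ × ε => cocycle A ω n q.1 q.2 := by
  induction n with
  | zero => simp only [cocycle_zero]; exact continuous_const
  | succ n ih =>
    simp only [cocycle_succ]
    refine Continuous.matrix_mul ?_ ih
    exact H.cont.comp ((continuous_fst.add continuous_const).prodMk continuous_snd)

theorem CocycleHyp.continuous_phi (H : CocycleHyp A ω) {p : ℕ} (hp : p ≤ d) (n : ℕ) :
    Continuous fun q : ℝ × ε => phi A ω p n q.1 q.2 := by
  unfold phi
  refine Continuous.log ?_ fun q => (H.norm_pos hp n _ _).ne'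
  exact continuous_matOpNorm.comp ((continuous_compound p).comp (H.continuous_cocycle n))

theorem CocycleHyp.continuous_phi_left (H : CocycleHyp A ω) {p : ℕ} (hp : p ≤ d) (n : ℕ) (e : ε) :
    Continuous fun x => phi A ω p n x e :=
  Continuous.comp (g := fun q : ℝ × ε => phi A ω p n q.1 q.2) (f := fun x : ℝ => (x, e))
    (H.continuous_phi hp n) (by fun_prop)

theorem norm_rcToComplex (z : K) : ‖rcToComplex z‖ = ‖z‖ := by
  rw [← sq_eq_sq₀ (norm_nonneg _) (norm_nonneg _), ← Complex.normSq_eq_norm_sq,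
    ← RCLike.normSq_eq_def']
  simp [rcToComplex, Complex.normSq_apply, RCLike.normSq_apply]

theorem CocycleHyp.exists_bound (H : CocycleHyp A ω) :
    ∃ B : ℝ, 1 ≤ B ∧ ∀ p ≤ d, ∀ x e, matOpNorm (compound p (A x e)) ≤ B ∧
      matOpNorm (compound p (A x e)⁻¹) ≤ B := by
  obtain ⟨M₁, h₁⟩ : ∃ M : ℝ, ∀ x e, matOpNorm (A x e) ≤ M := by
    obtain ⟨ρ, hρ, F, -, -, hF, M, hM⟩ := H.anal
    refine ⟨∑ i : Fin d, ∑ j : Fin d, M, fun x e => (matOpNorm_le_sum _).trans ?_⟩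
    refine Finset.sum_le_sum fun i _ => Finset.sum_le_sum fun j _ => ?_
    have h1 := norm_entry_le_matOpNorm (F x e) i j
    have h2 := hM x (by simpa using hρ) e
    rw [hF] at h1 h2
    rw [Matrix.map_apply, norm_rcToComplex] at h1
    exact h1.trans h2
  obtain ⟨M₂, h₂⟩ := H.binv
  set M := max 0 (max M₁ M₂)
  set f : ℕ → ℝ := fun p =>
    (Fintype.card {s : Finset (Fin d) // s.card = p} : ℝ) ^ 2 * (p.factorial * M ^ p)
  have hM0 : 0 ≤ M := le_max_left _ _
  have hf : ∀ p, 0 ≤ f p := fun p => by positivity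
  refine ⟨1 + ∑ p ∈ Finset.range (d + 1), f p, ?_, ?_⟩
  · linarith [Finset.sum_nonneg fun p (_ : p ∈ Finset.range (d + 1)) => hf p]
  intro p hp x e
  have hs : f p ≤ ∑ p ∈ Finset.range (d + 1), f p :=
    Finset.single_le_sum (f := f) (fun q _ => hf q) (Finset.mem_range.mpr (by omega))
  have key : ∀ N : Matrix (Fin d) (Fin d) K, matOpNorm N ≤ M → matOpNorm (compound p N) ≤ f p := by
    intro N hN
    refine (matOpNorm_compound_le p N).trans ?_
    have := matOpNorm_nonneg N
    simp only [f]
    gcongr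
  constructor
  · linarith [key _ (((h₁ x e).trans (le_max_left M₁ M₂)).trans (le_max_right _ _))]
  · linarith [key _ (((h₂ x e).trans (le_max_right M₁ M₂)).trans (le_max_right _ _))]

/-- Composing with one factor, on either side, changes `phi` by a bounded amount. -/
theorem CocycleHyp.exists_step (H : CocycleHyp A ω) :
    ∃ C : ℝ, 0 ≤ C ∧ ∀ p ≤ d, ∀ n x e, |phi A ω p (n + 1) x e - phi A ω p n x e| ≤ C ∧
      |phi A ω p (n + 1) x e - phi A ω p n (x + ω) e| ≤ C := by
  obtain ⟨B, hB1, hB⟩ := H.exists_bound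
  have hB0 : 0 < B := by linarith
  refine ⟨Real.log B, Real.log_nonneg hB1, fun p hp n x e => ?_⟩
  have key : ∀ N N' : Matrix (Fin d) (Fin d) K, 0 < matOpNorm (compound p N) →
      0 < matOpNorm (compound p N') →
      matOpNorm (compound p N') ≤ B * matOpNorm (compound p N) →
      Real.log (matOpNorm (compound p N')) - Real.log (matOpNorm (compound p N)) ≤ Real.log B := by
    intro N N' h1 h2 h
    have := Real.log_le_log h2 h
    rw [Real.log_mul hB0.ne' h1.ne'] at this
    linarith
  have p1 := H.norm_pos hp (n + 1) x e
  have p2 := H.norm_pos hp n x e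
  have p3 := H.norm_pos hp n (x + ω) e
  have hdet : ∀ y, IsUnit (A y e).det := fun y => (Matrix.isUnit_iff_isUnit_det _).mp (H.inv y e)
  have e1 := cocycle_succ A ω n x e
  have e2 : cocycle A ω (n + 1) x e = cocycle A ω n (x + ω) e * A (x + ω) e := by
    rw [cocycle_add, cocycle_succ A ω 0, cocycle_zero, Matrix.mul_one]
    simp
  have e3 : cocycle A ω n x e = (A (x + (n + 1 : ℕ) * ω) e)⁻¹ * cocycle A ω (n + 1) x e := by
    rw [e1, Matrix.nonsing_inv_mul_cancel_left _ _ (hdet _)]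
  have e4 : cocycle A ω n (x + ω) e = cocycle A ω (n + 1) x e * (A (x + ω) e)⁻¹ := by
    rw [e2, Matrix.mul_nonsing_inv_cancel_right _ _ (hdet _)]
  unfold phi
  refine ⟨abs_le.mpr ⟨?_, ?_⟩, abs_le.mpr ⟨?_, ?_⟩⟩
  · have := key _ _ p1 p2 (by
      rw [e3, compound_mul]
      refine (matOpNorm_mul_le _ _).trans ?_
      exact mul_le_mul_of_nonneg_right (hB p hp _ e).2 (matOpNorm_nonneg _))
    linarith
  · exact key _ _ p2 p1 (by
      rw [e1, compound_mul]
      refine (matOpNorm_mul_le _ _).trans ?_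
      exact mul_le_mul_of_nonneg_right (hB p hp _ e).1 (matOpNorm_nonneg _))
  · have := key _ _ p1 p3 (by
      rw [e4, compound_mul, mul_comm B]
      refine (matOpNorm_mul_le _ _).trans ?_
      exact mul_le_mul_of_nonneg_left (hB p hp _ e).2 (matOpNorm_nonneg _))
    linarith
  · exact key _ _ p3 p1 (by
      rw [e2, compound_mul, mul_comm B]
      refine (matOpNorm_mul_le _ _).trans ?_
      exact mul_le_mul_of_nonneg_left (hB p hp _ e).1 (matOpNorm_nonneg _))

/-- Linear growth of `phi`, and its almost invariance: moving the phase by `k` steps of the rotation,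
or adding `n` factors, changes `phi` by `O(k)`, respectively `O(n)`. -/
theorem CocycleHyp.exists_growth (H : CocycleHyp A ω) :
    ∃ C : ℝ, 1 ≤ C ∧ (∀ p ≤ d, ∀ n x e, |phi A ω p n x e| ≤ C * n) ∧
      (∀ p ≤ d, ∀ n k : ℕ, ∀ x e, |phi A ω p n (x + k * ω) e - phi A ω p n x e| ≤ C * k) ∧
      (∀ p ≤ d, ∀ m n : ℕ, ∀ x e, |phi A ω p (m + n) x e - phi A ω p m x e| ≤ C * n) := by
  obtain ⟨C, hC0, hC⟩ := H.exists_step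
  have hadd : ∀ p ≤ d, ∀ m n : ℕ, ∀ x e, |phi A ω p (m + n) x e - phi A ω p m x e| ≤ C * n := by
    intro p hp m n x e
    induction n with
    | zero => simp
    | succ n ih =>
      have := (hC p hp (m + n) x e).1
      have h2 := abs_sub_le (phi A ω p (m + (n + 1)) x e) (phi A ω p (m + n) x e) (phi A ω p m x e)
      rw [← add_assoc] at h2 ⊢
      push_cast
      linarith
  refine ⟨2 * C + 1, by linarith, ?_, ?_, ?_⟩
  · intro p hp n x e
    have := hadd p hp 0 n x e
    rw [phi_zero hp, sub_zero, zero_add] at this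
    have h0 : (0 : ℝ) ≤ n := Nat.cast_nonneg n
    nlinarith
  · intro p hp n k x e
    induction k with
    | zero => simp
    | succ k ih =>
      have h1 := (hC p hp n (x + k * ω) e)
      have h2 : x + ((k + 1 : ℕ) : ℝ) * ω = x + k * ω + ω := by push_cast; ring
      rw [h2]
      have h3 := abs_sub_le (phi A ω p n (x + k * ω + ω) e) (phi A ω p n (x + k * ω) e)
        (phi A ω p n x e)
      have h4 := abs_sub_le (phi A ω p n (x + k * ω + ω) e) (phi A ω p (n + 1) (x + k * ω) e)
        (phi A ω p n (x + k * ω) e)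
      have h5 := h1.2
      rw [abs_sub_comm] at h5
      push_cast
      linarith [h1.1]
  · intro p hp m n x e
    have := hadd p hp m n x e
    have h0 : (0 : ℝ) ≤ n := Nat.cast_nonneg n
    nlinarith

theorem CocycleHyp.phi_add_le (H : CocycleHyp A ω) {p : ℕ} (hp : p ≤ d) (m n : ℕ) (x : ℝ) (e : ε) :
    phi A ω p (m + n) x e ≤ phi A ω p m (x + n * ω) e + phi A ω p n x e := by
  unfold phi
  have h1 := H.norm_pos hp m (x + n * ω) e
  have h2 := H.norm_pos hp n x e
  rw [← Real.log_mul h1.ne' h2.ne']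
  refine Real.log_le_log (H.norm_pos hp _ _ _) ?_
  rw [cocycle_add, compound_mul]
  exact matOpNorm_mul_le _ _

theorem CocycleHyp.intervalIntegrable_phi (H : CocycleHyp A ω) {p : ℕ} (hp : p ≤ d) (n : ℕ)
    (e : ε) (a b : ℝ) : IntervalIntegrable (fun x => phi A ω p n x e) volume a b :=
  (H.continuous_phi_left hp n e).intervalIntegrable _ _

theorem integral_shift_of_periodic {f : ℝ → ℝ} (hf : ∀ x, f (x + 1) = f x) (t : ℝ) :
    ∫ x in (0 : ℝ)..1, f (x + t) = ∫ x in (0 : ℝ)..1, f x := by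
  rw [intervalIntegral.integral_comp_add_right]
  have h : Function.Periodic f 1 := hf
  have := h.intervalIntegral_add_eq t 0
  simpa [add_comm] using this

theorem CocycleHyp.phiInt_shift (H : CocycleHyp A ω) (p n : ℕ) (e : ε) (t : ℝ) :
    ∫ x in (0 : ℝ)..1, phi A ω p n (x + t) e = phiInt A ω p n e :=
  integral_shift_of_periodic (f := fun x => phi A ω p n x e) (fun x => H.phi_periodic p n x e) t

theorem CocycleHyp.phiInt_add_le (H : CocycleHyp A ω) {p : ℕ} (hp : p ≤ d) (m n : ℕ) (e : ε) :
    phiInt A ω p (m + n) e ≤ phiInt A ω p m e + phiInt A ω p n e := by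
  rw [← H.phiInt_shift p m e (n * ω)]
  unfold phiInt
  have hs : IntervalIntegrable (fun x => phi A ω p m (x + n * ω) e) volume 0 1 :=
    ((H.continuous_phi_left hp m e).comp (continuous_id.add continuous_const)).intervalIntegrable _ _
  rw [← intervalIntegral.integral_add hs (H.intervalIntegrable_phi hp n e 0 1)]
  refine intervalIntegral.integral_mono_on zero_le_one (H.intervalIntegrable_phi hp _ e 0 1)
    (hs.add (H.intervalIntegrable_phi hp n e 0 1)) fun x _ => H.phi_add_le hp m n x e

theorem CocycleHyp.bddBelow (H : CocycleHyp A ω) {p : ℕ} (hp : p ≤ d) (e : ε) :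
    BddBelow (Set.range fun n : ℕ => sumLyapFin A ω p (n + 1) e) := by
  obtain ⟨C, hC1, hC, -⟩ := H.exists_growth
  refine ⟨-C, ?_⟩
  rintro _ ⟨n, rfl⟩
  have := (abs_le.mp (abs_phiInt_le hp hC (n + 1) e)).1
  simp only [sumLyapFin_eq]
  rw [le_div_iff₀ (by positivity)]
  linarith

theorem CocycleHyp.sumLyap_le (H : CocycleHyp A ω) {p : ℕ} (hp : p ≤ d) (e : ε) {n : ℕ}
    (hn : 1 ≤ n) : sumLyap A ω p e ≤ sumLyapFin A ω p n e := by
  obtain ⟨m, rfl⟩ : ∃ m, n = m + 1 := ⟨n - 1, by omega⟩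
  exact ciInf_le (H.bddBelow hp e) m

/-- By Fekete subadditivity the finite-scale sums converge to their infimum. -/
theorem CocycleHyp.tendsto_sumLyapFin (H : CocycleHyp A ω) {p : ℕ} (hp : p ≤ d) (e : ε) :
    Filter.Tendsto (fun n => sumLyapFin A ω p n e) Filter.atTop (nhds (sumLyap A ω p e)) := by
  have hsub : Subadditive fun n => phiInt A ω p n e := fun m n => H.phiInt_add_le hp m n e
  have hb : BddBelow (Set.range fun n : ℕ => phiInt A ω p n e / n) := by
    obtain ⟨C, hC1, hC, -⟩ := H.exists_growth
    refine ⟨-C, ?_⟩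
    rintro _ ⟨n, rfl⟩
    rcases Nat.eq_zero_or_pos n with h | h
    · subst h; simp; linarith
    have := (abs_le.mp (abs_phiInt_le hp hC n e)).1
    simp only
    rw [le_div_iff₀ (by positivity)]
    linarith
  have ht := hsub.tendsto_lim hb
  have : hsub.lim = sumLyap A ω p e := by
    refine le_antisymm ?_ ?_
    · refine le_ciInf fun n => ?_
      rw [sumLyapFin_eq]
      exact hsub.lim_le_div hb (by omega)
    · refine ge_of_tendsto ht ?_
      filter_upwards [Filter.eventually_ge_atTop 1] with n hn
      have := H.sumLyap_le hp e hn
      rwa [sumLyapFin_eq] at this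
  rw [← this]
  simpa only [sumLyapFin_eq] using ht

/-- The top exterior power is scalar, so `phi` is additive along orbits. -/
theorem CocycleHyp.phi_top_add (H : CocycleHyp A ω) (m n : ℕ) (x : ℝ) (e : ε) :
    phi A ω d (m + n) x e = phi A ω d m (x + n * ω) e + phi A ω d n x e := by
  have key : ∀ M : Matrix (Fin d) (Fin d) K, matOpNorm (compound d M) = ‖compound d M
      ⟨Finset.univ, by simp⟩ ⟨Finset.univ, by simp⟩‖ := by
    intro M
    have huniq : ∀ s : {s : Finset (Fin d) // s.card = d}, s = ⟨Finset.univ, by simp⟩ := by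
      intro s
      exact Subtype.ext ((Finset.card_eq_iff_eq_univ s.1).mp (by simpa using s.2))
    have hu : (Finset.univ : Finset {s : Finset (Fin d) // s.card = d}) =
        {⟨Finset.univ, by simp⟩} := by
      ext s; simp [huniq s]
    refine le_antisymm ?_ (norm_entry_le_matOpNorm _ _ _)
    refine (matOpNorm_le_sum _).trans (le_of_eq ?_)
    rw [hu]; simp
  have hmul : ∀ M N : Matrix (Fin d) (Fin d) K, compound d (M * N) ⟨Finset.univ, by simp⟩
      ⟨Finset.univ, by simp⟩ = compound d M ⟨Finset.univ, by simp⟩ ⟨Finset.univ, by simp⟩ *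
      compound d N ⟨Finset.univ, by simp⟩ ⟨Finset.univ, by simp⟩ := by
    intro M N
    have huniq : ∀ s : {s : Finset (Fin d) // s.card = d}, s = ⟨Finset.univ, by simp⟩ := by
      intro s
      exact Subtype.ext ((Finset.card_eq_iff_eq_univ s.1).mp (by simpa using s.2))
    have hu : (Finset.univ : Finset {s : Finset (Fin d) // s.card = d}) =
        {⟨Finset.univ, by simp⟩} := by
      ext s; simp [huniq s]
    rw [compound_mul, Matrix.mul_apply, hu, Finset.sum_singleton]
  unfold phi
  rw [← Real.log_mul (H.norm_pos le_rfl _ _ _).ne' (H.norm_pos le_rfl _ _ _).ne', cocycle_add,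
    key, key, key, hmul, norm_mul]

theorem CocycleHyp.phiInt_top (H : CocycleHyp A ω) (n : ℕ) (e : ε) :
    phiInt A ω d n e = n * phiInt A ω d 1 e := by
  induction n with
  | zero =>
    simp only [phiInt, phi_zero le_rfl]
    simp
  | succ n ih =>
    have : phiInt A ω d (n + 1) e = phiInt A ω d n e + phiInt A ω d 1 e := by
      rw [← H.phiInt_shift d n e ((1 : ℕ) * ω)]
      unfold phiInt
      have hs : IntervalIntegrable (fun x => phi A ω d n (x + (1 : ℕ) * ω) e) volume 0 1 :=
        ((H.continuous_phi_left le_rfl n e).comp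
          (continuous_id.add continuous_const)).intervalIntegrable _ _
      rw [← intervalIntegral.integral_add hs (H.intervalIntegrable_phi le_rfl 1 e 0 1)]
      simp only [H.phi_top_add]
    rw [this, ih]
    push_cast
    ring

end cocycleBasics

/-! ### Arithmetic of the rotation -/

section arithmetic

/-- The quadratic Diophantine condition, the only arithmetic input of the argument. -/
theorem Diophantine.quadratic {ω a : ℝ} (ha : 1 < a) (h : Diophantine ω a) :
    ∃ c > (0 : ℝ), ∀ q : ℕ, 1 ≤ q → ∀ k : ℤ, c / (q : ℝ) ^ 2 ≤ |(q : ℝ) * ω - k| := by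
  obtain ⟨c, hc, H⟩ := h
  have ha0 : 0 < a := by linarith
  have haa : 0 < a ^ a := Real.rpow_pos_of_pos ha0 a
  have key : ∀ n : ℕ, 2 ≤ n → ∀ k : ℤ, (c / a ^ a) / (n : ℝ) ^ 2 ≤ |(n : ℝ) * ω - k| := by
    intro n hn k
    refine le_trans ?_ (H n hn k)
    have hn' : (2 : ℝ) ≤ n := by exact_mod_cast hn
    have hl : 0 < Real.log n := Real.log_pos (by linarith)
    have h1 : Real.log n ≤ a * (n : ℝ) ^ (1 / a) := by
      have := Real.log_le_rpow_div (x := n) (by linarith) (ε := 1 / a) (by positivity)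
      calc _ ≤ _ := this
        _ = _ := by field_simp
    have h2 : Real.log n ^ a ≤ a ^ a * n := by
      calc Real.log n ^ a ≤ (a * (n : ℝ) ^ (1 / a)) ^ a := Real.rpow_le_rpow hl.le h1 ha0.le
        _ = a ^ a * n := by
          rw [Real.mul_rpow ha0.le (by positivity), ← Real.rpow_mul (by linarith),
            one_div_mul_cancel ha0.ne', Real.rpow_one]
    have h3 : 0 < Real.log n ^ a := Real.rpow_pos_of_pos hl a
    rw [div_div]
    refine div_le_div_of_nonneg_left hc.le (by positivity) ?_
    calc n * Real.log n ^ a ≤ n * (a ^ a * n) := by gcongr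
      _ = _ := by ring
  refine ⟨c / a ^ a / 8, by positivity, fun q hq k => ?_⟩
  rcases Nat.lt_or_ge q 2 with h2 | h2
  · obtain rfl : q = 1 := by omega
    have := key 2 le_rfl (2 * k)
    push_cast at this ⊢
    rw [show (2 : ℝ) * ω - 2 * k = 2 * (ω - k) by ring, abs_mul, abs_of_pos (by norm_num : (0 : ℝ) < 2)] at this
    rw [one_mul]
    linarith
  · refine le_trans ?_ (key q h2 k)
    refine div_le_div_of_nonneg_right ?_ (by positivity)
    have : 0 < c / a ^ a := by positivity
    linarith

/-- The Diophantine condition forces the denominators in Dirichlet approximation to be arbitrarily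
large. -/
theorem exists_good_denominator {α c : ℝ} (hc : 0 < c)
    (H : ∀ q : ℕ, 1 ≤ q → ∀ k : ℤ, c / (q : ℝ) ^ 2 ≤ |(q : ℝ) * α - k|) (N : ℕ) :
    ∃ (p : ℤ) (q : ℕ), N ≤ q ∧ 1 ≤ q ∧ IsCoprime p (q : ℤ) ∧ |α - p / q| ≤ 1 / (q : ℝ) ^ 2 := by
  obtain ⟨n, hn⟩ := exists_nat_gt ((N : ℝ) ^ 2 / c)
  obtain ⟨r, hr1, hr2⟩ := Real.exists_rat_abs_sub_le_and_den_le α (Nat.succ_pos n)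
  have hd : (0 : ℝ) < r.den := by exact_mod_cast r.den_pos
  have hrc : (r : ℝ) = r.num / r.den := by exact_mod_cast (Rat.cast_def (K := ℝ) r)
  have hden : (r.den : ℝ) ≤ (n.succ : ℝ) + 1 := by
    have : (r.den : ℝ) ≤ n.succ := by exact_mod_cast hr2
    linarith
  refine ⟨r.num, r.den, ?_, r.den_pos, ?_, ?_⟩
  · have h1 := H r.den r.den_pos r.num
    have h2 : |(r.den : ℝ) * α - r.num| ≤ 1 / ((n.succ : ℝ) + 1) := by
      have : (r.den : ℝ) * α - r.num = r.den * (α - r) := by rw [hrc]; field_simp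
      rw [this, abs_mul, abs_of_pos hd]
      calc _ ≤ (r.den : ℝ) * (1 / (((n.succ : ℝ) + 1) * r.den)) := by gcongr
        _ = _ := by field_simp
    have h3 := h1.trans h2
    rw [div_le_div_iff₀ (by positivity) (by positivity), one_mul] at h3
    by_contra hlt
    push Not at hlt
    have h4 : (r.den : ℝ) < N := by exact_mod_cast hlt
    rw [div_lt_iff₀ hc] at hn
    push_cast at h3
    nlinarith
  · exact Int.isCoprime_iff_gcd_eq_one.mpr (by simpa [Int.gcd] using r.reduced)
  · rw [← hrc]
    refine hr1.trans ?_
    rw [pow_two]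
    gcongr

theorem sum_range_zmod {q : ℕ} [NeZero q] {M : Type*} [AddCommMonoid M] (g : ZMod q → M) :
    ∑ k ∈ Finset.range q, g (k : ZMod q) = ∑ z, g z :=
  Finset.sum_nbij' (fun k => (k : ZMod q)) ZMod.val (by simp)
    (fun z _ => Finset.mem_range.mpr z.val_lt)
    (fun k hk => ZMod.val_cast_of_lt (Finset.mem_range.mp hk)) (by simp) (by simp)

/-- If `q` is a denominator of a good rational approximation of `α`, then `q` consecutive points of
an orbit of the rotation by `α` are `1/q`-equidistributed. -/
theorem sum_orbit_le_block {α : ℝ} {p : ℤ} {q : ℕ} (hq : 1 ≤ q) (hpq : IsCoprime p (q : ℤ))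
    (hα : |α - p / q| ≤ 1 / (q : ℝ) ^ 2) (G H : ℝ → ENNReal) (hH : ∀ x, H (x + 1) = H x)
    (hGH : ∀ y y' : ℝ, |y - y'| ≤ 2 / (q : ℝ) → G y ≤ H y') (x : ℝ) :
    ∑ k ∈ Finset.range q, G (x + k * α) ≤ q * ∫⁻ t in Set.Ioc (0 : ℝ) 1, H t := by
  have : NeZero q := ⟨by omega⟩
  have hq0 : (0 : ℝ) < q := by exact_mod_cast hq
  set I : ℤ → ENNReal := fun r => ∫⁻ t in Set.Ioc (x + r / q) (x + (r + 1) / q), H t with hI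
  have hHint : ∀ (y : ℝ) (m : ℤ), H (y + m) = H y := by
    intro y m
    have : Function.Periodic H 1 := hH
    simpa using (this.int_mul m) y
  have hIper : ∀ r m : ℤ, I (r + q * m) = I r := by
    intro r m
    simp only [hI]
    have hmp : MeasurePreserving (fun t : ℝ => t + m) volume volume :=
      measurePreserving_add_right _ _
    have := hmp.setLIntegral_comp_preimage_emb
      (MeasurableEquiv.addRight (m : ℝ)).measurableEmbedding H
      (Set.Ioc (x + ((r + q * m : ℤ) : ℝ) / q) (x + (((r + q * m : ℤ) : ℝ) + 1) / q))
    rw [← this]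
    simp only [hHint, Set.preimage_add_const_Ioc]
    congr 3
    · push_cast; field_simp; ring
    · push_cast; field_simp; ring
  have hstep : ∀ k ∈ Finset.range q, G (x + k * α) ≤ q * I (k * p) := by
    intro k hk
    have hk' : (k : ℝ) ≤ q := by exact_mod_cast (Finset.mem_range.mp hk).le
    have hvol : volume (Set.Ioc (x + ((k * p : ℤ) : ℝ) / q) (x + (((k * p : ℤ) : ℝ) + 1) / q)) =
        ENNReal.ofReal (1 / q) := by
      rw [Real.volume_Ioc]; congr 1; ring
    have h1 : G (x + k * α) * ENNReal.ofReal (1 / q) ≤ I (k * p) := by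
      rw [← hvol, ← setLIntegral_const]
      refine setLIntegral_mono' measurableSet_Ioc fun t ht => hGH _ _ ?_
      have h2 : |(k : ℝ) * α - k * (p / q)| ≤ 1 / q := by
        rw [← mul_sub, abs_mul, abs_of_nonneg (Nat.cast_nonneg k)]
        calc (k : ℝ) * |α - p / q| ≤ q * (1 / (q : ℝ) ^ 2) := by gcongr
          _ = 1 / q := by field_simp
      have ht1 := ht.1
      have ht2 := ht.2
      push_cast at ht1 ht2
      rw [add_div] at ht2
      have e : (k : ℝ) * p / q = k * (p / q) := by ring
      rw [e] at ht1 ht2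
      have : (2 : ℝ) / q = 1 / q + 1 / q := by ring
      rw [abs_le] at h2 ⊢
      rw [this]
      constructor <;> linarith [h2.1, h2.2]
    calc G (x + k * α) = q * (G (x + k * α) * ENNReal.ofReal (1 / q)) := by
          rw [mul_comm (q : ENNReal), mul_assoc, one_div, ENNReal.ofReal_inv_of_pos hq0, ENNReal.ofReal_natCast,
            ENNReal.inv_mul_cancel (by simpa using (by omega : q ≠ 0)) (ENNReal.natCast_ne_top q),
            mul_one]
      _ ≤ _ := by gcongr
  refine (Finset.sum_le_sum hstep).trans ?_
  rw [← Finset.mul_sum]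
  refine mul_le_mul_right (le_of_eq ?_) _
  set F : ZMod q → ENNReal := fun z => I z.val with hF
  have hFI : ∀ r : ℤ, I r = F (r : ZMod q) := by
    intro r
    simp only [hF]
    have h1 : ((r : ZMod q).val : ℤ) = r % q := ZMod.val_intCast r
    rw [h1]
    conv_lhs => rw [← Int.emod_add_mul_ediv r q]
    exact hIper _ _
  have hunit : IsUnit (p : ZMod q) := by
    obtain ⟨u, v, huv⟩ := hpq
    refine IsUnit.of_mul_eq_one (u : ZMod q) ?_
    have h := congrArg (Int.cast : ℤ → ZMod q) huv
    push_cast at h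
    rwa [ZMod.natCast_self, mul_zero, add_zero, mul_comm] at h
  have h1 : ∑ k ∈ Finset.range q, I (k * p) = ∑ k ∈ Finset.range q, I k := by
    calc _ = ∑ k ∈ Finset.range q, F ((k : ZMod q) * (p : ZMod q)) := by
          refine Finset.sum_congr rfl fun k _ => ?_
          rw [hFI]; push_cast; rfl
      _ = ∑ z : ZMod q, F (z * (p : ZMod q)) := sum_range_zmod fun z => F (z * (p : ZMod q))
      _ = ∑ z : ZMod q, F z := by
          obtain ⟨u, hu⟩ := hunit
          rw [← hu]
          exact Equiv.sum_comp (Units.mulRight u) F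
      _ = ∑ k ∈ Finset.range q, F k := (sum_range_zmod F).symm
      _ = _ := Finset.sum_congr rfl fun k _ => by rw [hFI]; push_cast; rfl
  rw [h1]
  have h2 : ∀ m : ℕ, ∑ k ∈ Finset.range m, I k = ∫⁻ t in Set.Ioc x (x + m / q), H t := by
    intro m
    induction m with
    | zero => simp
    | succ m ih =>
      rw [Finset.sum_range_succ, ih]
      simp only [hI, Int.cast_natCast]
      rw [← lintegral_union measurableSet_Ioc (Set.Ioc_disjoint_Ioc_of_le le_rfl),
        Set.Ioc_union_Ioc_eq_Ioc]
      · push_cast; rfl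
      · have : (0 : ℝ) ≤ m / q := by positivity
        linarith
      · gcongr; linarith
  rw [h2 q, div_self hq0.ne']
  have hf1 : IsAddFundamentalDomain (AddSubgroup.zmultiples (1 : ℝ)) (Set.Ioc x (x + 1)) volume :=
    isAddFundamentalDomain_Ioc one_pos x
  have hf2 : IsAddFundamentalDomain (AddSubgroup.zmultiples (1 : ℝ)) (Set.Ioc (0 : ℝ) (0 + 1)) volume :=
    isAddFundamentalDomain_Ioc one_pos 0
  rw [zero_add] at hf2
  refine hf1.setLIntegral_eq hf2 H ?_
  rintro ⟨g, hg⟩ y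
  obtain ⟨m, rfl⟩ := AddSubgroup.mem_zmultiples_iff.mp hg
  change H ((m • (1 : ℝ)) + y) = H y
  rw [add_comm]
  simpa using hHint y m

/-- Version of `sum_orbit_le_block` for orbits of any length `k`, at the cost of one extra block. -/
theorem sum_orbit_le {α : ℝ} {p : ℤ} {q : ℕ} (hq : 1 ≤ q) (hpq : IsCoprime p (q : ℤ))
    (hα : |α - p / q| ≤ 1 / (q : ℝ) ^ 2) (G H : ℝ → ENNReal) (hH : ∀ x, H (x + 1) = H x)
    (hGH : ∀ y y' : ℝ, |y - y'| ≤ 2 / (q : ℝ) → G y ≤ H y') (x : ℝ) (k : ℕ) :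
    ∑ i ∈ Finset.range k, G (x + i * α) ≤ ((k : ENNReal) + q) * ∫⁻ t in Set.Ioc (0 : ℝ) 1, H t := by
  have h1 : ∀ b : ℕ, ∑ i ∈ Finset.range (b * q), G (x + i * α) ≤
      ((b * q : ℕ) : ENNReal) * ∫⁻ t in Set.Ioc (0 : ℝ) 1, H t := by
    intro b
    induction b with
    | zero => simp
    | succ b ih =>
      rw [add_mul, one_mul, Finset.sum_range_add, Nat.cast_add, add_mul]
      refine add_le_add ih ?_
      refine le_trans (le_of_eq ?_)
        (sum_orbit_le_block hq hpq hα G H hH hGH (x + (b * q : ℕ) * α))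
      refine Finset.sum_congr rfl fun i _ => ?_
      congr 1; push_cast; ring
  have h2 : k ≤ (k / q + 1) * q := by
    have := Nat.lt_div_mul_add (a := k) (b := q) (by omega)
    rw [add_mul, one_mul]; omega
  refine (Finset.sum_le_sum_of_subset (Finset.range_mono h2)).trans ((h1 _).trans ?_)
  gcongr
  rw [← Nat.cast_add]
  have : (k / q + 1) * q ≤ k + q := by
    rw [add_mul, one_mul]
    exact Nat.add_le_add_right (Nat.div_mul_le_self k q) q
  exact_mod_cast this

/-- The distance to the nearest integer. -/
def distInt (t : ℝ) : ℝ := |t - round t|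

theorem distInt_le (t : ℝ) (m : ℤ) : distInt t ≤ |t - m| := round_le t m

theorem card_separated_le (s : ℝ) (hs : 0 < s) (k : ℕ) (S : Finset ℕ) (hS : ∀ i ∈ S, i < k)
    (hsep : ∀ i ∈ S, ∀ j ∈ S, i < j → s ≤ (j : ℝ) - i) : (S.card : ℝ) ≤ 1 + k / s := by
  have h1 : S.card ≤ (Finset.range (⌊(k : ℝ) / s⌋₊ + 1)).card := by
    refine Finset.card_le_card_of_injOn (fun i => ⌊(i : ℝ) / s⌋₊) ?_ ?_
    · intro i hi
      simp only [Finset.coe_range, Set.mem_Iio, Nat.lt_succ_iff]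
      have := hS i hi
      refine Nat.floor_le_floor ?_
      gcongr
    · have key : ∀ i ∈ S, ∀ j ∈ S, i < j → ⌊(i : ℝ) / s⌋₊ < ⌊(j : ℝ) / s⌋₊ := by
        intro i hi j hj hij
        have h := hsep i hi j hj hij
        rw [Nat.lt_iff_add_one_le, Nat.le_floor_iff (by positivity)]
        have h2 : (⌊(i : ℝ) / s⌋₊ : ℝ) ≤ i / s := Nat.floor_le (by positivity)
        push_cast
        calc (⌊(i : ℝ) / s⌋₊ : ℝ) + 1 ≤ i / s + 1 := by linarith
          _ = (i + s) / s := by field_simp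
          _ ≤ j / s := by gcongr; linarith
      intro i hi j hj hij
      simp only at hij
      rcases lt_trichotomy i j with h | h | h
      · exact absurd hij (key i hi j hj h).ne
      · exact h
      · exact absurd hij (key j hj i hi h).ne'
  rw [Finset.card_range] at h1
  have h2 : (⌊(k : ℝ) / s⌋₊ : ℝ) ≤ k / s := Nat.floor_le (by positivity)
  have h3 : (S.card : ℝ) ≤ (⌊(k : ℝ) / s⌋₊ : ℝ) + 1 := by exact_mod_cast h1
  linarith

/-- Two visits of the orbit to an interval of radius `r` are separated by a time at least
`√(c / (2 r))`, which bounds the number of visits. -/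
theorem card_close_le {α c : ℝ} (hc : 0 < c)
    (H : ∀ q : ℕ, 1 ≤ q → ∀ k : ℤ, c / (q : ℝ) ^ 2 ≤ |(q : ℝ) * α - k|) (x r : ℝ) (hr : 0 < r)
    (k : ℕ) :
    ∑ i ∈ Finset.range k, (if distInt (x + i * α) < r then (1 : ℝ) else 0) ≤
      1 + k * (Real.sqrt (2 / c) * Real.sqrt r) := by
  rw [← Finset.sum_filter, Finset.sum_const, nsmul_eq_mul, mul_one]
  have hs : 0 < Real.sqrt (c / (2 * r)) := Real.sqrt_pos.mpr (by positivity)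
  refine (card_separated_le _ hs k _ ?_ ?_).trans (le_of_eq ?_)
  · intro i hi; exact Finset.mem_range.mp (Finset.mem_filter.mp hi).1
  · intro i hi j hj hij
    have h1 := (Finset.mem_filter.mp hi).2
    have h2 := (Finset.mem_filter.mp hj).2
    have h3 := H (j - i) (by omega) (round (x + j * α) - round (x + i * α))
    rw [Nat.cast_sub hij.le] at h3
    have hji : (0 : ℝ) < (j : ℝ) - i := sub_pos.mpr (by exact_mod_cast hij)
    have h4 : |((j : ℝ) - i) * α - ((round (x + j * α) - round (x + i * α) : ℤ) : ℝ)| ≤ 2 * r := by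
      have h5 : ((j : ℝ) - i) * α - ((round (x + j * α) - round (x + i * α) : ℤ) : ℝ) =
          (x + j * α - round (x + j * α)) - (x + i * α - round (x + i * α)) := by
        push_cast; ring
      rw [h5]
      refine (abs_sub _ _).trans ?_
      unfold distInt at h1 h2
      linarith
    have h6 := h3.trans h4
    rw [div_le_iff₀ (by positivity)] at h6
    refine Real.sqrt_le_iff.mpr ⟨hji.le, ?_⟩
    rw [div_le_iff₀ (by positivity)]
    linarith
  · congr 1
    rw [← Real.sqrt_mul (by positivity), div_eq_mul_inv, ← Real.sqrt_inv]
    congr 2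
    field_simp

/-- Dyadic majorant of `log⁺ (η / δ)`, counting the scales `η / 2^i` above `δ`. -/
theorem posLog_le_dyadic (I : ℕ) : ∀ η δ : ℝ, 0 < η → 0 < δ → η * (1 / 2) ^ I ≤ δ →
    Real.posLog (η / δ) ≤ ∑ i ∈ Finset.range I, (if δ < η * (1 / 2) ^ i then (1 : ℝ) else 0) := by
  induction I with
  | zero =>
    intro η δ hη hδ h
    simp only [pow_zero, mul_one] at h
    have : Real.posLog (η / δ) = 0 := by
      rw [Real.posLog_eq_zero_iff, abs_of_pos (by positivity)]
      exact (div_le_one hδ).mpr h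
    simp [this]
  | succ I ih =>
    intro η δ hη hδ h
    rw [Finset.sum_range_succ']
    have h1 := ih (η / 2) δ (by positivity) hδ (by rw [pow_succ] at h; linarith)
    have h2 : ∑ i ∈ Finset.range I, (if δ < η * (1 / 2) ^ (i + 1) then (1 : ℝ) else 0) =
        ∑ i ∈ Finset.range I, (if δ < η / 2 * (1 / 2) ^ i then (1 : ℝ) else 0) := by
      refine Finset.sum_congr rfl fun i _ => ?_
      rw [show η * (1 / 2 : ℝ) ^ (i + 1) = η / 2 * (1 / 2) ^ i by ring]
    rw [h2, pow_zero, mul_one]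
    by_cases hd : δ < η
    · rw [if_pos hd]
      refine le_trans ?_ (add_le_add h1 le_rfl)
      have h3 : η / δ = 2 * (η / 2 / δ) := by ring
      rw [h3]
      refine Real.posLog_mul.trans ?_
      have h4 : Real.posLog (2 : ℝ) ≤ 1 := by
        rw [Real.posLog_eq_log (by norm_num)]
        linarith [Real.log_two_lt_d9]
      linarith
    · have : Real.posLog (η / δ) = 0 := by
        rw [Real.posLog_eq_zero_iff, abs_of_pos (by positivity)]
        exact (div_le_one hδ).mpr (not_lt.mp hd)
      rw [this, if_neg hd, add_zero]
      exact Finset.sum_nonneg fun i _ => by split_ifs <;> norm_num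

/-- Orbits of a Diophantine rotation which stay exponentially far from a point see its
logarithmic singularity, truncated at scale `η`, with frequency `O(√η)` only. -/
theorem sum_posLog_orbit_le {α c : ℝ} (hc : 0 < c)
    (H : ∀ q : ℕ, 1 ≤ q → ∀ k : ℤ, c / (q : ℝ) ^ 2 ≤ |(q : ℝ) * α - k|) (x η : ℝ) (hη : 0 < η)
    (k I : ℕ) (hfar : ∀ i < k, η * (1 / 2) ^ I ≤ distInt (x + i * α)) :
    ∑ i ∈ Finset.range k, Real.posLog (η / distInt (x + i * α)) ≤
      I + k * (4 * Real.sqrt (2 / c) * Real.sqrt η) := by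
  calc _ ≤ ∑ i ∈ Finset.range k, ∑ j ∈ Finset.range I,
        (if distInt (x + i * α) < η * (1 / 2) ^ j then (1 : ℝ) else 0) := by
        refine Finset.sum_le_sum fun i hi => ?_
        have := hfar i (Finset.mem_range.mp hi)
        exact posLog_le_dyadic I η _ hη (lt_of_lt_of_le (by positivity) this) this
    _ = ∑ j ∈ Finset.range I, ∑ i ∈ Finset.range k,
        (if distInt (x + i * α) < η * (1 / 2) ^ j then (1 : ℝ) else 0) := Finset.sum_comm
    _ ≤ ∑ j ∈ Finset.range I, (1 + k * (Real.sqrt (2 / c) * Real.sqrt (η * (1 / 2) ^ j))) :=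
        Finset.sum_le_sum fun j _ => card_close_le hc H x _ (by positivity) k
    _ ≤ _ := by
        rw [Finset.sum_add_distrib, Finset.sum_const, Finset.card_range, nsmul_eq_mul, mul_one]
        gcongr
        have h1 : ∀ j ∈ Finset.range I, (k : ℝ) * (Real.sqrt (2 / c) * Real.sqrt (η * (1 / 2) ^ j)) ≤
            k * (Real.sqrt (2 / c) * Real.sqrt η) * (3 / 4) ^ j := by
          intro j _
          have : Real.sqrt (η * (1 / 2) ^ j) ≤ Real.sqrt η * (3 / 4) ^ j := by
            rw [Real.sqrt_mul hη.le]
            gcongr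
            refine Real.sqrt_le_iff.mpr ⟨by positivity, ?_⟩
            rw [← pow_mul, mul_comm, pow_mul]
            exact pow_le_pow_left₀ (by norm_num) (by norm_num) j
          calc _ ≤ (k : ℝ) * (Real.sqrt (2 / c) * (Real.sqrt η * (3 / 4) ^ j)) := by gcongr
            _ = _ := by ring
        refine (Finset.sum_le_sum h1).trans ?_
        rw [← Finset.mul_sum]
        have h2 : ∑ j ∈ Finset.range I, (3 / 4 : ℝ) ^ j ≤ 4 := by
          have := geom_sum_eq (by norm_num : (3 / 4 : ℝ) ≠ 1) I
          rw [this]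
          have h0 : (0 : ℝ) ≤ (3 / 4) ^ I := by positivity
          rw [div_le_iff_of_neg (by norm_num)]
          linarith
        calc _ ≤ (k : ℝ) * (Real.sqrt (2 / c) * Real.sqrt η) * 4 := by gcongr
          _ = _ := by ring

end arithmetic

/-! ### Uniform upper bounds -/

section upperBound

theorem periodic_sub_int {f : ℝ → ℝ} (hf : ∀ x, f (x + 1) = f x) (x : ℝ) (m : ℤ) :
    f (x - m) = f x := by
  have : Function.Periodic f 1 := hf
  simpa using this.sub_int_mul_eq m (x := x)

theorem exists_modulus_of_periodic {f : ℝ → ℝ} (hc : Continuous f) (hf : ∀ x, f (x + 1) = f x)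
    {η : ℝ} (hη : 0 < η) : ∃ r > 0, ∀ y y' : ℝ, |y - y'| ≤ r → |f y - f y'| ≤ η := by
  have huc : UniformContinuousOn f (Set.Icc (-1) 2) :=
    isCompact_Icc.uniformContinuousOn_of_continuous hc.continuousOn
  obtain ⟨r, hr, h⟩ := Metric.uniformContinuousOn_iff.mp huc η hη
  refine ⟨min (r / 2) 1, by positivity, fun y y' hy => ?_⟩
  have h1 : |y - y'| ≤ 1 := hy.trans (min_le_right _ _)
  have h2 : |y - y'| < r := lt_of_le_of_lt (hy.trans (min_le_left _ _)) (by linarith)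
  have h3 := h (y - ⌊y⌋) ⟨by linarith [Int.floor_le y], by linarith [Int.lt_floor_add_one y]⟩
    (y' - ⌊y⌋) ⟨by linarith [Int.floor_le y, (abs_le.mp h1).2],
      by linarith [Int.lt_floor_add_one y, (abs_le.mp h1).1]⟩
    (by rw [Real.dist_eq, sub_sub_sub_cancel_right]; exact h2)
  rw [periodic_sub_int hf, periodic_sub_int hf, Real.dist_eq] at h3
  exact h3.le

variable {K : Type*} [RCLike K] {d : ℕ} {ε : Type*} [MetricSpace ε] [CompactSpace ε]
  {A : ℝ → ε → Matrix (Fin d) (Fin d) K} {ω : ℝ}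

theorem CocycleHyp.eventually_phi_close (H : CocycleHyp A ω) {p : ℕ} (hp : p ≤ d) (n : ℕ) (e₀ : ε)
    {η : ℝ} (hη : 0 < η) : ∀ᶠ e in nhds e₀, ∀ x, |phi A ω p n x e - phi A ω p n x e₀| ≤ η := by
  have hF : Continuous fun z : ε × ℝ => |phi A ω p n z.2 z.1 - phi A ω p n z.2 e₀| := by
    refine Continuous.abs (Continuous.sub ?_ ?_)
    · exact Continuous.comp (g := fun q : ℝ × ε => phi A ω p n q.1 q.2)
        (f := fun z : ε × ℝ => (z.2, z.1)) (H.continuous_phi hp n) (by fun_prop)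
    · exact Continuous.comp (g := fun q : ℝ => phi A ω p n q e₀)
        (f := fun z : ε × ℝ => z.2) (H.continuous_phi_left hp n e₀) (by fun_prop)
  have h := (isCompact_Icc (a := (0 : ℝ)) (b := 1)).eventually_forall_of_forall_eventually
    (x₀ := e₀) (P := fun e x => |phi A ω p n x e - phi A ω p n x e₀| < η) (by
      intro y _
      refine hF.continuousAt.eventually (gt_mem_nhds ?_)
      simpa using hη)
  filter_upwards [h] with e he x
  have h1 := he (x - ⌊x⌋) ⟨by linarith [Int.floor_le x], by linarith [Int.lt_floor_add_one x]⟩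
  rw [periodic_sub_int (f := fun x => phi A ω p n x e) (fun x => H.phi_periodic p n x e),
    periodic_sub_int (f := fun x => phi A ω p n x e₀) (fun x => H.phi_periodic p n x e₀)] at h1
  exact h1.le

theorem CocycleHyp.phi_mul_le (H : CocycleHyp A ω) {p : ℕ} (hp : p ≤ d) (m k : ℕ) (x : ℝ) (e : ε) :
    phi A ω p (k * m) x e ≤ ∑ i ∈ Finset.range k, phi A ω p m (x + i * (m * ω)) e := by
  induction k with
  | zero => simp [phi_zero hp]
  | succ k ih =>
    rw [Finset.sum_range_succ, add_mul, one_mul, add_comm (k * m)]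
    have := H.phi_add_le hp m (k * m) x e
    have h2 : x + ((k * m : ℕ) : ℝ) * ω = x + k * (m * ω) := by push_cast; ring
    rw [h2] at this
    linarith

theorem CocycleHyp.dio_mul (H : CocycleHyp A ω) {m : ℕ} (hm : 1 ≤ m) :
    ∃ c > (0 : ℝ), ∀ q : ℕ, 1 ≤ q → ∀ k : ℤ, c / (q : ℝ) ^ 2 ≤ |(q : ℝ) * (m * ω) - k| := by
  obtain ⟨c, hc, h⟩ := H.dio
  have hm0 : (0 : ℝ) < m := by exact_mod_cast hm
  refine ⟨c / (m : ℝ) ^ 2, by positivity, fun q hq k => ?_⟩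
  have := h (q * m) (Nat.mul_pos hq hm) k
  push_cast at this
  rw [mul_assoc] at this
  refine le_trans (le_of_eq ?_) this
  rw [mul_pow, div_div, mul_comm]

/-- Uniform upper bound, in the phase and near a given parameter: by subadditivity `phi` at scale `n`
is at most a Birkhoff sum of `phi` at a fixed scale `m`, and these sums converge uniformly in the
phase by equidistribution. -/
theorem CocycleHyp.upper_bound (H : CocycleHyp A ω) {p : ℕ} (hp : p ≤ d) (e₀ : ε)
    {δ : ℝ} (hδ : 0 < δ) :
    ∃ n₁ : ℕ, ∀ᶠ e in nhds e₀, ∀ n ≥ n₁, ∀ x, phi A ω p n x e ≤ n * (sumLyap A ω p e₀ + δ) := by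
  obtain ⟨C, hC1, hC, -, hCs⟩ := H.exists_growth
  obtain ⟨m, hm, hm1⟩ : ∃ m : ℕ, sumLyapFin A ω p m e₀ < sumLyap A ω p e₀ + δ / 8 ∧ 1 ≤ m :=
    (((H.tendsto_sumLyapFin hp e₀).eventually (gt_mem_nhds (by linarith))).and
      (Filter.eventually_ge_atTop 1)).exists
  have hm0 : (0 : ℝ) < m := by exact_mod_cast hm1
  have hmS : phiInt A ω p m e₀ ≤ m * (sumLyap A ω p e₀ + δ / 8) := by
    rw [sumLyapFin_eq, div_lt_iff₀ hm0] at hm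
    linarith
  set η : ℝ := m * (δ / 8) with hη
  have hη0 : 0 < η := by positivity
  -- the constant `C * m` makes the observable nonnegative, as required by `sum_orbit_le`
  set f : ℝ → ℝ := fun x => phi A ω p m x e₀ + C * m with hf
  have hf0 : ∀ x, 0 ≤ f x := fun x => by
    have := (abs_le.mp (hC p hp m x e₀)).1
    simp only [hf]; linarith
  have hfc : Continuous f := (H.continuous_phi_left hp m e₀).add continuous_const
  have hfp : ∀ x, f (x + 1) = f x := fun x => by simp only [hf, H.phi_periodic]
  obtain ⟨r, hr, hmod⟩ := exists_modulus_of_periodic hfc hfp hη0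
  obtain ⟨c, hc, hdio⟩ := H.dio_mul hm1
  obtain ⟨N, hN⟩ := exists_nat_gt (2 / r)
  obtain ⟨P, q, hNq, hq, hPq, hα⟩ := exists_good_denominator hc hdio N
  have hq0 : (0 : ℝ) < q := by exact_mod_cast hq
  have hqr : 2 / (q : ℝ) ≤ r := by
    rw [div_le_iff₀ hq0]
    rw [div_lt_iff₀ hr] at hN
    have : (N : ℝ) ≤ q := by exact_mod_cast hNq
    nlinarith
  have hintf : ∫ t in (0 : ℝ)..1, (f t + η) = phiInt A ω p m e₀ + C * m + η := by
    simp only [hf]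
    rw [intervalIntegral.integral_add, intervalIntegral.integral_add]
    · simp [phiInt]
    · exact H.intervalIntegrable_phi hp m e₀ 0 1
    · exact intervalIntegrable_const
    · exact (H.intervalIntegrable_phi hp m e₀ 0 1).add intervalIntegrable_const
    · exact intervalIntegrable_const
  have hlint : ∫⁻ t in Set.Ioc (0 : ℝ) 1, ENNReal.ofReal (f t + η) =
      ENNReal.ofReal (phiInt A ω p m e₀ + C * m + η) := by
    rw [← hintf, intervalIntegral.integral_of_le zero_le_one,
      ofReal_integral_eq_lintegral_ofReal]
    · exact ((hfc.add continuous_const).intervalIntegrable 0 1).1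
    · exact Filter.Eventually.of_forall fun t => add_nonneg (hf0 t) hη0.le
  set T : ℝ := phiInt A ω p m e₀ + C * m + η with hT
  have hT0 : 0 ≤ T := by
    have := (abs_le.mp (abs_phiInt_le hp hC m e₀)).1
    simp only [hT]; linarith
  have hsum : ∀ (x : ℝ) (k : ℕ), ∑ i ∈ Finset.range k, f (x + i * (m * ω)) ≤ (k + q) * T := by
    intro x k
    have := sum_orbit_le hq hPq hα (fun y => ENNReal.ofReal (f y))
      (fun y => ENNReal.ofReal (f y + η)) (fun y => by simp only [hfp]) (fun y y' hy => by
        refine ENNReal.ofReal_le_ofReal ?_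
        linarith [(abs_le.mp (hmod y y' (hy.trans hqr))).2]) x k
    rw [hlint, ← ENNReal.ofReal_sum_of_nonneg (fun i _ => hf0 _), ← Nat.cast_add,
      ← ENNReal.ofReal_natCast, ← ENNReal.ofReal_mul (by positivity),
      ENNReal.ofReal_le_ofReal_iff (by positivity)] at this
    push_cast at this
    exact this
  set L := sumLyap A ω p e₀ with hL
  set Q : ℝ := q * T + C * m + m * |L + 3 * (δ / 8)| with hQ
  obtain ⟨n₁, hn₁⟩ := exists_nat_gt (Q / (δ / 2))
  refine ⟨n₁, ?_⟩
  filter_upwards [H.eventually_phi_close hp m e₀ hη0] with e he n hn x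
  set k := n / m with hk
  set s := n % m with hs
  have hnk : k * m + s = n := Nat.div_add_mod' n m
  have hsm : (s : ℝ) ≤ m := by exact_mod_cast (Nat.mod_lt n hm1).le
  have hs0 : (0 : ℝ) ≤ s := Nat.cast_nonneg s
  have hnk' : (k : ℝ) * m + s = n := by exact_mod_cast hnk
  have h1 : phi A ω p n x e ≤ phi A ω p (k * m) x e + C * m := by
    have := (abs_le.mp (hCs p hp (k * m) s x e)).2
    rw [hnk] at this
    nlinarith
  have h2 : phi A ω p (k * m) x e ≤ k * (phiInt A ω p m e₀ + 2 * η) + q * T := by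
    refine (H.phi_mul_le hp m k x e).trans ?_
    have h3 : ∑ i ∈ Finset.range k, phi A ω p m (x + i * (m * ω)) e ≤
        ∑ i ∈ Finset.range k, (f (x + i * (m * ω)) + (η - C * m)) := by
      refine Finset.sum_le_sum fun i _ => ?_
      have := (abs_le.mp (he (x + i * (m * ω)))).2
      simp only [hf]; linarith
    rw [Finset.sum_add_distrib, Finset.sum_const, Finset.card_range, nsmul_eq_mul] at h3
    have h4 := hsum x k
    simp only [hT] at h4 ⊢
    linarith
  have h5 : Q ≤ n * (δ / 2) := by
    rw [div_lt_iff₀ (by positivity)] at hn₁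
    have : (n₁ : ℝ) ≤ n := by exact_mod_cast hn
    nlinarith
  have h6 : (k : ℝ) * (phiInt A ω p m e₀ + 2 * η) ≤ k * m * (L + 3 * (δ / 8)) := by
    have : phiInt A ω p m e₀ + 2 * η ≤ m * (L + 3 * (δ / 8)) := by simp only [hη]; linarith
    rw [mul_assoc]
    exact mul_le_mul_of_nonneg_left this (Nat.cast_nonneg k)
  have h7 : (k : ℝ) * m * (L + 3 * (δ / 8)) ≤ n * (L + 3 * (δ / 8)) + m * |L + 3 * (δ / 8)| := by
    have h8 : -(s * (L + 3 * (δ / 8))) ≤ m * |L + 3 * (δ / 8)| := by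
      calc -(s * (L + 3 * (δ / 8))) ≤ |s * (L + 3 * (δ / 8))| := neg_le_abs _
        _ = s * |L + 3 * (δ / 8)| := by rw [abs_mul, abs_of_nonneg hs0]
        _ ≤ _ := mul_le_mul_of_nonneg_right hsm (abs_nonneg _)
    rw [← hnk']
    linarith
  have hn0 : (0 : ℝ) ≤ n := Nat.cast_nonneg n
  simp only [hQ] at h5
  have h9 : 0 ≤ (n : ℝ) * δ := by positivity
  linarith

end upperBound

/-! ### Local comparison for the logarithm of a holomorphic function -/

/-- A zero-free holomorphic function on a disc has a holomorphic logarithm. -/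
theorem exists_log_on_ball {g : ℂ → ℂ} {c : ℂ} {r : ℝ}
    (hg : DifferentiableOn ℂ g (Metric.ball c r)) (h0 : ∀ w ∈ Metric.ball c r, g w ≠ 0) :
    ∃ h : ℂ → ℂ, DifferentiableOn ℂ h (Metric.ball c r) ∧
      ∀ w ∈ Metric.ball c r, g w = Complex.exp (h w) := by
  by_cases hr : r ≤ 0
  · refine ⟨0, ?_, ?_⟩ <;> simp [Metric.ball_eq_empty.mpr hr]
  push Not at hr
  have hc : c ∈ Metric.ball c r := Metric.mem_ball_self hr
  have hd : DifferentiableOn ℂ (fun w => deriv g w / g w) (Metric.ball c r) :=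
    (hg.deriv Metric.isOpen_ball).div hg h0
  obtain ⟨h, hh⟩ := hd.isExactOn_ball
  have hgd : ∀ w ∈ Metric.ball c r, HasDerivAt g (deriv g w) w := fun w hw =>
    (hg.differentiableAt (Metric.isOpen_ball.mem_nhds hw)).hasDerivAt
  obtain ⟨b, hb⟩ : ∃ b, Complex.exp b = g c * Complex.exp (-h c) :=
    ⟨_, Complex.exp_log (mul_ne_zero (h0 c hc) (Complex.exp_ne_zero _))⟩
  have key : ∀ w ∈ Metric.ball c r, HasDerivAt (fun w => g w * Complex.exp (-h w)) 0 w := by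
    intro w hw
    have := (hgd w hw).mul ((hh w hw).neg.cexp)
    refine this.congr_deriv ?_
    have e : g w * (deriv g w / g w) = deriv g w := mul_div_cancel₀ _ (h0 w hw)
    change deriv g w * Complex.exp (-h w)
      + g w * (Complex.exp (-h w) * -(deriv g w / g w)) = 0
    linear_combination -Complex.exp (-h w) * e
  have hconst : ∀ w ∈ Metric.ball c r, g w * Complex.exp (-h w) = g c * Complex.exp (-h c) := by
    intro w hw
    refine Metric.isOpen_ball.is_const_of_deriv_eq_zero (convex_ball c r).isPreconnected
      (fun z hz => (key z hz).differentiableAt.differentiableWithinAt)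
      (fun z hz => (key z hz).deriv) hw hc
  refine ⟨fun w => h w + b, ?_, ?_⟩
  · exact fun w hw => ((hh w hw).differentiableAt.differentiableWithinAt).add_const _
  · intro w hw
    rw [Complex.exp_add, hb, ← hconst w hw, Complex.exp_neg]
    field_simp [Complex.exp_ne_zero]

/-- Gradient bound for `log |g|` when `g` is zero-free and bounded by one on a disc. -/
theorem log_norm_lipschitz {g : ℂ → ℂ} {c : ℂ} {r B : ℝ} (hr : 0 < r) (hB : 0 < B)
    (hg : DifferentiableOn ℂ g (Metric.ball c r)) (h0 : ∀ w ∈ Metric.ball c r, g w ≠ 0)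
    (h1 : ∀ w ∈ Metric.ball c r, ‖g w‖ ≤ 1) (hgc : Real.exp (-B) ≤ ‖g c‖)
    {y w : ℂ} (hy : ‖y - c‖ ≤ r / 4) (hw : ‖w - y‖ ≤ r / 4) :
    Real.log ‖g w‖ - Real.log ‖g y‖ ≤ 24 * B / r * ‖w - y‖ := by
  obtain ⟨h, hh, hgh⟩ := exists_log_on_ball hg h0
  have hlog : ∀ w ∈ Metric.ball c r, Real.log ‖g w‖ = (h w).re := by
    intro w hw
    rw [hgh w hw, Complex.norm_exp, Real.log_exp]
  have hnp : ∀ w ∈ Metric.ball c r, (h w).re ≤ 0 := by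
    intro w hw
    rw [← hlog w hw]
    exact Real.log_nonpos (norm_nonneg _) (h1 w hw)
  have hc : c ∈ Metric.ball c r := Metric.mem_ball_self hr
  have hcB : -B ≤ (h c).re := by
    rw [← hlog c hc, ← Real.log_exp (-B)]
    exact Real.log_le_log (Real.exp_pos _) hgc
  have BC : ∀ (z : ℂ) (s M : ℝ), 0 < s → 0 < M → Metric.ball z s ⊆ Metric.ball c r →
      -M ≤ (h z).re → ∀ v, ‖v - z‖ < s → ‖h v - h z‖ ≤ 2 * M * ‖v - z‖ / (s - ‖v - z‖) := by
    intro z s M hs hM hsub hz v hv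
    have := Complex.borelCaratheodory_zero (f := fun u => h (z + u) - h z) (M := M) (R := s)
      (z := v - z) hM ?_ ?_ hs (by simpa using hv) (by simp)
    · simpa using this
    · refine DifferentiableOn.sub_const (hh.comp (by fun_prop) ?_) _
      intro u hu
      exact hsub (by simpa using hu)
    · intro u hu
      have := hnp (z + u) (hsub (by simpa using hu))
      simp only [Set.mem_ofPred_eq, Complex.sub_re]
      linarith
  have hyr : ‖y - c‖ < r := by linarith
  have hyb : y ∈ Metric.ball c r := by simpa [dist_eq_norm] using hyr
  have hwb : w ∈ Metric.ball c r := by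
    rw [Metric.mem_ball, dist_eq_norm]
    calc ‖w - c‖ ≤ ‖w - y‖ + ‖y - c‖ := by
          simpa using norm_add_le (w - y) (y - c)
      _ < r := by linarith
  have hy3 : -(3 * B) ≤ (h y).re := by
    have h2 := BC c r B hr hB le_rfl hcB y hyr
    have h3 : 2 * B * ‖y - c‖ / (r - ‖y - c‖) ≤ 2 * B := by
      rw [div_le_iff₀ (by linarith)]
      nlinarith
    have h4 := (Complex.abs_re_le_norm (h y - h c)).trans (h2.trans h3)
    rw [Complex.sub_re] at h4
    linarith [(abs_le.mp h4).1]
  have hsub : Metric.ball y (r / 2) ⊆ Metric.ball c r := by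
    refine Metric.ball_subset_ball' ?_
    rw [dist_eq_norm]; linarith
  have h2 := BC y (r / 2) (3 * B) (by linarith) (by linarith) hsub hy3 w (by linarith)
  have h3 : 2 * (3 * B) * ‖w - y‖ / (r / 2 - ‖w - y‖) ≤ 24 * B / r * ‖w - y‖ := by
    rw [div_le_iff₀ (by linarith)]
    have : 24 * B / r * ‖w - y‖ * (r / 4) ≤ 24 * B / r * ‖w - y‖ * (r / 2 - ‖w - y‖) := by
      gcongr
      linarith
    refine le_trans (le_of_eq ?_) this
    field_simp
    ring
  rw [hlog w hwb, hlog y hyb]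
  have h4 := (Complex.abs_re_le_norm (h w - h y)).trans (h2.trans h3)
  rw [Complex.sub_re] at h4
  linarith [(abs_le.mp h4).2]

/-- Extraction of the zeros of a bounded holomorphic function in a disc: each division by a
factor `(w - z)/(3R/4)` triples the value at the centre without increasing the supremum, so at
most `n` divisions are possible. -/
theorem exists_zero_extraction {c : ℂ} {R : ℝ} (hR : 0 < R) (n : ℕ) :
    ∀ f : ℂ → ℂ, DifferentiableOn ℂ f (Metric.ball c R) →
      (∀ w ∈ Metric.ball c R, ‖f w‖ ≤ 1) → (1 / 3 : ℝ) ^ n ≤ ‖f c‖ →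
    ∃ (s : Multiset ℂ) (g : ℂ → ℂ), s.card ≤ n ∧ DifferentiableOn ℂ g (Metric.ball c R) ∧
      (∀ w ∈ Metric.ball c R, f w = (s.map fun z => (w - z) / (3 * R / 4 : ℝ)).prod * g w) ∧
      (∀ w ∈ Metric.ball c R, ‖g w‖ ≤ 1) ∧ ‖f c‖ ≤ ‖g c‖ ∧
      (∀ w ∈ Metric.ball c (R / 4), g w ≠ 0) := by
  have hc : c ∈ Metric.ball c R := Metric.mem_ball_self hR
  -- one division step
  have step : ∀ f : ℂ → ℂ, DifferentiableOn ℂ f (Metric.ball c R) →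
      (∀ w ∈ Metric.ball c R, ‖f w‖ ≤ 1) → ∀ z ∈ Metric.ball c (R / 4), f z = 0 →
      ∃ f₁ : ℂ → ℂ, DifferentiableOn ℂ f₁ (Metric.ball c R) ∧
        (∀ w ∈ Metric.ball c R, f w = (w - z) / (3 * R / 4 : ℝ) * f₁ w) ∧
        (∀ w ∈ Metric.ball c R, ‖f₁ w‖ ≤ 1) ∧ 3 * ‖f c‖ ≤ ‖f₁ c‖ := by
    intro f hf h1 z hz hfz
    have hzR : z ∈ Metric.ball c R := Metric.ball_subset_ball (by linarith) hz
    have hzn : ‖z - c‖ < R / 4 := by simpa [dist_eq_norm] using hz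
    have hQ : ((3 * R / 4 : ℝ) : ℂ) ≠ 0 := by
      exact_mod_cast (by positivity : (3 * R / 4 : ℝ) ≠ 0)
    have hd : DifferentiableOn ℂ (dslope f z) (Metric.ball c R) :=
      (Complex.differentiableOn_dslope (Metric.isOpen_ball.mem_nhds hzR)).mpr hf
    have hfac : ∀ w, f w = (w - z) * dslope f z w := by
      intro w
      have := sub_smul_dslope f z w
      rw [hfz, sub_zero, smul_eq_mul] at this
      exact this.symm
    have hdf : DifferentiableOn ℂ (fun w => ((3 * R / 4 : ℝ) : ℂ) * dslope f z w)
      (Metric.ball c R) := hd.const_mul _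
    have hnorm : ∀ w, ‖w - z‖ * ‖((3 * R / 4 : ℝ) : ℂ) * dslope f z w‖ = (3 * R / 4) * ‖f w‖ := by
      intro w
      rw [hfac w, norm_mul, norm_mul, Complex.norm_real, Real.norm_of_nonneg (by positivity)]
      ring
    refine ⟨fun w => ((3 * R / 4 : ℝ) : ℂ) * dslope f z w, hdf, ?_, ?_, ?_⟩
    · intro w _
      rw [hfac w]
      field_simp
    · intro w hw
      have hwR : ‖w - c‖ < R := by simpa [dist_eq_norm] using hw
      have bound : ∀ t, max ‖w - c‖ (R / 2) < t → t < R →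
          ‖((3 * R / 4 : ℝ) : ℂ) * dslope f z w‖ ≤ (3 * R / 4) / (t - R / 4) := by
        intro t ht htR
        have ht1 := (le_max_left _ _).trans_lt ht
        have ht2 := (le_max_right _ _).trans_lt ht
        have hcl : Metric.closedBall c t ⊆ Metric.ball c R := Metric.closedBall_subset_ball htR
        refine Complex.norm_le_of_forall_mem_frontier_norm_le (U := Metric.ball c t)
          (f := fun w => ((3 * R / 4 : ℝ) : ℂ) * dslope f z w)
          Metric.isBounded_ball ?_ ?_ ?_
        · refine DifferentiableOn.diffContOnCl_ball (U := Metric.ball c R) hdf hcl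
        · intro v hv
          rw [frontier_ball _ (by linarith)] at hv
          have hvt : ‖v - c‖ = t := by simpa [dist_eq_norm] using hv
          have h3 : t - R / 4 ≤ ‖v - z‖ := by
            have := norm_sub_norm_le (v - c) (z - c)
            rw [sub_sub_sub_cancel_right] at this
            linarith
          rw [le_div_iff₀ (by linarith)]
          have h4 := hnorm v
          have h5 := h1 v (hcl (Metric.sphere_subset_closedBall hv))
          calc _ ≤ ‖((3 * R / 4 : ℝ) : ℂ) * dslope f z v‖ * ‖v - z‖ := by gcongr
            _ = (3 * R / 4) * ‖f v‖ := by rw [mul_comm, h4]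
            _ ≤ 3 * R / 4 * 1 := by gcongr
            _ = _ := by ring
        · exact subset_closure (by simpa [dist_eq_norm] using ht1)
      have hlim : Filter.Tendsto (fun t : ℝ => (3 * R / 4) / (t - R / 4)) (nhdsWithin R (Set.Iio R))
          (nhds ((3 * R / 4) / (R - R / 4))) := by
        refine Filter.Tendsto.mono_left ?_ nhdsWithin_le_nhds
        refine (ContinuousAt.div (by fun_prop) (by fun_prop) ?_)
        linarith
      have e1 : (3 * R / 4) / (R - R / 4) = 1 := by
        rw [div_eq_one_iff_eq (by linarith)]; ring
      rw [e1] at hlim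
      refine ge_of_tendsto hlim ?_
      have : Set.Ioo (max ‖w - c‖ (R / 2)) R ∈ nhdsWithin R (Set.Iio R) :=
        Ioo_mem_nhdsLT (max_lt hwR (by linarith))
      filter_upwards [this] with t ht using bound t ht.1 ht.2
    · have h4 := hnorm c
      rw [norm_sub_rev] at h4
      have h5 : ‖z - c‖ * ‖((3 * R / 4 : ℝ) : ℂ) * dslope f z c‖ ≤
        (R / 4) * ‖((3 * R / 4 : ℝ) : ℂ) * dslope f z c‖ := by gcongr
      rw [h4] at h5
      have : R / 4 * (3 * ‖f c‖) ≤ R / 4 * ‖((3 * R / 4 : ℝ) : ℂ) * dslope f z c‖ := by linarith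
      exact le_of_mul_le_mul_left this (by positivity)
  induction n with
  | zero =>
    intro f hf h1 h2
    refine ⟨0, f, by simp, hf, by simp, h1, le_rfl, ?_⟩
    intro z hz hfz
    obtain ⟨f₁, _, _, h3, h4⟩ := step f hf h1 z hz hfz
    have := h3 c hc
    simp only [pow_zero] at h2
    linarith
  | succ n ih =>
    intro f hf h1 h2
    by_cases hz : ∀ w ∈ Metric.ball c (R / 4), f w ≠ 0
    · exact ⟨0, f, by simp, hf, by simp, h1, le_rfl, hz⟩
    push Not at hz
    obtain ⟨z, hz, hfz⟩ := hz
    obtain ⟨f₁, a1, a2, a3, a4⟩ := step f hf h1 z hz hfz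
    obtain ⟨s, g, b1, b2, b3, b4, b5, b6⟩ := ih f₁ a1 a3 (by rw [pow_succ] at h2; linarith)
    refine ⟨z ::ₘ s, g, by simpa using b1, b2, ?_, b4, ?_, b6⟩
    · intro w hw
      rw [a2 w hw, b3 w hw, Multiset.map_cons, Multiset.prod_cons, mul_assoc]
    · linarith [norm_nonneg (f c)]

/-- `∑ log ‖w - z‖ - ∑ log ‖y - z‖` over `z ∈ s` is at most `card s * ‖w - y‖ / η`, apart from the
logarithmic poles of `y` truncated at the scale `η`. -/
theorem log_norm_prod_sub_le (s : Multiset ℂ) {Q η : ℝ} (hQ : 0 < Q) (hη : 0 < η) (y w : ℂ)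
    (hy : ∀ z ∈ s, y ≠ z) (hw : ∀ z ∈ s, w ≠ z) :
    Real.log ‖(s.map fun z => (w - z) / (Q : ℂ)).prod‖
      - Real.log ‖(s.map fun z => (y - z) / (Q : ℂ)).prod‖ ≤
      s.card * (‖w - y‖ / η) + (s.map fun z => Real.posLog (η / ‖y - z‖)).sum := by
  induction s using Multiset.induction_on with
  | empty => simp
  | cons a s ih =>
    have hQ0 : (Q : ℂ) ≠ 0 := by exact_mod_cast hQ.ne'
    have ih := ih (fun z hz => hy z (Multiset.mem_cons_of_mem hz))
      (fun z hz => hw z (Multiset.mem_cons_of_mem hz))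
    have hne : ∀ v : ℂ, (∀ z ∈ a ::ₘ s, v ≠ z) →
        Real.log ‖((a ::ₘ s).map fun z => (v - z) / (Q : ℂ)).prod‖ =
          Real.log ‖v - a‖ - Real.log Q + Real.log ‖(s.map fun z => (v - z) / (Q : ℂ)).prod‖ := by
      intro v hv
      have h1 : ‖v - a‖ ≠ 0 := by
        simpa [sub_eq_zero] using hv a (Multiset.mem_cons_self a s)
      have h2 : ‖(s.map fun z => (v - z) / (Q : ℂ)).prod‖ ≠ 0 := by
        rw [norm_ne_zero_iff]
        refine Multiset.prod_ne_zero ?_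
        rw [Multiset.mem_map]
        rintro ⟨z, hz, hz0⟩
        rw [div_eq_zero_iff, sub_eq_zero] at hz0
        rcases hz0 with h | h
        · exact hv z (Multiset.mem_cons_of_mem hz) h
        · exact hQ0 h
      rw [Multiset.map_cons, Multiset.prod_cons, norm_mul, norm_div, Complex.norm_real,
        Real.norm_of_nonneg hQ.le, Real.log_mul (div_ne_zero h1 hQ.ne') h2,
        Real.log_div h1 hQ.ne']
    rw [hne w hw, hne y hy, Multiset.map_cons, Multiset.sum_cons, Multiset.card_cons]
    have hya : 0 < ‖y - a‖ := by
      simpa [sub_eq_zero] using hy a (Multiset.mem_cons_self a s)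
    have hwa : 0 < ‖w - a‖ := by
      simpa [sub_eq_zero] using hw a (Multiset.mem_cons_self a s)
    have hone : Real.log ‖w - a‖ - Real.log ‖y - a‖ ≤
        ‖w - y‖ / η + Real.posLog (η / ‖y - a‖) := by
      have h1 : ‖w - a‖ ≤ max ‖y - a‖ η * (1 + ‖w - y‖ / η) := by
        calc ‖w - a‖ ≤ ‖w - y‖ + ‖y - a‖ := by simpa using norm_add_le (w - y) (y - a)
          _ ≤ η * (‖w - y‖ / η) + ‖y - a‖ := by rw [mul_div_cancel₀ _ hη.ne']
          _ ≤ max ‖y - a‖ η * (‖w - y‖ / η) + max ‖y - a‖ η := by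
            gcongr
            · exact le_max_right _ _
            · exact le_max_left _ _
          _ = _ := by ring
      have h2 := Real.log_le_log hwa h1
      have h3 : 0 < max ‖y - a‖ η := lt_max_of_lt_right hη
      have h5 : 0 ≤ ‖w - y‖ / η := by positivity
      rw [Real.log_mul h3.ne' (by positivity)] at h2
      have h4 := Real.log_le_sub_one_of_pos (show 0 < 1 + ‖w - y‖ / η by positivity)
      have h6 : Real.log (max ‖y - a‖ η) - Real.log ‖y - a‖ ≤ Real.posLog (η / ‖y - a‖) := by
        rcases le_total ‖y - a‖ η with h | h
        · rw [max_eq_right h, ← Real.log_div hη.ne' hya.ne']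
          exact le_max_right _ _
        · rw [max_eq_left h, sub_self]
          exact Real.posLog_nonneg
      linarith
    push_cast
    linarith

/-- Near a point where `‖f‖` is not too small, `-log ‖f‖` is, up to logarithmic poles at at most
`2B` points, Lipschitz with constant `O(B/η)`. -/
theorem local_compare {c : ℂ} {R B : ℝ} (hR : 0 < R) (hB : 1 ≤ B) {f : ℂ → ℂ}
    (hf : DifferentiableOn ℂ f (Metric.ball c R)) (h1 : ∀ w ∈ Metric.ball c R, ‖f w‖ ≤ 1)
    (hfc : Real.exp (-B) ≤ ‖f c‖) :
    ∃ s : Multiset ℂ, (s.card : ℝ) ≤ 2 * B ∧ ∀ η : ℝ, 0 < η → ∀ y w : ℂ,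
      ‖y - c‖ ≤ R / 16 → ‖w - y‖ ≤ R / 16 → (∀ z ∈ s, y ≠ z) →
      f y ≠ 0 ∧ (f w ≠ 0 → -Real.log ‖f y‖ ≤ -Real.log ‖f w‖ +
        (96 * B / R + 2 * B / η) * ‖w - y‖ +
          (s.map fun z => Real.posLog (η / ‖y - z‖)).sum) := by
  have h3 : (1 / 3 : ℝ) ^ ⌈B⌉₊ ≤ ‖f c‖ := by
    refine le_trans ?_ hfc
    have e3 : (1 / 3 : ℝ) ≤ Real.exp (-1) := by
      rw [Real.exp_neg, one_div]
      exact inv_anti₀ (Real.exp_pos _) Real.exp_one_lt_three.le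
    calc (1 / 3 : ℝ) ^ ⌈B⌉₊ ≤ Real.exp (-1) ^ ⌈B⌉₊ := by gcongr
      _ = Real.exp (-(⌈B⌉₊ : ℝ)) := by rw [← Real.exp_nat_mul]; ring_nf
      _ ≤ Real.exp (-B) := Real.exp_le_exp.mpr (neg_le_neg (Nat.le_ceil B))
  obtain ⟨s, g, b1, b2, b3, b4, b5, b6⟩ := exists_zero_extraction hR ⌈B⌉₊ f hf h1 h3
  have hcard : (s.card : ℝ) ≤ 2 * B := by
    have : (s.card : ℝ) ≤ ⌈B⌉₊ := by exact_mod_cast b1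
    have := Nat.ceil_lt_add_one (show 0 ≤ B by linarith)
    linarith
  refine ⟨s, hcard, fun η hη y w hy hw hyz => ?_⟩
  have hwc : ‖w - c‖ ≤ R / 8 := by
    have : ‖w - c‖ ≤ ‖w - y‖ + ‖y - c‖ := by simpa using norm_add_le (w - y) (y - c)
    linarith
  have hyb : y ∈ Metric.ball c R := by rw [Metric.mem_ball, dist_eq_norm]; linarith
  have hwb : w ∈ Metric.ball c R := by rw [Metric.mem_ball, dist_eq_norm]; linarith
  have hyg : g y ≠ 0 := b6 y (by rw [Metric.mem_ball, dist_eq_norm]; linarith)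
  have hwg : g w ≠ 0 := b6 w (by rw [Metric.mem_ball, dist_eq_norm]; linarith)
  have hQ : 0 < 3 * R / 4 := by positivity
  have hQ0 : ((3 * R / 4 : ℝ) : ℂ) ≠ 0 := by exact_mod_cast hQ.ne'
  have hyp : (s.map fun z => (y - z) / ((3 * R / 4 : ℝ) : ℂ)).prod ≠ 0 := by
    refine Multiset.prod_ne_zero ?_
    rw [Multiset.mem_map]
    rintro ⟨z, hz, hz0⟩
    rw [div_eq_zero_iff, sub_eq_zero] at hz0
    rcases hz0 with h | h
    · exact hyz z hz h
    · exact hQ0 h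
  have ey := b3 y hyb
  have ew := b3 w hwb
  refine ⟨by rw [ey]; exact mul_ne_zero hyp hyg, fun hfw => ?_⟩
  have hwp : (s.map fun z => (w - z) / ((3 * R / 4 : ℝ) : ℂ)).prod ≠ 0 := by
    intro h; rw [ew, h, zero_mul] at hfw; exact hfw rfl
  have hwz : ∀ z ∈ s, w ≠ z := by
    intro z hz hwz
    refine hwp (Multiset.prod_eq_zero ?_)
    rw [Multiset.mem_map]
    exact ⟨z, hz, by rw [hwz, sub_self, zero_div]⟩
  rw [ey, ew, norm_mul, norm_mul, Real.log_mul (norm_ne_zero_iff.mpr hyp) (norm_ne_zero_iff.mpr hyg),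
    Real.log_mul (norm_ne_zero_iff.mpr hwp) (norm_ne_zero_iff.mpr hwg)]
  have k1 := log_norm_prod_sub_le s hQ hη y w hyz hwz
  have hsub : Metric.ball c (R / 4) ⊆ Metric.ball c R := Metric.ball_subset_ball (by linarith)
  have k2 := log_norm_lipschitz (r := R / 4) (by positivity) (by linarith : 0 < B)
    (b2.mono hsub) b6 (fun w hw => b4 w (hsub hw)) (hfc.trans b5) (y := y) (w := w)
    (by linarith) (by linarith)
  have k3 : 24 * B / (R / 4) * ‖w - y‖ = 96 * B / R * ‖w - y‖ := by
    field_simp; ring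
  have k4 : (s.card : ℝ) * (‖w - y‖ / η) ≤ 2 * B / η * ‖w - y‖ := by
    calc (s.card : ℝ) * (‖w - y‖ / η) ≤ 2 * B * (‖w - y‖ / η) := by gcongr
      _ = _ := by ring
  rw [k3] at k2
  linarith

theorem exists_norm_apply_eq {ι : Type*} [Fintype ι] (v : ι → ℂ) (hv : v ≠ 0) :
    ∃ i, ‖v i‖ = ‖v‖ := by
  by_contra hcon
  push Not at hcon
  have h1 : ∀ i, ‖v i‖ < ‖v‖ := fun i => lt_of_le_of_ne (norm_le_pi_norm v i) (hcon i)
  exact lt_irrefl _ ((pi_norm_lt_iff (norm_pos_iff.mpr hv)).mpr h1)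

/-- Vector-valued version of `local_compare`. Each component `f i` is first replaced by
`(f i ± f i₀) / 2`, with `i₀` dominant at the centre `c` and the sign chosen to make the value at `c`
large; this changes the maximum norm by a factor at most `3`. -/
theorem local_compare_vec {ι : Type*} [Fintype ι] {c : ℂ} {R B : ℝ} (hR : 0 < R) (hB : 1 ≤ B)
    {f : ℂ → ι → ℂ}
    (hf : DifferentiableOn ℂ f (Metric.ball c R)) (h1 : ∀ w ∈ Metric.ball c R, ‖f w‖ ≤ 1)
    (hfc : Real.exp (-B) ≤ ‖f c‖) :
    ∃ s : Multiset ℂ, (s.card : ℝ) ≤ Fintype.card ι * (4 * B) ∧ ∀ η : ℝ, 0 < η → ∀ y w : ℂ,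
      ‖y - c‖ ≤ R / 16 → ‖w - y‖ ≤ R / 16 → (∀ z ∈ s, y ≠ z) →
      f y ≠ 0 ∧ (f w ≠ 0 → -Real.log ‖f y‖ ≤ -Real.log ‖f w‖ + 2 +
        (192 * B / R + 4 * B / η) * ‖w - y‖ +
          (s.map fun z => Real.posLog (η / ‖y - z‖)).sum) := by
  have hfc0 : f c ≠ 0 := by
    intro h
    rw [h, norm_zero] at hfc
    exact absurd hfc (not_le.mpr (Real.exp_pos _))
  obtain ⟨i₀, hi₀⟩ := exists_norm_apply_eq _ hfc0
  have hpos : 0 < ‖f c i₀‖ := by rw [hi₀]; exact norm_pos_iff.mpr hfc0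
  have ht : ∀ i, ∃ t : ℂ, (t = 1 ∨ t = -1) ∧ ‖f c i₀‖ ≤ ‖f c i + t * f c i₀‖ := by
    intro i
    by_cases h : ‖f c i₀‖ ≤ ‖f c i + 1 * f c i₀‖
    · exact ⟨1, Or.inl rfl, h⟩
    · refine ⟨-1, Or.inr rfl, ?_⟩
      push Not at h
      have h2 : (2 : ℂ) * f c i₀ = (f c i + 1 * f c i₀) - (f c i + -1 * f c i₀) := by ring
      have h3 := norm_sub_le (f c i + 1 * f c i₀) (f c i + -1 * f c i₀)
      rw [← h2, norm_mul, Complex.norm_ofNat] at h3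
      linarith
  choose t ht0 ht2 using ht
  have ht1 : ∀ i, ‖t i‖ = 1 := by
    intro i
    rcases ht0 i with h | h <;> simp [h]
  set g : ι → ℂ → ℂ := fun i z => (f z i + t i * f z i₀) / 2 with hg
  have hcomp : ∀ i, DifferentiableOn ℂ (fun z => f z i) (Metric.ball c R) := fun i =>
    differentiableOn_pi.mp hf i
  have hgd : ∀ i, DifferentiableOn ℂ (g i) (Metric.ball c R) := fun i =>
    ((hcomp i).add ((hcomp i₀).const_mul _)).div_const _
  have hgle : ∀ i z, ‖g i z‖ ≤ ‖f z‖ := by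
    intro i z
    have h2 := norm_add_le (f z i) (t i * f z i₀)
    rw [norm_mul, ht1, one_mul] at h2
    have h3 := norm_le_pi_norm (f z) i
    have h4 := norm_le_pi_norm (f z) i₀
    rw [hg]
    simp only [norm_div, Complex.norm_ofNat]
    linarith
  have hfg : ∀ i z, ‖f z i‖ ≤ 2 * ‖g i z‖ + ‖f z i₀‖ := by
    intro i z
    have h2 : f z i = 2 * g i z - t i * f z i₀ := by rw [hg]; ring
    have h3 := norm_sub_le (2 * g i z) (t i * f z i₀)
    rw [← h2, norm_mul, norm_mul, ht1, one_mul, Complex.norm_ofNat] at h3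
    exact h3
  have hg0 : ∀ z, ‖f z i₀‖ ≤ ‖g i₀ z‖ := by
    intro z
    -- the value `t = -1` is excluded at `i₀`, as it would give zero at the centre
    have h2 : ‖(1 : ℂ) + t i₀‖ = 2 := by
      rcases ht0 i₀ with h | h
      · rw [h]; norm_num
      · have h4 := ht2 i₀
        rw [h, neg_one_mul, add_neg_cancel, norm_zero] at h4
        linarith
    have h3 : g i₀ z = (1 + t i₀) * f z i₀ / 2 := by rw [hg]; ring
    rw [h3, norm_div, norm_mul, h2, Complex.norm_ofNat]
    linarith
  have hgc : ∀ i, Real.exp (-(2 * B)) ≤ ‖g i c‖ := by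
    intro i
    have h2 : ‖g i c‖ = ‖f c i + t i * f c i₀‖ / 2 := by
      rw [hg]; simp only [norm_div, Complex.norm_ofNat]
    rw [h2]
    have h3 : Real.exp (-(2 * B)) ≤ Real.exp (-B) / 2 := by
      have e1 : Real.exp (-(2 * B)) = Real.exp (-B) * Real.exp (-B) := by
        rw [← Real.exp_add]; congr 1; ring
      have e2 : Real.exp (-B) ≤ 1 / 2 := by
        calc Real.exp (-B) ≤ Real.exp (-1) := Real.exp_le_exp.mpr (by linarith)
          _ ≤ 1 / 2 := by
            rw [Real.exp_neg, one_div]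
            exact inv_anti₀ two_pos (by linarith [Real.add_one_le_exp 1])
      rw [e1]
      have := mul_le_mul_of_nonneg_left e2 (Real.exp_pos (-B)).le
      linarith
    have h4 := ht2 i
    rw [hi₀] at h4
    linarith
  have hs := fun i => local_compare hR (by linarith : 1 ≤ 2 * B) (hgd i)
    (fun w hw => (hgle i w).trans (h1 w hw)) (hgc i)
  choose s hs1 hs2 using hs
  refine ⟨∑ i, s i, ?_, ?_⟩
  · rw [Multiset.card_sum]
    push_cast
    calc ∑ i, ((s i).card : ℝ) ≤ ∑ _i : ι, 2 * (2 * B) := Finset.sum_le_sum fun i _ => hs1 i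
      _ = _ := by
        rw [Finset.sum_const, Finset.card_univ, nsmul_eq_mul]; ring
  intro η hη y w hy hw hz
  have hle : ∀ i, s i ≤ ∑ i, s i := fun i =>
    Finset.single_le_sum (f := s) (fun _ _ => zero_le) (Finset.mem_univ i)
  have hzi : ∀ i, ∀ z ∈ s i, y ≠ z := fun i z h => hz z (Multiset.mem_of_le (hle i) h)
  have hne : ∀ _i : ι, f y ≠ 0 := by
    intro i h
    have h2 := hgle i y
    rw [h, norm_zero] at h2
    exact (hs2 i η hη y w hy hw (hzi i)).1 (norm_le_zero_iff.mp h2)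
  refine ⟨hne i₀, fun hfw => ?_⟩
  have hfwp : 0 < ‖f w‖ := norm_pos_iff.mpr hfw
  obtain ⟨i₁, hi₁⟩ : ∃ i, ‖f w‖ / 3 ≤ ‖g i w‖ := by
    obtain ⟨i, hi⟩ := exists_norm_apply_eq _ hfw
    by_contra hcon
    push Not at hcon
    have a1 := hcon i
    have a2 := hcon i₀
    have a3 := hfg i w
    have a4 := hg0 w
    linarith
  have hgw : g i₁ w ≠ 0 := by
    intro h
    rw [h, norm_zero] at hi₁
    linarith
  obtain ⟨k1, k2⟩ := hs2 i₁ η hη y w hy hw (hzi i₁)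
  have k2 := k2 hgw
  have k3 : Real.log ‖g i₁ y‖ ≤ Real.log ‖f y‖ :=
    Real.log_le_log (norm_pos_iff.mpr k1) (hgle i₁ y)
  have k4 : Real.log ‖f w‖ - 2 ≤ Real.log ‖g i₁ w‖ := by
    have a1 := Real.log_le_log (by positivity) hi₁
    rw [Real.log_div hfwp.ne' (by norm_num)] at a1
    have a2 : Real.log 3 ≤ 2 := by
      have := Real.log_le_sub_one_of_pos (show (0 : ℝ) < 3 by norm_num)
      linarith
    linarith
  have k5 : ((s i₁).map fun z => Real.posLog (η / ‖y - z‖)).sum ≤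
      ((∑ i, s i).map fun z => Real.posLog (η / ‖y - z‖)).sum := by
    obtain ⟨u, hu⟩ := Multiset.le_iff_exists_add.mp (hle i₁)
    rw [hu, Multiset.map_add, Multiset.sum_add]
    refine le_add_of_nonneg_right (Multiset.sum_nonneg ?_)
    intro a ha
    obtain ⟨z, _, rfl⟩ := Multiset.mem_map.mp ha
    exact Real.posLog_nonneg
  have k6 : (96 * (2 * B) / R + 2 * (2 * B) / η) = (192 * B / R + 4 * B / η) := by ring
  rw [k6] at k2
  linarith

/-! ### Comparison on the circle -/

/-- `-log t` for `t ∈ [0,1]`, with the value `∞` at `t = 0`. -/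
def negLog (t : ℝ) : ENNReal := if t = 0 then ⊤ else ENNReal.ofReal (-Real.log t)

theorem negLog_of_ne {t : ℝ} (ht : t ≠ 0) : negLog t = ENNReal.ofReal (-Real.log t) := if_neg ht

theorem measurable_negLog : Measurable negLog :=
  Measurable.ite (measurableSet_singleton 0) measurable_const
    (Real.measurable_log.neg.ennreal_ofReal)

theorem ne_zero_of_negLog_le {t b : ℝ} (h : negLog t ≤ ENNReal.ofReal b) : t ≠ 0 := by
  rintro rfl
  simp [negLog] at h

theorem exp_le_of_negLog_le {t b : ℝ} (ht : 0 ≤ t) (hb : 0 ≤ b)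
    (h : negLog t ≤ ENNReal.ofReal b) : Real.exp (-b) ≤ t := by
  have h0 := ne_zero_of_negLog_le h
  rw [negLog_of_ne h0, ENNReal.ofReal_le_ofReal_iff hb] at h
  rw [← Real.le_log_iff_exp_le (lt_of_le_of_ne ht (Ne.symm h0))]
  linarith

theorem distInt_sub_int (t : ℝ) (m : ℤ) : distInt (t - m) = distInt t := by
  unfold distInt
  rw [round_sub_intCast]
  push_cast
  congr 1
  ring

theorem distInt_nonneg (t : ℝ) : 0 ≤ distInt t := abs_nonneg _

theorem distInt_le_abs (t : ℝ) : distInt t ≤ |t| := by simpa using distInt_le t 0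

/-- A vector-valued holomorphic function on the strip `|Im z| < ρ`, periodic with period one and
bounded by one in the maximum norm. -/
structure StripFun {ι : Type*} [Fintype ι] (ρ : ℝ) (f : ℂ → ι → ℂ) : Prop where
  diff : DifferentiableOn ℂ f {z : ℂ | |z.im| < ρ}
  per : ∀ z, f (z + 1) = f z
  le_one : ∀ z : ℂ, |z.im| < ρ → ‖f z‖ ≤ 1

theorem StripFun.periodic {ι : Type*} [Fintype ι] {ρ : ℝ} {f : ℂ → ι → ℂ} (h : StripFun ρ f) (y : ℝ) (m : ℤ) :
    f ((y - m : ℝ) : ℂ) = f (y : ℂ) := by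
  have : Function.Periodic f 1 := h.per
  have := this.sub_int_mul_eq (x := (y : ℂ)) m
  push_cast
  simpa using this

theorem StripFun.continuous_real {ι : Type*} [Fintype ι] {ρ : ℝ} (hρ : 0 < ρ) {f : ℂ → ι → ℂ}
    (h : StripFun ρ f) :
    Continuous fun x : ℝ => f (x : ℂ) := by
  have h1 := h.diff.continuousOn
  exact h1.comp_continuous Complex.continuous_ofReal (fun x => by simpa using hρ)

/-- Global comparison: up to logarithmic poles at `O(B)` points of the circle,
`-log ‖f‖` is Lipschitz on the circle with constant `O(B/η)`. -/
theorem global_compare {ι : Type*} [Fintype ι] {ρ : ℝ} (hρ : 0 < ρ) :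
    ∃ C r₀ : ℝ, 1 ≤ C ∧ 0 < r₀ ∧ ∀ (f : ℂ → ι → ℂ) (B : ℝ), StripFun ρ f → 1 ≤ B →
      ∫⁻ x in Set.Ioc (0 : ℝ) 1, negLog ‖f (x : ℂ)‖ ≤ ENNReal.ofReal B →
      ∃ Z : Multiset ℝ, (Z.card : ℝ) ≤ C * B ∧ ∀ η : ℝ, 0 < η → η ≤ 1 → ∀ y w : ℝ,
        |w - y| ≤ r₀ → (∀ z ∈ Z, distInt (y - z) ≠ 0) →
        negLog ‖f (y : ℂ)‖ ≤ negLog ‖f (w : ℂ)‖ + ENNReal.ofReal (C * B / η * |w - y| + 2) +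
          ENNReal.ofReal (Z.map fun z => Real.posLog (η / distInt (y - z))).sum := by
  set R := min ρ 1 with hRdef
  have hR : 0 < R := lt_min hρ one_pos
  have hR1 : R ≤ 1 := min_le_right _ _
  obtain ⟨J, hJ⟩ := exists_nat_ge (16 / R)
  have hJ16 : (16 : ℝ) ≤ J := le_trans (by rw [le_div_iff₀ hR]; linarith) hJ
  have hJ0 : (0 : ℝ) < J := by linarith
  have hJR : 1 / (J : ℝ) ≤ R / 16 := by
    rw [div_le_iff₀ hR] at hJ
    rw [div_le_div_iff₀ hJ0 (by norm_num)]
    linarith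
  refine ⟨8 * (Fintype.card ι + 1) * J * J + 384 * J / R + 8 * J, R / 16, ?_, by positivity, ?_⟩
  · have a1 : 0 ≤ 384 * J / R := by positivity
    have a2 : (0 : ℝ) ≤ 8 * (Fintype.card ι + 1) * J * J := by positivity
    linarith
  intro f B hf hB hfint
  have hB0 : 0 < B := by linarith
  -- a good base point in each cell
  have hx : ∀ i ∈ Finset.range J, ∃ x : ℝ, (i : ℝ) / J < x ∧ x ≤ (i + 1) / J ∧
      negLog ‖f (x : ℂ)‖ ≤ ENNReal.ofReal (2 * J * B) := by
    intro i hi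
    by_contra hcon
    push Not at hcon
    have hi' : (i : ℝ) + 1 ≤ J := by exact_mod_cast Finset.mem_range.mp hi
    have hsub : Set.Ioc ((i : ℝ) / J) ((i + 1) / J) ⊆ Set.Ioc 0 1 := by
      intro x hx
      refine ⟨lt_of_le_of_lt (by positivity) hx.1, hx.2.trans ?_⟩
      rw [div_le_one hJ0]; exact hi'
    have h1 : ENNReal.ofReal (2 * B) ≤ ∫⁻ x in Set.Ioc (0 : ℝ) 1, negLog ‖f (x : ℂ)‖ := by
      calc ENNReal.ofReal (2 * B) = ENNReal.ofReal (2 * J * B) *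
            volume (Set.Ioc ((i : ℝ) / J) ((i + 1) / J)) := by
            rw [Real.volume_Ioc, ← ENNReal.ofReal_mul (by positivity)]
            congr 1
            field_simp
            ring
        _ = ∫⁻ x in Set.Ioc ((i : ℝ) / J) ((i + 1) / J), ENNReal.ofReal (2 * J * B) := by
            rw [setLIntegral_const]
        _ ≤ ∫⁻ x in Set.Ioc ((i : ℝ) / J) ((i + 1) / J), negLog ‖f (x : ℂ)‖ :=
            setLIntegral_mono' measurableSet_Ioc (fun x hx => (hcon x hx.1 hx.2).le)
        _ ≤ _ := lintegral_mono_set hsub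
    have h2 := h1.trans hfint
    rw [ENNReal.ofReal_le_ofReal_iff hB0.le] at h2
    linarith
  choose! xi hx1 hx2 hx3 using hx
  have hJB : 1 ≤ 2 * J * B := by nlinarith
  have hs : ∀ i ∈ Finset.range J, ∃ s : Multiset ℂ, (s.card : ℝ) ≤ Fintype.card ι * (4 * (2 * J * B)) ∧
      ∀ η : ℝ, 0 < η → ∀ y w : ℂ,
      ‖y - xi i‖ ≤ R / 16 → ‖w - y‖ ≤ R / 16 → (∀ z ∈ s, y ≠ z) →
      f y ≠ 0 ∧ (f w ≠ 0 → -Real.log ‖f y‖ ≤ -Real.log ‖f w‖ + 2 +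
        (192 * (2 * J * B) / R + 4 * (2 * J * B) / η) * ‖w - y‖ +
          (s.map fun z => Real.posLog (η / ‖y - z‖)).sum) := by
    intro i hi
    have hball : Metric.ball (xi i : ℂ) R ⊆ {z : ℂ | |z.im| < ρ} := by
      intro z hz
      have h1 : |(z - xi i).im| ≤ ‖z - xi i‖ := Complex.abs_im_le_norm _
      rw [Metric.mem_ball, dist_eq_norm] at hz
      have h2 : (z - xi i).im = z.im := by simp
      rw [h2] at h1
      exact lt_of_le_of_lt h1 (hz.trans_le (min_le_left _ _))
    exact local_compare_vec hR hJB (hf.diff.mono hball) (fun w hw => hf.le_one w (hball hw))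
      (exp_le_of_negLog_le (norm_nonneg _) (by linarith) (hx3 i hi))
  choose! s hs1 hs2 using hs
  refine ⟨∑ i ∈ Finset.range J, (s i).map Complex.re, ?_, ?_⟩
  · rw [Multiset.card_sum]
    push_cast
    calc ∑ i ∈ Finset.range J, (((s i).map Complex.re).card : ℝ)
        ≤ ∑ i ∈ Finset.range J, (Fintype.card ι : ℝ) * (4 * (2 * J * B)) := by
          refine Finset.sum_le_sum fun i hi => ?_
          rw [Multiset.card_map]
          exact hs1 i hi
      _ = 8 * Fintype.card ι * J * J * B := by
          rw [Finset.sum_const, Finset.card_range, nsmul_eq_mul]; ring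
      _ ≤ _ := by
          gcongr
          have a1 : 0 ≤ 384 * J / R := by positivity
          have a2 : (0 : ℝ) ≤ 8 * J * J := by positivity
          linarith
  intro η hη hη1 y w hyw hZ
  set m := ⌊y⌋ with hm
  set i := ⌊(y - m) * J⌋₊ with hi
  have hy0 : 0 ≤ y - m := sub_nonneg.mpr (Int.floor_le y)
  have hy1 : y - m < 1 := by linarith [Int.lt_floor_add_one y]
  have hi1 : (i : ℝ) ≤ (y - m) * J := Nat.floor_le (by positivity)
  have hi2 : (y - m) * J < i + 1 := Nat.lt_floor_add_one _
  have hiJ : i ∈ Finset.range J := by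
    rw [Finset.mem_range]
    have : (i : ℝ) < J := lt_of_le_of_lt hi1 (by nlinarith)
    exact_mod_cast this
  have hle : (s i).map Complex.re ≤ ∑ i ∈ Finset.range J, (s i).map Complex.re :=
    Finset.single_le_sum (f := fun i => (s i).map Complex.re) (fun _ _ => zero_le) hiJ
  have hdist : |y - m - xi i| ≤ R / 16 := by
    refine le_trans ?_ hJR
    have a1 := hx1 i hiJ
    have a2 := hx2 i hiJ
    have a3 : (i : ℝ) / J ≤ y - m := by rw [div_le_iff₀ hJ0]; exact hi1
    have a4 : y - m ≤ (i + 1) / J := by rw [le_div_iff₀ hJ0]; exact hi2.le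
    have a5 : ((i : ℝ) + 1) / J = i / J + 1 / J := by ring
    rw [abs_le]
    constructor <;> linarith
  have hdz : ∀ z ∈ s i, distInt (y - z.re) ≠ 0 := fun z hz =>
    hZ z.re (Multiset.mem_of_le hle (Multiset.mem_map_of_mem _ hz))
  have hdz2 : ∀ z : ℂ, distInt (y - z.re) ≤ ‖((y - m : ℝ) : ℂ) - z‖ := by
    intro z
    have h1 := Complex.abs_re_le_norm (((y - m : ℝ) : ℂ) - z)
    rw [Complex.sub_re, Complex.ofReal_re] at h1
    refine le_trans ?_ h1
    have h2 := distInt_le (y - z.re) m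
    rwa [show y - z.re - m = y - m - z.re by ring] at h2
  have main := hs2 i hiJ η hη ((y - m : ℝ) : ℂ) ((w - m : ℝ) : ℂ) (by
      rw [← Complex.ofReal_sub, Complex.norm_real]; exact hdist) (by
      rw [← Complex.ofReal_sub, Complex.norm_real, sub_sub_sub_cancel_right]; exact hyw) (by
      intro z hz h
      have h1 := hdz2 z
      rw [h, sub_self, norm_zero] at h1
      exact hdz z hz (le_antisymm h1 (distInt_nonneg _)))
  rw [hf.periodic, hf.periodic] at main
  by_cases hw : f (w : ℂ) = 0
  · simp [hw, negLog]
  have key := main.2 hw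
  rw [← Complex.ofReal_sub, Complex.norm_real, sub_sub_sub_cancel_right, Real.norm_eq_abs] at key
  have hsum0 : ∀ t : Multiset ℝ, 0 ≤ (t.map fun z => Real.posLog (η / distInt (y - z))).sum := by
    intro t
    refine Multiset.sum_nonneg ?_
    intro a ha
    obtain ⟨z, _, rfl⟩ := Multiset.mem_map.mp ha
    exact Real.posLog_nonneg
  have hsum : ((s i).map fun z => Real.posLog (η / ‖((y - m : ℝ) : ℂ) - z‖)).sum ≤
      ((∑ i ∈ Finset.range J, (s i).map Complex.re).map
        fun z => Real.posLog (η / distInt (y - z))).sum := by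
    obtain ⟨t, ht⟩ := Multiset.le_iff_exists_add.mp hle
    rw [ht, Multiset.map_add, Multiset.sum_add, Multiset.map_map]
    refine le_trans ?_ (le_add_of_nonneg_right (hsum0 t))
    refine Multiset.sum_map_le_sum_map _ _ ?_
    intro z hz
    refine Real.posLog_le_posLog (by positivity) ?_
    exact div_le_div_of_nonneg_left hη.le
      (lt_of_le_of_ne (distInt_nonneg _) (Ne.symm (hdz z hz))) (hdz2 z)
  have hC : 192 * (2 * J * B) / R + 4 * (2 * J * B) / η ≤
      (8 * (Fintype.card ι + 1) * J * J + 384 * J / R + 8 * J) * B / η := by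
    have e1 : 192 * (2 * J * B) / R ≤ 384 * J / R * B / η := by
      rw [le_div_iff₀ hη]
      calc 192 * (2 * J * B) / R * η ≤ 192 * (2 * J * B) / R * 1 := by gcongr
        _ = _ := by ring
    have e2 : 0 ≤ 8 * (Fintype.card ι + 1) * J * J * B / η := by positivity
    have e3 : (8 * (Fintype.card ι + 1) * J * J + 384 * J / R + 8 * J) * B / η =
      8 * (Fintype.card ι + 1) * J * J * B / η + 384 * J / R * B / η + 4 * (2 * J * B) / η := by
      ring
    rw [e3]; linarith
  rw [negLog_of_ne (norm_ne_zero_iff.mpr main.1), negLog_of_ne (norm_ne_zero_iff.mpr hw)]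
  have hw1 : 0 ≤ -Real.log ‖f (w : ℂ)‖ := by
    rw [neg_nonneg]
    exact Real.log_nonpos (norm_nonneg _) (hf.le_one _ (by simpa using hρ))
  have hL : 0 ≤ (8 * (Fintype.card ι + 1) * J * J + 384 * J / R + 8 * J) * B / η * |w - y| + 2 := by
    positivity
  rw [← ENNReal.ofReal_add hw1 hL, ← ENNReal.ofReal_add (by positivity) (hsum0 _)]
  refine ENNReal.ofReal_le_ofReal (key.trans ?_)
  have hC2 := mul_le_mul_of_nonneg_right hC (abs_nonneg (w - y))
  linarith

/-! ### Large deviations for periodic holomorphic functions -/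

/-- Half of the exponential rate absorbs any polynomial factor. -/
theorem eventually_poly_exp_le (D s : ℝ) (hs : 0 < s) (k : ℕ) :
    ∀ᶠ n : ℕ in Filter.atTop, D * (n : ℝ) ^ k * Real.exp (-s * n) ≤ Real.exp (-(s / 2) * n) := by
  have h1 := (Real.tendsto_pow_mul_exp_neg_atTop_nhds_zero k).comp
    ((tendsto_natCast_atTop_atTop (R := ℝ)).const_mul_atTop (show 0 < s / 2 by positivity))
  have h2 := h1.const_mul (|D| / (s / 2) ^ k)
  rw [mul_zero] at h2
  filter_upwards [h2.eventually_le_const (zero_lt_one)] with n hn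
  have e1 : Real.exp (-s * n) = Real.exp (-(s / 2 * n)) * Real.exp (-(s / 2) * n) := by
    rw [← Real.exp_add]; congr 1; ring
  rw [e1, ← mul_assoc]
  refine mul_le_of_le_one_left (Real.exp_pos _).le (le_trans ?_ hn)
  simp only [Function.comp]
  have : |D| / (s / 2) ^ k * ((s / 2 * n) ^ k * Real.exp (-(s / 2 * n))) =
      |D| * (n : ℝ) ^ k * Real.exp (-(s / 2 * n)) := by
    rw [mul_pow]; field_simp
  rw [this]
  gcongr
  exact le_abs_self D

/-- The points of the circle at distance less than `r` from `t` have measure `O(r)`. -/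
theorem volume_distInt_lt_le (t r : ℝ) :
    volume {x : ℝ | x ∈ Set.Ioc (0 : ℝ) 1 ∧ distInt (x - t) < r} ≤ ENNReal.ofReal (6 * r) := by
  rcases le_or_gt (1 / 2) r with hr | hr
  · calc _ ≤ volume (Set.Ioc (0 : ℝ) 1) := measure_mono fun x hx => hx.1
      _ ≤ _ := by
        rw [Real.volume_Ioc]
        exact ENNReal.ofReal_le_ofReal (by linarith)
  set a := ⌊-t⌋ with ha
  have ha1 : (a : ℝ) ≤ -t := Int.floor_le _
  have ha2 : -t < a + 1 := Int.lt_floor_add_one _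
  have hsub : {x : ℝ | x ∈ Set.Ioc (0 : ℝ) 1 ∧ distInt (x - t) < r} ⊆
      ⋃ j ∈ Finset.range 3, Set.Ioo (t + a + (j : ℕ) - r) (t + a + (j : ℕ) + r) := by
    rintro x ⟨⟨hx0, hx1⟩, hx⟩
    unfold distInt at hx
    set m := round (x - t) with hm
    have h1 := abs_lt.mp hx
    have h2 : a ≤ m := by
      have : (a : ℝ) < m + 1 := by linarith
      have : a < m + 1 := by exact_mod_cast this
      omega
    have h3 : m < a + 3 := by
      have : (m : ℝ) < a + 3 := by linarith
      exact_mod_cast this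
    obtain ⟨j, hj⟩ := Int.eq_ofNat_of_zero_le (sub_nonneg.mpr h2)
    have hjm : (m : ℝ) = a + j := by
      have : m = a + j := by linarith
      exact_mod_cast this
    simp only [Set.mem_iUnion]
    refine ⟨j, Finset.mem_range.mpr (by omega), ?_⟩
    rw [hjm] at h1
    constructor <;> linarith
  calc _ ≤ volume (⋃ j ∈ Finset.range 3, Set.Ioo (t + a + (j : ℕ) - r) (t + a + (j : ℕ) + r)) :=
        measure_mono hsub
    _ ≤ ∑ j ∈ Finset.range 3, volume (Set.Ioo (t + a + (j : ℕ) - r) (t + a + (j : ℕ) + r)) :=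
        measure_biUnion_finset_le _ _
    _ = ∑ j ∈ Finset.range 3, ENNReal.ofReal (2 * r) := by
        refine Finset.sum_congr rfl fun j _ => ?_
        rw [Real.volume_Ioo]
        congr 1
        ring
    _ = _ := by
        rw [Finset.sum_const, Finset.card_range, nsmul_eq_mul,
          show (6 : ℝ) * r = 3 * (2 * r) by ring, ENNReal.ofReal_mul (by norm_num)]
        norm_num

theorem sum_multiset_map_le {Z : Multiset ℝ} {K : ℕ} {F : ℕ → ℝ → ℝ} {M : ℝ}
    (h : ∀ z ∈ Z, ∑ k ∈ Finset.range K, F k z ≤ M) :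
    ∑ k ∈ Finset.range K, (Z.map (F k)).sum ≤ Z.card * M := by
  induction Z using Multiset.induction_on with
  | empty => simp
  | cons a Z ih =>
    simp only [Multiset.map_cons, Multiset.sum_cons, Multiset.card_cons, Finset.sum_add_distrib]
    have h1 := h a (Multiset.mem_cons_self a Z)
    have h2 := ih fun z hz => h z (Multiset.mem_cons_of_mem hz)
    push_cast
    linarith

set_option maxHeartbeats 1000000 in
/-- Large deviation estimate: off an exponentially small set, the Birkhoff sums of `-log ‖f‖`
along an orbit of length `≈ τ n` do not much exceed their mean. All constants are uniform in
`f`. -/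
theorem stripFun_ldt {ι : Type*} [Fintype ι] {ρ ω c B₀ τ δ : ℝ} (hρ : 0 < ρ) (hc : 0 < c)
    (hdio : ∀ q : ℕ, 1 ≤ q → ∀ k : ℤ, c / (q : ℝ) ^ 2 ≤ |(q : ℝ) * ω - k|)
    (hB₀ : 1 ≤ B₀) (hτ : 0 < τ) (hτ1 : τ ≤ 1) (hδ : 0 < δ) (hδ1 : δ ≤ 1) :
    ∃ c' > (0 : ℝ), ∃ n₀ : ℕ, ∀ n ≥ n₀, ∀ (f : ℂ → ι → ℂ) (b : ℝ), StripFun ρ f → 0 ≤ b →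
      b ≤ B₀ * n → ∫⁻ x in Set.Ioc (0 : ℝ) 1, negLog ‖f (x : ℂ)‖ ≤ ENNReal.ofReal b →
      volume {x : ℝ | x ∈ Set.Ioc (0 : ℝ) 1 ∧ ENNReal.ofReal (⌈τ * n⌉₊ * (b + δ * n)) <
        ∑ k ∈ Finset.range ⌈τ * n⌉₊, negLog ‖f ((x + k * ω : ℝ) : ℂ)‖} ≤
          ENNReal.ofReal (Real.exp (-c' * n)) := by
  obtain ⟨C, r₀, hC, hr₀, hcomp⟩ := global_compare (ι := ι) hρ
  have hCB : 0 < C * B₀ := by nlinarith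
  set S := 4 * Real.sqrt (2 / c) with hS
  have hS0 : 0 ≤ S := by positivity
  -- `η` truncates the logarithmic poles: it is small enough that each of the `O(B₀ n)` poles is seen
  -- with frequency `O(√η)` and all of them together contribute less than `δ n / 4`
  obtain ⟨η, hη, hη1, hηS⟩ : ∃ η : ℝ, 0 < η ∧ η ≤ 1 ∧ C * B₀ * (S * Real.sqrt η) ≤ δ / 4 := by
    set u := δ / (4 * (C * B₀ * S + 1)) with hu
    have hu0 : 0 < u := by positivity
    refine ⟨min 1 (u ^ 2), by positivity, min_le_left _ _, ?_⟩
    have h1 : Real.sqrt (min 1 (u ^ 2)) ≤ u := by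
      calc _ ≤ Real.sqrt (u ^ 2) := Real.sqrt_le_sqrt (min_le_right _ _)
        _ = u := Real.sqrt_sq hu0.le
    calc C * B₀ * (S * Real.sqrt (min 1 (u ^ 2))) ≤ C * B₀ * (S * u) := by gcongr
      _ ≤ (C * B₀ * S + 1) * u := by nlinarith
      _ = δ / 4 := by rw [hu]; field_simp
  -- choice of the block length
  obtain ⟨N, hN⟩ := exists_nat_ge (max (2 / r₀) (16 * C * B₀ / (η * δ)))
  obtain ⟨p, q, hNq, hq1, hpq, hα⟩ := exists_good_denominator hc hdio N
  have hq0 : (0 : ℝ) < q := by exact_mod_cast hq1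
  have hNq' : (N : ℝ) ≤ q := by exact_mod_cast hNq
  have hqr : 2 / (q : ℝ) ≤ r₀ := by
    have := ((le_max_left _ _).trans hN).trans hNq'
    rw [div_le_iff₀ hr₀] at this
    rw [div_le_iff₀ hq0]; linarith
  have hqL : C * B₀ / η * (2 / q) ≤ δ / 8 := by
    have := ((le_max_right _ _).trans hN).trans hNq'
    rw [div_le_iff₀ (by positivity)] at this
    rw [div_mul_div_comm, div_le_div_iff₀ (by positivity) (by norm_num)]
    nlinarith
  set σ := δ / (4 * (C * B₀)) with hσ
  have hσ0 : 0 < σ := by positivity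
  set s := σ * τ * Real.log 2 with hsdef
  have hs0 : 0 < s := by have := Real.log_pos (one_lt_two); positivity
  obtain ⟨n₁, hn₁⟩ := Filter.eventually_atTop.mp (eventually_poly_exp_le (24 * (C * B₀)) s hs0 2)
  obtain ⟨n₂, hn₂⟩ := exists_nat_ge (max (4 * q * (B₀ + 1) / (δ * τ)) (16 / δ))
  refine ⟨s / 2, by positivity, max (max n₁ n₂) 1, ?_⟩
  intro n hn f b hf hb hbB hfint
  have hn1 : n₁ ≤ n := le_trans (le_trans (le_max_left _ _) (le_max_left _ _)) hn
  have hn2 : n₂ ≤ n := le_trans (le_trans (le_max_right _ _) (le_max_left _ _)) hn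
  have hn3 : 1 ≤ n := le_trans (le_max_right _ _) hn
  have hnR : (1 : ℝ) ≤ n := by exact_mod_cast hn3
  set K := ⌈τ * n⌉₊ with hK
  have hKτ : τ * n ≤ K := Nat.le_ceil _
  have hK2 : (K : ℝ) ≤ 2 * n := by
    have := Nat.ceil_lt_add_one (show 0 ≤ τ * n by positivity)
    nlinarith
  have hKq : q * ((B₀ + 1) * n) ≤ K * (δ * n / 4) := by
    have h1 : (n₂ : ℝ) ≤ n := by exact_mod_cast hn2
    have h2 := ((le_max_left _ _).trans hn₂).trans h1
    rw [div_le_iff₀ (by positivity)] at h2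
    have h3 : q * (B₀ + 1) ≤ K * (δ / 4) := by nlinarith
    calc q * ((B₀ + 1) * n) = (q * (B₀ + 1)) * n := by ring
      _ ≤ (K * (δ / 4)) * n := by gcongr
      _ = _ := by ring
  set B := B₀ * n with hB
  have hB1 : 1 ≤ B := by nlinarith
  obtain ⟨Z, hZ, hcmp⟩ := hcomp f B hf hB1 (hfint.trans (ENNReal.ofReal_le_ofReal hbB))
  have hcmp := hcmp η hη hη1
  set I := ⌊σ * K⌋₊ with hI
  set r := η * (1 / 2) ^ I with hr
  have hr0 : 0 < r := by positivity
  -- outside the bad set the estimate holds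
  have hgood : ∀ x : ℝ, (∀ z ∈ Z, ∀ k < K, r ≤ distInt (x + k * ω - z)) →
      ∑ k ∈ Finset.range K, negLog ‖f ((x + k * ω : ℝ) : ℂ)‖ ≤
        ENNReal.ofReal (K * (b + δ * n)) := by
    intro x hx
    set L := C * B / η * (2 / q) + 2 with hL
    have hL0 : 0 ≤ L := by positivity
    have hLn : L ≤ δ * n / 4 := by
      have h1 : (n₂ : ℝ) ≤ n := by exact_mod_cast hn2
      have h2 := ((le_max_right _ _).trans hn₂).trans h1
      rw [div_le_iff₀ hδ] at h2
      have h3 : C * B / η * (2 / q) ≤ (δ / 8) * n := by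
        calc C * B / η * (2 / q) = (C * B₀ / η * (2 / q)) * n := by rw [hB]; ring
          _ ≤ (δ / 8) * n := by gcongr
      rw [hL]
      linarith
    set G : ℝ → ENNReal := fun y => ⨅ w : {w : ℝ // |y - w| ≤ 2 / (q : ℝ)},
      (negLog ‖f ((w : ℝ) : ℂ)‖ + ENNReal.ofReal L) with hG
    set H : ℝ → ENNReal := fun y => negLog ‖f (y : ℂ)‖ + ENNReal.ofReal L with hH
    have hper : ∀ y : ℝ, f ((y + 1 : ℝ) : ℂ) = f (y : ℂ) := by
      intro y; push_cast; exact hf.per _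
    have h1 := sum_orbit_le hq1 hpq hα G H (fun y => by simp only [hH, hper])
      (fun y y' hyy => iInf_le_of_le ⟨y', hyy⟩ le_rfl) x K
    have hHint : ∫⁻ t in Set.Ioc (0 : ℝ) 1, H t ≤ ENNReal.ofReal (b + δ * n / 4) := by
      rw [hH, lintegral_add_right _ measurable_const, setLIntegral_const, Real.volume_Ioc]
      rw [ENNReal.ofReal_add hb (by positivity)]
      refine add_le_add hfint ?_
      simpa using ENNReal.ofReal_le_ofReal hLn
    have h2 : ∑ k ∈ Finset.range K, G (x + k * ω) ≤
        ENNReal.ofReal (K * (b + δ * n / 2)) := by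
      refine (h1.trans (mul_le_mul_right hHint _)).trans ?_
      rw [← ENNReal.ofReal_natCast K, ← ENNReal.ofReal_natCast q,
        ← ENNReal.ofReal_add (by positivity) (by positivity),
        ← ENNReal.ofReal_mul (by positivity)]
      refine ENNReal.ofReal_le_ofReal ?_
      have h3 : q * (b + δ * n / 4) ≤ q * ((B₀ + 1) * n) := by
        gcongr
        nlinarith
      linarith
    have h3 : ∀ k ∈ Finset.range K, negLog ‖f ((x + k * ω : ℝ) : ℂ)‖ ≤ G (x + k * ω) +
        ENNReal.ofReal (Z.map fun z => Real.posLog (η / distInt (x + k * ω - z))).sum := by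
      intro k hk
      rw [hG, ENNReal.iInf_add]
      refine le_iInf ?_
      rintro ⟨w, hw⟩
      rw [abs_sub_comm] at hw
      refine (hcmp (x + k * ω) w (hw.trans hqr) ?_).trans ?_
      · intro z hz
        exact (hr0.trans_le (hx z hz k (Finset.mem_range.mp hk))).ne'
      · refine add_le_add (add_le_add le_rfl ?_) le_rfl
        refine ENNReal.ofReal_le_ofReal ?_
        rw [hL]
        gcongr
    have hnn : ∀ k : ℕ, 0 ≤ (Z.map fun z => Real.posLog (η / distInt (x + k * ω - z))).sum := by
      intro k
      refine Multiset.sum_nonneg ?_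
      intro a ha
      obtain ⟨z, _, rfl⟩ := Multiset.mem_map.mp ha
      exact Real.posLog_nonneg
    have h4 : ∑ k ∈ Finset.range K,
        (Z.map fun z => Real.posLog (η / distInt (x + k * ω - z))).sum ≤ K * (δ * n / 2) := by
      have h5 : ∀ z ∈ Z, ∑ k ∈ Finset.range K, Real.posLog (η / distInt (x + k * ω - z)) ≤
          I + K * (S * Real.sqrt η) := by
        intro z hz
        have := sum_posLog_orbit_le hc hdio (x - z) η hη K I (by
          intro k hk
          have := hx z hz k hk
          rwa [show x - z + k * ω = x + k * ω - z by ring])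
        simpa only [show ∀ k : ℕ, x - z + k * ω = x + k * ω - z by intro k; ring] using this
      refine (sum_multiset_map_le (F := fun k z => Real.posLog (η / distInt (x + k * ω - z)))
        h5).trans ?_
      have hI1 : (I : ℝ) ≤ σ * K := Nat.floor_le (by positivity)
      calc (Z.card : ℝ) * (I + K * (S * Real.sqrt η))
          ≤ (C * B) * (σ * K + K * (S * Real.sqrt η)) := by gcongr
        _ = K * n * (C * B₀ * σ + C * B₀ * (S * Real.sqrt η)) := by rw [hB]; ring
        _ ≤ K * n * (δ / 4 + δ / 4) := by
          gcongr
          rw [hσ]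
          apply le_of_eq
          field_simp
        _ = _ := by ring
    calc _ ≤ ∑ k ∈ Finset.range K, (G (x + k * ω) + ENNReal.ofReal
          (Z.map fun z => Real.posLog (η / distInt (x + k * ω - z))).sum) :=
          Finset.sum_le_sum h3
      _ = ∑ k ∈ Finset.range K, G (x + k * ω) + ENNReal.ofReal (∑ k ∈ Finset.range K,
          (Z.map fun z => Real.posLog (η / distInt (x + k * ω - z))).sum) := by
          rw [Finset.sum_add_distrib, ENNReal.ofReal_sum_of_nonneg fun k _ => hnn k]
      _ ≤ ENNReal.ofReal (K * (b + δ * n / 2)) + ENNReal.ofReal (K * (δ * n / 2)) :=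
          add_le_add h2 (ENNReal.ofReal_le_ofReal h4)
      _ = _ := by
          rw [← ENNReal.ofReal_add (by positivity) (by positivity)]
          congr 1
          ring
  -- measure of the bad set
  have hsub : {x : ℝ | x ∈ Set.Ioc (0 : ℝ) 1 ∧ ENNReal.ofReal (K * (b + δ * n)) <
        ∑ k ∈ Finset.range K, negLog ‖f ((x + k * ω : ℝ) : ℂ)‖} ⊆
      ⋃ z ∈ Z.toFinset, ⋃ k ∈ Finset.range K,
        {x : ℝ | x ∈ Set.Ioc (0 : ℝ) 1 ∧ distInt (x - (z - k * ω)) < r} := by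
    rintro x ⟨hx, hlt⟩
    by_contra hcon
    refine absurd hlt (not_lt.mpr (hgood x ?_))
    intro z hz k hk
    by_contra hlt'
    push Not at hlt'
    refine hcon ?_
    simp only [Set.mem_iUnion]
    refine ⟨z, Multiset.mem_toFinset.mpr hz, k, Finset.mem_range.mpr hk, hx, ?_⟩
    rwa [show x - (z - k * ω) = x + k * ω - z by ring]
  calc _ ≤ volume (⋃ z ∈ Z.toFinset, ⋃ k ∈ Finset.range K,
        {x : ℝ | x ∈ Set.Ioc (0 : ℝ) 1 ∧ distInt (x - (z - k * ω)) < r}) := measure_mono hsub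
    _ ≤ ∑ z ∈ Z.toFinset, volume (⋃ k ∈ Finset.range K,
        {x : ℝ | x ∈ Set.Ioc (0 : ℝ) 1 ∧ distInt (x - (z - k * ω)) < r}) :=
        measure_biUnion_finset_le _ _
    _ ≤ ∑ z ∈ Z.toFinset, ∑ k ∈ Finset.range K, ENNReal.ofReal (6 * r) := by
        refine Finset.sum_le_sum fun z _ => (measure_biUnion_finset_le _ _).trans ?_
        exact Finset.sum_le_sum fun k _ => volume_distInt_lt_le _ _
    _ = ENNReal.ofReal (Z.toFinset.card * (K * (6 * r))) := by
        simp only [Finset.sum_const, Finset.card_range, nsmul_eq_mul]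
        rw [ENNReal.ofReal_mul (p := (Z.toFinset.card : ℝ)) (by positivity),
          ENNReal.ofReal_mul (p := (K : ℝ)) (by positivity),
          ENNReal.ofReal_natCast, ENNReal.ofReal_natCast]
    _ ≤ _ := by
        refine ENNReal.ofReal_le_ofReal (le_trans ?_ (hn₁ n hn1))
        have hcard : (Z.toFinset.card : ℝ) ≤ C * B := by
          refine le_trans ?_ hZ
          exact_mod_cast Multiset.toFinset_card_le Z
        have hrexp : r ≤ 2 * Real.exp (-s * n) := by
          have hI2 : σ * K < I + 1 := Nat.lt_floor_add_one _
          have h1 : (1 / 2 : ℝ) ^ I = Real.exp (-(I * Real.log 2)) := by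
            rw [Real.exp_neg, Real.exp_nat_mul, Real.exp_log two_pos, one_div, inv_pow]
          have h2 : s * n ≤ (I + 1) * Real.log 2 := by
            rw [hsdef]
            have := Real.log_pos (one_lt_two)
            have h3 : σ * τ * n ≤ I + 1 := by
              calc σ * τ * n = σ * (τ * n) := by ring
                _ ≤ σ * K := by gcongr
                _ ≤ I + 1 := hI2.le
            calc σ * τ * Real.log 2 * n = (σ * τ * n) * Real.log 2 := by ring
              _ ≤ _ := by gcongr
          calc r ≤ 1 * (1 / 2) ^ I := by rw [hr]; gcongr
            _ = Real.exp (-(I * Real.log 2)) := by rw [one_mul, h1]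
            _ ≤ Real.exp (Real.log 2 + -s * n) := by
              refine Real.exp_le_exp.mpr ?_
              linarith
            _ = _ := by rw [Real.exp_add, Real.exp_log two_pos]
        calc (Z.toFinset.card : ℝ) * (K * (6 * r))
            ≤ (C * B) * ((2 * n) * (6 * (2 * Real.exp (-s * n)))) := by gcongr
          _ = _ := by rw [hB]; ring

/-! ### Lower large deviation estimate for the cocycle -/

section
variable {K : Type*} [RCLike K] {d : ℕ} {ε : Type*} [MetricSpace ε] [CompactSpace ε]
variable {A : ℝ → ε → Matrix (Fin d) (Fin d) K} {ω : ℝ}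

/-- `rcToComplex` as a ring homomorphism. -/
def rcHom (K : Type*) [RCLike K] : K →+* ℂ where
  toFun := rcToComplex
  map_one' := by apply Complex.ext <;> simp [rcToComplex]
  map_zero' := by apply Complex.ext <;> simp [rcToComplex]
  map_add' x y := by apply Complex.ext <;> simp [rcToComplex]
  map_mul' x y := by apply Complex.ext <;> simp [rcToComplex]

theorem compound_map_rcHom (p : ℕ) (M : Matrix (Fin d) (Fin d) K) (s t) :
    compound p (M.map (rcHom K)) s t = rcHom K (compound p M s t) := by
  unfold compound
  rw [RingHom.map_det]
  rfl

/-- The holomorphic extension of the cocycle products. -/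
def cocycleExt (F : ℂ → ε → Matrix (Fin d) (Fin d) ℂ) (ω : ℝ) : ℕ → ℂ → ε → Matrix (Fin d) (Fin d) ℂ
  | 0, _, _ => 1
  | n + 1, z, e => F (z + (((n + 1 : ℕ) * ω : ℝ) : ℂ)) e * cocycleExt F ω n z e

/-- For each `n` and `e`, the entries of `Λ^p A^{(n)}` are, after normalization by `exp (-C n)`, the
boundary values of a holomorphic vector function on a fixed strip. -/
theorem CocycleHyp.exists_stripFun (H : CocycleHyp A ω) {p : ℕ} (hp : p ≤ d) :
    ∃ ρ > (0 : ℝ), ∃ C : ℝ, 1 ≤ C ∧ ∃ D : ℝ, 0 ≤ D ∧ ∀ n e,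
      ∃ f : ℂ → ({s : Finset (Fin d) // s.card = p} × {s : Finset (Fin d) // s.card = p}) → ℂ,
        StripFun ρ f ∧ ∀ x : ℝ, f (x : ℂ) ≠ 0 ∧
          C * n - phi A ω p n x e ≤ -Real.log ‖f (x : ℂ)‖ ∧
          -Real.log ‖f (x : ℂ)‖ ≤ C * n - phi A ω p n x e + D := by
  have hne := nonempty_subsets hp
  obtain ⟨ρ, hρ, F, hFd, hFp, hFA, M, hM⟩ := H.anal
  set N : ℝ := (Fintype.card {s : Finset (Fin d) // s.card = p} : ℝ) with hN
  have hN1 : 1 ≤ N := by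
    rw [hN]; exact_mod_cast Fintype.card_pos
  set B : ℝ := max (N ^ 2 * (p.factorial * M ^ p)) (Real.exp 1) with hB
  have hB0 : 0 < B := lt_of_lt_of_le (Real.exp_pos 1) (le_max_right _ _)
  have hlogB : 1 ≤ Real.log B := by
    rw [Real.le_log_iff_exp_le hB0]; exact le_max_right _ _
  have hFB : ∀ z : ℂ, |z.im| < ρ → ∀ e, matOpNorm (compound p (F z e)) ≤ B := by
    intro z hz e
    refine (matOpNorm_compound_le p _).trans (le_trans ?_ (le_max_left _ _))
    have := hM z hz e
    have h0 := matOpNorm_nonneg (F z e)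
    gcongr
  have him : ∀ (z : ℂ) (t : ℝ), |z.im| < ρ → |(z + (t : ℂ)).im| < ρ := by
    intro z t h; simpa using h
  have hGd : ∀ n e i j, DifferentiableOn ℂ (fun z => cocycleExt F ω n z e i j)
      {z : ℂ | |z.im| < ρ} := by
    intro n e
    induction n with
    | zero =>
      intro i j
      simp only [cocycleExt]
      exact differentiableOn_const _
    | succ n ih =>
      intro i j
      simp only [cocycleExt, Matrix.mul_apply]
      refine DifferentiableOn.fun_sum fun k _ => DifferentiableOn.mul ?_ (ih k j)
      exact (hFd e i k).comp ((differentiable_id.add_const _).differentiableOn)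
        (fun z hz => him z _ hz)
  have hGp : ∀ n z e, cocycleExt F ω n (z + 1) e = cocycleExt F ω n z e := by
    intro n z e
    induction n with
    | zero => rfl
    | succ n ih =>
      simp only [cocycleExt]
      rw [ih, add_right_comm, hFp]
  have hGA : ∀ n (x : ℝ) e, cocycleExt F ω n (x : ℂ) e = (cocycle A ω n x e).map (rcHom K) := by
    intro n x e
    induction n with
    | zero =>
      rw [cocycle_zero, Matrix.map_one _ (map_zero _) (map_one _)]; rfl
    | succ n ih =>
      rw [cocycle_succ, Matrix.map_mul, ← ih]
      simp only [cocycleExt]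
      rw [← Complex.ofReal_add, hFA]
      rfl
  have hGB : ∀ n (z : ℂ) e, |z.im| < ρ → matOpNorm (compound p (cocycleExt F ω n z e)) ≤ B ^ n := by
    intro n z e hz
    induction n with
    | zero => simp [cocycleExt, compound_one, matOpNorm_one]
    | succ n ih =>
      simp only [cocycleExt]
      rw [compound_mul, pow_succ']
      exact (matOpNorm_mul_le _ _).trans
        (mul_le_mul (hFB _ (him z _ hz) e) ih (matOpNorm_nonneg _) hB0.le)
  refine ⟨ρ, hρ, Real.log B, hlogB, Real.log (N ^ 2), Real.log_nonneg (by nlinarith), fun n e => ?_⟩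
  have hexp : Real.exp (Real.log B * n) = B ^ n := by
    rw [mul_comm, Real.exp_nat_mul, Real.exp_log hB0]
  have hBn : (0 : ℝ) < B ^ n := pow_pos hB0 n
  refine ⟨fun z st => ((B ^ n : ℝ) : ℂ)⁻¹ * compound p (cocycleExt F ω n z e) st.1 st.2, ⟨?_, ?_, ?_⟩, ?_⟩
  · refine differentiableOn_pi.mpr fun st => DifferentiableOn.const_mul ?_ _
    unfold compound
    simp only [Matrix.det_apply]
    refine DifferentiableOn.fun_sum fun σ _ => DifferentiableOn.const_smul ?_ _
    refine DifferentiableOn.fun_finsetProd fun i _ => ?_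
    exact hGd n e _ _
  · intro z
    simp only [hGp]
  · intro z hz
    refine (pi_norm_le_iff_of_nonneg zero_le_one).mpr fun st => ?_
    rw [norm_mul, norm_inv, Complex.norm_real, Real.norm_of_nonneg hBn.le, inv_mul_le_iff₀ hBn,
      mul_one]
    exact (norm_entry_le_matOpNorm _ _ _).trans (hGB n z e hz)
  · intro x
    set Q := matOpNorm (compound p (cocycle A ω n x e)) with hQ
    have hQ0 : 0 < Q := H.norm_pos hp n x e
    set v : ({s : Finset (Fin d) // s.card = p} × {s : Finset (Fin d) // s.card = p}) → ℂ :=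
      fun st => ((B ^ n : ℝ) : ℂ)⁻¹ * compound p (cocycleExt F ω n (x : ℂ) e) st.1 st.2 with hv
    have hvst : ∀ st, ‖v st‖ = (B ^ n)⁻¹ * ‖compound p (cocycle A ω n x e) st.1 st.2‖ := by
      intro st
      rw [hv]
      simp only
      rw [norm_mul, norm_inv, Complex.norm_real, Real.norm_of_nonneg hBn.le, hGA,
        compound_map_rcHom]
      congr 1
      exact norm_rcToComplex _
    have h1 : ‖v‖ ≤ (B ^ n)⁻¹ * Q := by
      refine (pi_norm_le_iff_of_nonneg (by positivity)).mpr fun st => ?_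
      rw [hvst]
      gcongr
      exact norm_entry_le_matOpNorm _ _ _
    have h2 : (B ^ n)⁻¹ * Q ≤ N ^ 2 * ‖v‖ := by
      calc (B ^ n)⁻¹ * Q ≤ (B ^ n)⁻¹ * ∑ s, ∑ t, ‖compound p (cocycle A ω n x e) s t‖ := by
            gcongr; exact matOpNorm_le_sum _
        _ = ∑ s, ∑ t, ‖v (s, t)‖ := by
            rw [Finset.mul_sum]
            refine Finset.sum_congr rfl fun s _ => ?_
            rw [Finset.mul_sum]
            exact Finset.sum_congr rfl fun t _ => (hvst (s, t)).symm
        _ ≤ ∑ _s : {s : Finset (Fin d) // s.card = p}, ∑ _t : {s : Finset (Fin d) // s.card = p}, ‖v‖ :=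
            Finset.sum_le_sum fun s _ => Finset.sum_le_sum fun t _ => norm_le_pi_norm v (s, t)
        _ = N ^ 2 * ‖v‖ := by
            simp only [Finset.sum_const, Finset.card_univ, nsmul_eq_mul]; rw [hN]; ring
    have hv0 : 0 < ‖v‖ := by
      have : 0 < (B ^ n)⁻¹ * Q := by positivity
      by_contra hcon
      have h3 : ‖v‖ = 0 := le_antisymm (not_lt.mp hcon) (norm_nonneg _)
      rw [h3, mul_zero] at h2
      linarith
    have hl : Real.log ((B ^ n)⁻¹ * Q) = -(Real.log B * n) + phi A ω p n x e := by
      rw [Real.log_mul (by positivity) hQ0.ne', Real.log_inv, Real.log_pow, mul_comm (n : ℝ)]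
      rfl
    have k1 := Real.log_le_log hv0 h1
    have k2 := Real.log_le_log (by positivity) h2
    rw [Real.log_mul (by positivity) hv0.ne'] at k2
    refine ⟨norm_pos_iff.mp hv0, ?_, ?_⟩ <;> linarith

set_option maxHeartbeats 1000000 in
/-- Lower large deviation estimate: `log ‖Λ^p A^{(n)}_x‖` falls below its mean by `δ n` only on an
exponentially small set, uniformly in the parameter. -/
theorem CocycleHyp.lower_ldt (H : CocycleHyp A ω) {p : ℕ} (hp : p ≤ d) {δ : ℝ} (hδ : 0 < δ) :
    ∃ c > (0 : ℝ), ∃ n₀ : ℕ, ∀ n ≥ n₀, ∀ e,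
      volume {x : ℝ | x ∈ Set.Ioc (0 : ℝ) 1 ∧ phi A ω p n x e < phiInt A ω p n e - δ * n} ≤
        ENNReal.ofReal (Real.exp (-c * n)) := by
  obtain ⟨ρ, hρ, C, hC1, D, hD, hf⟩ := H.exists_stripFun hp
  obtain ⟨C', hC'1, hg1, hg2, -⟩ := H.exists_growth
  obtain ⟨c, hc, hdio⟩ := H.dio
  -- along the first `τ n` points of an orbit `phi` varies by at most `δ n / 4`
  set τ : ℝ := min 1 (δ / (4 * C')) with hτdef
  have hτ : 0 < τ := lt_min one_pos (by positivity)
  have hτ1 : τ ≤ 1 := min_le_left _ _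
  have hτC : C' * τ ≤ δ / 4 := by
    have : τ ≤ δ / (4 * C') := min_le_right _ _
    calc C' * τ ≤ C' * (δ / (4 * C')) := by gcongr
      _ = δ / 4 := by field_simp
  obtain ⟨c', hc', n₀, hn₀⟩ := stripFun_ldt
    (ι := {s : Finset (Fin d) // s.card = p} × {s : Finset (Fin d) // s.card = p})
    (B₀ := C + C' + D) (δ := min 1 (δ / 4)) hρ hc hdio
    (by linarith) hτ hτ1 (lt_min one_pos (by positivity)) (min_le_left _ _)
  obtain ⟨n₁, hn₁⟩ := exists_nat_gt (4 * (D + C') / δ)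
  refine ⟨c', hc', max (max n₀ n₁) 1, fun n hn e => ?_⟩
  have hnn₀ : n₀ ≤ n := (le_max_left _ _).trans ((le_max_left _ _).trans hn)
  have hnn₁ : (n₁ : ℝ) ≤ n := by exact_mod_cast (le_max_right _ _).trans ((le_max_left _ _).trans hn)
  have hn1 : (1 : ℝ) ≤ n := by exact_mod_cast (le_max_right _ _).trans hn
  have hDC : D + C' ≤ δ / 4 * n := by
    have : 4 * (D + C') / δ ≤ n := hn₁.le.trans hnn₁
    rw [div_le_iff₀ hδ] at this
    linarith
  obtain ⟨f, hfS, hfx⟩ := hf n e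
  set b : ℝ := C * n - phiInt A ω p n e + D with hb
  have hlog0 : ∀ x : ℝ, 0 ≤ -Real.log ‖f (x : ℂ)‖ := by
    intro x
    have := Real.log_nonpos (norm_nonneg (f (x : ℂ))) (hfS.le_one _ (by simpa using hρ))
    linarith
  have hgi : IntervalIntegrable (fun x => C * n - phi A ω p n x e + D) volume 0 1 :=
    (intervalIntegrable_const.sub (H.intervalIntegrable_phi hp n e 0 1)).add intervalIntegrable_const
  have hbint : ∫ x in (0 : ℝ)..1, (C * n - phi A ω p n x e + D) = b := by
    rw [intervalIntegral.integral_add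
      (intervalIntegrable_const.sub (H.intervalIntegrable_phi hp n e 0 1)) intervalIntegrable_const,
      intervalIntegral.integral_sub intervalIntegrable_const (H.intervalIntegrable_phi hp n e 0 1)]
    simp [hb, phiInt]
  have hg0 : ∀ x, 0 ≤ C * n - phi A ω p n x e + D := fun x => (hlog0 x).trans (hfx x).2.2
  have hb0 : 0 ≤ b := by
    rw [← hbint]
    exact intervalIntegral.integral_nonneg zero_le_one fun x _ => hg0 x
  have hbB : b ≤ (C + C' + D) * n := by
    have h := (abs_le.mp (abs_phiInt_le hp hg1 n e)).1
    have : D ≤ D * n := le_mul_of_one_le_right hD hn1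
    rw [hb]; linarith
  have hfint : ∫⁻ x in Set.Ioc (0 : ℝ) 1, negLog ‖f (x : ℂ)‖ ≤ ENNReal.ofReal b := by
    rw [← hbint, intervalIntegral.integral_of_le zero_le_one,
      ofReal_integral_eq_lintegral_ofReal
        ((intervalIntegrable_iff_integrableOn_Ioc_of_le zero_le_one).mp hgi)
        (Filter.Eventually.of_forall hg0)]
    refine lintegral_mono fun x => ?_
    rw [negLog_of_ne (norm_ne_zero_iff.mpr (hfx x).1)]
    exact ENNReal.ofReal_le_ofReal (hfx x).2.2
  refine (measure_mono ?_).trans (hn₀ n hnn₀ f b hfS hb0 hbB hfint)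
  rintro x ⟨hx, hlt⟩
  refine ⟨hx, ?_⟩
  by_contra hcon
  push Not at hcon
  set k₀ := ⌈τ * n⌉₊ with hk₀
  have hτn : 0 < τ * n := by positivity
  have hk₀pos : (0 : ℝ) < k₀ := by exact_mod_cast Nat.ceil_pos.mpr hτn
  have hk₀le : (k₀ : ℝ) ≤ τ * n + 1 := (Nat.ceil_lt_add_one hτn.le).le
  have h1 : ∑ k ∈ Finset.range k₀, negLog ‖f ((x + k * ω : ℝ) : ℂ)‖ =
      ENNReal.ofReal (∑ k ∈ Finset.range k₀, -Real.log ‖f ((x + k * ω : ℝ) : ℂ)‖) := by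
    rw [ENNReal.ofReal_sum_of_nonneg fun k _ => hlog0 _]
    exact Finset.sum_congr rfl fun k _ => negLog_of_ne (norm_ne_zero_iff.mpr (hfx _).1)
  have hmin : (0 : ℝ) < min 1 (δ / 4) := lt_min one_pos (by positivity)
  rw [h1, ENNReal.ofReal_le_ofReal_iff (by positivity)] at hcon
  -- by almost invariance, a small value of `phi` at `x` persists along the orbit, which contradicts
  -- the bound on the orbit sum
  have h2 : ∑ k ∈ Finset.range k₀, (C * n - phi A ω p n x e - C' * k₀) ≤
      ∑ k ∈ Finset.range k₀, -Real.log ‖f ((x + k * ω : ℝ) : ℂ)‖ := by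
    refine Finset.sum_le_sum fun k hk => ?_
    have a1 := (hfx (x + k * ω)).2.1
    have a2 := (abs_le.mp (hg2 p hp n k x e)).2
    have a3 : C' * (k : ℝ) ≤ C' * k₀ := by
      have : (k : ℝ) ≤ k₀ := by exact_mod_cast (Finset.mem_range.mp hk).le
      gcongr
    linarith
  rw [Finset.sum_const, Finset.card_range, nsmul_eq_mul] at h2
  have h3 := le_of_mul_le_mul_left (h2.trans hcon) hk₀pos
  have h4 : min 1 (δ / 4) * (n : ℝ) ≤ δ / 4 * n := by
    gcongr; exact min_le_right _ _
  have h5 : C' * (k₀ : ℝ) ≤ δ / 4 * n + C' := by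
    calc C' * (k₀ : ℝ) ≤ C' * (τ * n + 1) := by gcongr
      _ = C' * τ * n + C' := by ring
      _ ≤ _ := by gcongr
  have h6 : 0 < δ * n := by positivity
  rw [hb] at h3
  linarith

end

/-! ### The integrated three-block estimate -/

section
/-- The integral over the torus of the indicator of a shifted sublevel set. -/
theorem integral_sublevel_shift_le {g : ℝ → ℝ} (hg : Continuous g) (hper : ∀ x, g (x + 1) = g x)
    {s u : ℝ} (hu : 0 ≤ u) (hvol : volume {x : ℝ | x ∈ Set.Ioc (0 : ℝ) 1 ∧ g x < s} ≤ ENNReal.ofReal u)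
    (t : ℝ) :
    IntervalIntegrable (fun x => Set.indicator {x | g x < s} (fun _ => (1 : ℝ)) (x + t)) volume 0 1 ∧
    ∫ x in (0 : ℝ)..1, Set.indicator {x | g x < s} (fun _ => (1 : ℝ)) (x + t) ≤ u := by
  have hmeas : MeasurableSet {x | g x < s} := (isOpen_lt hg continuous_const).measurableSet
  have hm : Measurable (Set.indicator {x | g x < s} (fun _ => (1 : ℝ))) :=
    measurable_const.indicator hmeas
  constructor
  · rw [intervalIntegrable_iff_integrableOn_Ioc_of_le zero_le_one]
    refine Measure.integrableOn_of_bounded (M := 1) (by simp)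
      (hm.comp (measurable_id.add_const t)).aestronglyMeasurable ?_
    refine Filter.Eventually.of_forall fun x => ?_
    simp only [Set.indicator]
    split_ifs <;> simp
  · have h1 := integral_shift_of_periodic (f := Set.indicator {x | g x < s} (fun _ => (1 : ℝ)))
      (fun x => by simp only [Set.indicator, Set.mem_ofPred_eq, hper]) t
    rw [h1, intervalIntegral.integral_of_le zero_le_one, integral_indicator hmeas,
      Measure.restrict_restrict hmeas]
    simp only [integral_const, smul_eq_mul, mul_one, measureReal_def, Measure.restrict_apply_univ]
    refine ENNReal.toReal_le_of_le_ofReal hu (le_trans (measure_mono ?_) hvol)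
    rintro x ⟨h2, h3⟩
    exact ⟨h3, h2⟩

variable {K : Type*} [RCLike K] {d : ℕ} {ε : Type*} [MetricSpace ε] [CompactSpace ε]
variable {A : ℝ → ε → Matrix (Fin d) (Fin d) K} {ω : ℝ}

theorem CocycleHyp.exp_phi (H : CocycleHyp A ω) {p : ℕ} (hp : p ≤ d) (n : ℕ) (x : ℝ) (e : ε) :
    matOpNorm (compound p (cocycle A ω n x e)) = Real.exp (phi A ω p n x e) :=
  (Real.exp_log (H.norm_pos hp n x e)).symm

set_option maxHeartbeats 1000000 in
/-- Pointwise form of the three-block estimate, for phases where the three relevant norms are not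
atypically small. -/
theorem CocycleHyp.three_block_pointwise (H : CocycleHyp A ω) {p : ℕ} (hp1 : 1 ≤ p) (hpd : p < d)
    {κ : ℝ} (hκ : 0 < κ) {e : ε} {Λ : ℕ → ℝ} {n a : ℕ} (ha2 : a ≤ 2 * n)
    (hn : Real.exp (-(κ / 2) * n) ≤ 1 / 12)
    (hup : ∀ q m : ℕ, q ≤ p + 1 → n ≤ m ∨ m = a → ∀ x, phi A ω q m x e ≤ m * (Λ q + κ / 100))
    (hΛ : κ ≤ 2 * Λ p - Λ (p - 1) - Λ (p + 1)) {x : ℝ}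
    (h1 : n * (Λ p - 6 * (κ / 100)) ≤ phi A ω p n (x + n * ω) e)
    (h2 : ((a + n : ℕ) : ℝ) * (Λ p - 6 * (κ / 100)) ≤ phi A ω p (a + n) (x + n * ω) e)
    (h3 : ((n + n : ℕ) : ℝ) * (Λ p - 6 * (κ / 100)) ≤ phi A ω p (n + n) x e) :
    |phi A ω p (a + (n + n)) x e + phi A ω p n (x + n * ω) e - phi A ω p (a + n) (x + n * ω) e
      - phi A ω p (n + n) x e| ≤ 12 * Real.exp (-(κ / 2) * n) := by
  set X := cocycle A ω a (x + n * ω + n * ω) e with hX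
  set B := cocycle A ω n (x + n * ω) e with hB
  set Y := cocycle A ω n x e with hY
  have eXB : cocycle A ω (a + n) (x + n * ω) e = X * B := by rw [cocycle_add]
  have eBY : cocycle A ω (n + n) x e = B * Y := by rw [cocycle_add]
  have eXBY : cocycle A ω (a + (n + n)) x e = X * B * Y := by
    rw [cocycle_add, eBY, Matrix.mul_assoc]
    congr 2
    push_cast; ring
  have hpd' := hpd.le
  have hn0 : (0 : ℝ) ≤ n := n.cast_nonneg
  have ha2' : (a : ℝ) ≤ 2 * n := by exact_mod_cast ha2
  set r := Real.exp (-(86 / 100 * κ) * n) with hr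
  set g := Real.exp (-(35 / 100 * κ) * n) with hg
  have hrg : r / g ≤ Real.exp (-(κ / 2) * n) := by
    rw [hr, hg, ← Real.exp_sub]
    apply Real.exp_le_exp.mpr
    nlinarith [mul_nonneg hκ.le hn0]
  have key := three_block_log X B Y p hp1 hpd (H.norm_pos hpd' n _ e)
    (by rw [← eXB]; exact H.norm_pos hpd' _ _ e) (by rw [← eBY]; exact H.norm_pos hpd' _ _ e)
    (by rw [← eXBY]; exact H.norm_pos hpd' _ _ e) r g
    (Real.exp_le_one_iff.mpr (by nlinarith [mul_nonneg hκ.le hn0])) (Real.exp_pos _) ?_ ?_ ?_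
  · rw [← eXBY, ← eXB, ← eBY] at key
    refine key.trans ?_
    calc 12 * r / g = 12 * (r / g) := by ring
      _ ≤ _ := by gcongr
  · rw [hB, H.exp_phi (by omega), H.exp_phi (by omega), H.exp_phi hpd', ← Real.exp_add,
      ← Real.exp_nat_mul, ← Real.exp_add]
    apply Real.exp_le_exp.mpr
    have u1 := hup (p - 1) n (by omega) (Or.inl le_rfl) (x + n * ω)
    have u2 := hup (p + 1) n (by omega) (Or.inl le_rfl) (x + n * ω)
    have u3 := mul_le_mul_of_nonneg_left hΛ hn0
    push_cast
    nlinarith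
  · rw [← eXB, ← eBY, hX, hB, hY, H.exp_phi hpd', H.exp_phi hpd', H.exp_phi hpd', H.exp_phi hpd',
      H.exp_phi hpd', ← Real.exp_nat_mul, ← Real.exp_add, ← Real.exp_add, ← Real.exp_add,
      ← Real.exp_add]
    apply Real.exp_le_exp.mpr
    have u1 := hup p n (by omega) (Or.inl le_rfl) (x + n * ω)
    have u2 := hup p n (by omega) (Or.inl le_rfl) x
    have u3 := hup p a (by omega) (Or.inr rfl) (x + n * ω + n * ω)
    have u4 := mul_le_mul_of_nonneg_left ha2' hκ.le
    push_cast at h2 h3 ⊢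
    nlinarith
  · have : 6 * r / g = 6 * (r / g) := by ring
    rw [this]; linarith

set_option maxHeartbeats 1000000 in
/-- Integrated three-block estimate. The reference values `Λ q` play the role of the exact exponents;
allowing them to differ from those makes the estimate applicable to nearby parameters. -/
theorem CocycleHyp.three_block (H : CocycleHyp A ω) {p : ℕ} (hp1 : 1 ≤ p) (hpd : p < d)
    {κ : ℝ} (hκ : 0 < κ) :
    ∃ c > (0 : ℝ), ∃ n₀ : ℕ, ∀ n ≥ n₀, ∀ (e : ε) (Λ : ℕ → ℝ) (a : ℕ), n ≤ a → a ≤ 2 * n →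
      (∀ q m : ℕ, q ≤ p + 1 → n ≤ m → ∀ x, phi A ω q m x e ≤ m * (Λ q + κ / 100)) →
      κ ≤ 2 * Λ p - Λ (p - 1) - Λ (p + 1) →
      n * (Λ p - 5 * (κ / 100)) ≤ phiInt A ω p n e →
      ((a + n : ℕ) : ℝ) * (Λ p - 5 * (κ / 100)) ≤ phiInt A ω p (a + n) e →
      ((n + n : ℕ) : ℝ) * (Λ p - 5 * (κ / 100)) ≤ phiInt A ω p (n + n) e →
      |phiInt A ω p (a + (n + n)) e + phiInt A ω p n e - phiInt A ω p (a + n) e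
        - phiInt A ω p (n + n) e| ≤ Real.exp (-c * n) := by
  have hpd' := hpd.le
  obtain ⟨c, hc, n₁, hldt⟩ := H.lower_ldt hpd' (show 0 < κ / 100 by positivity)
  obtain ⟨C, hC1, hgr, -⟩ := H.exists_growth
  set s := min (κ / 2) c with hs
  have hs0 : 0 < s := lt_min (by positivity) hc
  obtain ⟨n₂, hn₂⟩ := Filter.eventually_atTop.mp (eventually_poly_exp_le (12 + 30 * C) s hs0 1)
  have hlim : Filter.Tendsto (fun n : ℕ => Real.exp (-(κ / 2) * n)) Filter.atTop (nhds 0) := by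
    refine Real.tendsto_exp_atBot.comp ?_
    exact (tendsto_natCast_atTop_atTop (R := ℝ)).const_mul_atTop_of_neg (by linarith)
  obtain ⟨n₄, hn₄⟩ := Filter.eventually_atTop.mp
    (hlim.eventually (ge_mem_nhds (show (0 : ℝ) < 1 / 12 by norm_num)))
  refine ⟨s / 2, by positivity, max (max n₁ n₂) (max n₄ 1), ?_⟩
  intro n hn e Λ a han ha2 hup hΛ hS1 hS2 hS3
  have hnn₁ : n₁ ≤ n := (le_max_left _ _).trans ((le_max_left _ _).trans hn)
  have hnn₂ : n₂ ≤ n := (le_max_right _ _).trans ((le_max_left _ _).trans hn)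
  have hnn₄ : n₄ ≤ n := (le_max_left _ _).trans ((le_max_right _ _).trans hn)
  have hn1 : 1 ≤ n := (le_max_right _ _).trans ((le_max_right _ _).trans hn)
  have hn1' : (1 : ℝ) ≤ n := by exact_mod_cast hn1
  have ha2' : (a : ℝ) ≤ 2 * n := by exact_mod_cast ha2
  set t := (n : ℝ) * ω with ht
  have hbad : ∀ m ≥ n, ∀ t : ℝ, IntervalIntegrable (fun x => Set.indicator
        {x | phi A ω p m x e < phiInt A ω p m e - κ / 100 * m} (fun _ => (1 : ℝ)) (x + t)) volume 0 1 ∧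
      ∫ x in (0 : ℝ)..1, Set.indicator {x | phi A ω p m x e < phiInt A ω p m e - κ / 100 * m}
        (fun _ => (1 : ℝ)) (x + t) ≤ Real.exp (-s * n) := by
    intro m hm t
    refine integral_sublevel_shift_le (H.continuous_phi_left hpd' m e)
      (fun x => H.phi_periodic p m x e) (Real.exp_pos _).le
      ((hldt m (hnn₁.trans hm) e).trans (ENNReal.ofReal_le_ofReal (Real.exp_le_exp.mpr ?_))) t
    have a1 : (n : ℝ) ≤ m := by exact_mod_cast hm
    have a2 : s ≤ c := min_le_right _ _
    nlinarith
  obtain ⟨i1, b1⟩ := hbad n le_rfl t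
  obtain ⟨i2, b2⟩ := hbad (a + n) (by omega) t
  obtain ⟨i3, b3⟩ := hbad (n + n) (by omega) 0
  -- indicators of the three exceptional sets: off them the pointwise estimate applies, and on them
  -- the trivial bound `10 C n` is used
  set χ₁ : ℝ → ℝ := fun x => Set.indicator
    {x | phi A ω p n x e < phiInt A ω p n e - κ / 100 * n} (fun _ => (1 : ℝ)) (x + t) with hχ₁
  set χ₂ : ℝ → ℝ := fun x => Set.indicator {x | phi A ω p (a + n) x e <
    phiInt A ω p (a + n) e - κ / 100 * (a + n : ℕ)} (fun _ => (1 : ℝ)) (x + t) with hχ₂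
  set χ₃ : ℝ → ℝ := fun x => Set.indicator {x | phi A ω p (n + n) x e <
    phiInt A ω p (n + n) e - κ / 100 * (n + n : ℕ)} (fun _ => (1 : ℝ)) (x + 0) with hχ₃
  have hind : ∀ (U : Set ℝ) (y : ℝ), 0 ≤ Set.indicator U (fun _ => (1 : ℝ)) y := fun U y =>
    Set.indicator_nonneg (fun _ _ => zero_le_one) y
  set ψ : ℝ → ℝ := fun x => phi A ω p (a + (n + n)) x e + phi A ω p n (x + t) e
    - phi A ω p (a + n) (x + t) e - phi A ω p (n + n) x e with hψ
  have hcont : ∀ (m : ℕ) (t : ℝ), Continuous fun x => phi A ω p m (x + t) e := fun m t =>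
    (H.continuous_phi_left hpd' m e).comp (continuous_id.add continuous_const)
  have hii : ∀ (m : ℕ) (t : ℝ), IntervalIntegrable (fun x => phi A ω p m (x + t) e) volume 0 1 :=
    fun m t => (hcont m t).intervalIntegrable _ _
  have hi0 := fun m => H.intervalIntegrable_phi hpd' m e 0 1
  have hψint : ∫ x in (0 : ℝ)..1, ψ x = phiInt A ω p (a + (n + n)) e + phiInt A ω p n e
      - phiInt A ω p (a + n) e - phiInt A ω p (n + n) e := by
    rw [hψ, intervalIntegral.integral_sub (((hi0 _).add (hii n t)).sub (hii (a + n) t)) (hi0 _),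
      intervalIntegral.integral_sub ((hi0 _).add (hii n t)) (hii (a + n) t),
      intervalIntegral.integral_add (hi0 _) (hii n t), H.phiInt_shift, H.phiInt_shift]
    rfl
  have hpt : ∀ x, |ψ x| ≤ 12 * Real.exp (-(κ / 2) * n) + 10 * C * n * (χ₁ x + χ₂ x + χ₃ x) := by
    intro x
    have z1 : 0 ≤ χ₁ x := hind _ _
    have z2 : 0 ≤ χ₂ x := hind _ _
    have z3 : 0 ≤ χ₃ x := hind _ _
    by_cases hgood : χ₁ x = 0 ∧ χ₂ x = 0 ∧ χ₃ x = 0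
    · obtain ⟨g1, g2, g3⟩ := hgood
      have e1 : 12 * Real.exp (-(κ / 2) * n) + 10 * C * n * (χ₁ x + χ₂ x + χ₃ x) =
          12 * Real.exp (-(κ / 2) * n) := by rw [g1, g2, g3]; ring
      rw [e1]
      simp only [hχ₁, hχ₂, hχ₃, Set.indicator_apply_eq_zero, Set.mem_ofPred_eq, one_ne_zero, imp_false,
        not_lt, add_zero] at g1 g2 g3
      refine H.three_block_pointwise hp1 hpd hκ ha2 (hn₄ n hnn₄) ?_ hΛ ?_ ?_ ?_
      · rintro q m hq (hm | rfl) x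
        · exact hup q m hq hm x
        · exact hup q m hq han x
      · linarith
      · linarith
      · linarith
    · have hone : 1 ≤ χ₁ x + χ₂ x + χ₃ x := by
        have hval : ∀ (U : Set ℝ) (y : ℝ), Set.indicator U (fun _ => (1 : ℝ)) y ≠ 0 →
            Set.indicator U (fun _ => (1 : ℝ)) y = 1 := by
          intro U y h
          have : y ∈ U := by
            by_contra hU
            exact h (Set.indicator_of_notMem hU _)
          exact Set.indicator_of_mem this _
        by_cases c1 : χ₁ x = 0
        · by_cases c2 : χ₂ x = 0
          · have c3 : χ₃ x = 1 := hval _ _ fun h => hgood ⟨c1, c2, h⟩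
            linarith
          · have : χ₂ x = 1 := hval _ _ c2
            linarith
        · have : χ₁ x = 1 := hval _ _ c1
          linarith
      have q1 := abs_le.mp (hgr p hpd' (a + (n + n)) x e)
      have q2 := abs_le.mp (hgr p hpd' n (x + t) e)
      have q3 := abs_le.mp (hgr p hpd' (a + n) (x + t) e)
      have q4 := abs_le.mp (hgr p hpd' (n + n) x e)
      have q5 : C * (a : ℝ) ≤ C * (2 * n) := by gcongr
      have q6 : |ψ x| ≤ 10 * C * n := by
        push_cast at q1 q3 q4
        rw [hψ, abs_le]
        constructor <;> simp only <;> linarith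
      have q7 : 10 * C * n * 1 ≤ 10 * C * n * (χ₁ x + χ₂ x + χ₃ x) := by gcongr
      have q8 := Real.exp_pos (-(κ / 2) * n)
      linarith
  have hψc : Continuous ψ :=
    (((H.continuous_phi_left hpd' _ e).add (hcont n t)).sub (hcont (a + n) t)).sub
      (H.continuous_phi_left hpd' _ e)
  rw [← hψint]
  have hle : |∫ x in (0 : ℝ)..1, ψ x| ≤ 12 * Real.exp (-(κ / 2) * n) +
      10 * C * n * (Real.exp (-s * n) + Real.exp (-s * n) + Real.exp (-s * n)) := by
    calc |∫ x in (0 : ℝ)..1, ψ x| ≤ ∫ x in (0 : ℝ)..1, |ψ x| :=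
          intervalIntegral.abs_integral_le_integral_abs zero_le_one
      _ ≤ ∫ x in (0 : ℝ)..1, (12 * Real.exp (-(κ / 2) * n) + 10 * C * n * (χ₁ x + χ₂ x + χ₃ x)) :=
          intervalIntegral.integral_mono zero_le_one (hψc.abs.intervalIntegrable _ _)
            (intervalIntegrable_const.add (((i1.add i2).add i3).const_mul _)) hpt
      _ = 12 * Real.exp (-(κ / 2) * n) + 10 * C * n * ((∫ x in (0 : ℝ)..1, χ₁ x) +
            (∫ x in (0 : ℝ)..1, χ₂ x) + ∫ x in (0 : ℝ)..1, χ₃ x) := by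
          rw [intervalIntegral.integral_add intervalIntegrable_const
            (((i1.add i2).add i3).const_mul _), intervalIntegral.integral_const_mul (10 * C * n),
            intervalIntegral.integral_add (i1.add i2) i3, intervalIntegral.integral_add i1 i2]
          simp
      _ ≤ _ := by gcongr
  have hfin := hn₂ n hnn₂
  have hes : Real.exp (-(κ / 2) * n) ≤ Real.exp (-s * n) := by
    apply Real.exp_le_exp.mpr
    have : s ≤ κ / 2 := min_le_left _ _
    nlinarith
  have hE := Real.exp_pos (-s * n)
  have : 12 * Real.exp (-s * n) ≤ 12 * n * Real.exp (-s * n) := by nlinarith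
  rw [pow_one] at hfin
  nlinarith

end

/-! ### Propagation over scales and the exponential rate -/

section
variable {K : Type*} [RCLike K] {d : ℕ} {ε : Type*} [MetricSpace ε] [CompactSpace ε]
variable {A : ℝ → ε → Matrix (Fin d) (Fin d) K} {ω : ℝ}

theorem CocycleHyp.upper_bound_all (H : CocycleHyp A ω) (e₀ : ε) {δ : ℝ} (hδ : 0 < δ) (r : ℕ)
    (hr : r ≤ d) :
    ∃ n₁ : ℕ, ∀ᶠ e in nhds e₀, ∀ q m : ℕ, q ≤ r → n₁ ≤ m → ∀ x,
      phi A ω q m x e ≤ m * (sumLyap A ω q e₀ + δ) := by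
  induction r with
  | zero =>
    obtain ⟨n₁, h⟩ := H.upper_bound hr e₀ hδ
    refine ⟨n₁, h.mono fun e he q m hq hm x => ?_⟩
    obtain rfl : q = 0 := by omega
    exact he m hm x
  | succ r ih =>
    obtain ⟨n₁, h⟩ := ih (by omega)
    obtain ⟨n₂, h'⟩ := H.upper_bound hr e₀ hδ
    refine ⟨max n₁ n₂, (h.and h').mono ?_⟩
    rintro e ⟨he, he'⟩ q m hq hm x
    rcases Nat.lt_or_ge q (r + 1) with hlt | hge
    · exact he q m (by omega) ((le_max_left _ _).trans hm) x
    · obtain rfl : q = r + 1 := by omega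
      exact he' m ((le_max_right _ _).trans hm) x

theorem CocycleHyp.phiInt_close (H : CocycleHyp A ω) {p : ℕ} (hp : p ≤ d) (n : ℕ) {e e₀ : ε} {η : ℝ}
    (h : ∀ x, |phi A ω p n x e - phi A ω p n x e₀| ≤ η) :
    |phiInt A ω p n e - phiInt A ω p n e₀| ≤ η := by
  unfold phiInt
  rw [← intervalIntegral.integral_sub (H.intervalIntegrable_phi hp n e 0 1)
    (H.intervalIntegrable_phi hp n e₀ 0 1)]
  have := intervalIntegral.norm_integral_le_of_norm_le_const (a := 0) (b := 1)
    (f := fun x => phi A ω p n x e - phi A ω p n x e₀) (C := η) (fun x _ => h x)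
  simpa using this

/-- The exponent sum is the infimum of the means. -/
theorem CocycleHyp.mul_sumLyap_le (H : CocycleHyp A ω) {p : ℕ} (hp : p ≤ d) (n : ℕ) (e : ε) :
    n * sumLyap A ω p e ≤ phiInt A ω p n e := by
  rcases Nat.eq_zero_or_pos n with rfl | hn
  · have : phiInt A ω p 0 e = 0 := by
      unfold phiInt
      simp [phi_zero hp]
    simp [this]
  · have h := H.sumLyap_le hp e (show 1 ≤ n from hn)
    rw [sumLyapFin_eq, le_div_iff₀ (by exact_mod_cast hn)] at h
    linarith

/-- A lower bound on the means at the scales `n₀` and `2 n₀` propagates to all scales `2^k n₀`, by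
repeated use of the three-block estimate; hence it holds for the exponent sums themselves. -/
theorem CocycleHyp.propagate (H : CocycleHyp A ω) {p : ℕ} (hp : p ≤ d) {e : ε} {Λ δ c : ℝ} {n₀ : ℕ}
    (hn₀ : 1 ≤ n₀) (hδ : 0 < δ)
    (hexp : ∀ m ≥ n₀, (m : ℝ) * Real.exp (-c * m) ≤ δ / 2)
    (h3 : ∀ n ≥ n₀, ∀ a : ℕ, n ≤ a → a ≤ 2 * n → n * (Λ - 5 * δ) ≤ phiInt A ω p n e →
      ((a + n : ℕ) : ℝ) * (Λ - 5 * δ) ≤ phiInt A ω p (a + n) e →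
      ((n + n : ℕ) : ℝ) * (Λ - 5 * δ) ≤ phiInt A ω p (n + n) e →
      |phiInt A ω p (a + (n + n)) e + phiInt A ω p n e - phiInt A ω p (a + n) e
        - phiInt A ω p (n + n) e| ≤ Real.exp (-c * n))
    (h1 : n₀ * (Λ - 4 * δ) ≤ phiInt A ω p n₀ e)
    (h2 : n₀ * (Λ - 3 * δ) ≤ phiInt A ω p (2 * n₀) e - phiInt A ω p n₀ e) :
    Λ - 4 * δ ≤ sumLyap A ω p e := by
  -- the induction keeps a reserve `δ / 2 ^ k` in the increment, from which the errors are paid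
  have hstep : ∀ k : ℕ, ((2 ^ k * n₀ : ℕ) : ℝ) * (Λ - 4 * δ) ≤ phiInt A ω p (2 ^ k * n₀) e ∧
      ((2 ^ k * n₀ : ℕ) : ℝ) * (Λ - 4 * δ + δ / 2 ^ k) ≤
        phiInt A ω p (2 * (2 ^ k * n₀)) e - phiInt A ω p (2 ^ k * n₀) e := by
    intro k
    induction k with
    | zero =>
      simp only [pow_zero, one_mul, div_one]
      exact ⟨h1, h2.trans' (le_of_eq (by ring))⟩
    | succ k ih =>
      obtain ⟨i1, i2⟩ := ih
      set n := 2 ^ k * n₀ with hn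
      have hnn₀ : n₀ ≤ n := Nat.le_mul_of_pos_left _ (by positivity)
      have hn1 : (1 : ℝ) ≤ n := by exact_mod_cast hn₀.trans hnn₀
      have e2 : 2 ^ (k + 1) * n₀ = 2 * n := by rw [hn]; ring
      rw [e2]
      have hn2 : n + n = 2 * n := by ring
      have hη := hexp n hnn₀
      have hη0 := Real.exp_pos (-c * n)
      have hk0 : (0 : ℝ) < δ / 2 ^ k := by positivity
      have i3 : ((2 * n : ℕ) : ℝ) * (Λ - 4 * δ) ≤ phiInt A ω p (2 * n) e := by
        push_cast
        nlinarith
      have lo1 : (n : ℝ) * (Λ - 5 * δ) ≤ phiInt A ω p n e := by nlinarith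
      have lo2 : ((2 * n : ℕ) : ℝ) * (Λ - 5 * δ) ≤ phiInt A ω p (2 * n) e := by
        push_cast at i3 ⊢
        nlinarith
      have t1 := h3 n hnn₀ n le_rfl (by omega) lo1 (by rw [hn2]; exact lo2) (by rw [hn2]; exact lo2)
      have e3 : 2 * n + n = n + (n + n) := by ring
      have e4 : 2 * n + (n + n) = 2 * (2 * n) := by ring
      have hηn : Real.exp (-c * n) ≤ n * δ := by nlinarith
      have lo3 : ((2 * n + n : ℕ) : ℝ) * (Λ - 5 * δ) ≤ phiInt A ω p (2 * n + n) e := by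
        rw [e3]
        have := (abs_le.mp t1).1
        rw [hn2] at this ⊢
        push_cast at i3 ⊢
        nlinarith
      have t2 := h3 n hnn₀ (2 * n) (by omega) le_rfl lo1 lo3 (by rw [hn2]; exact lo2)
      have t1' := abs_le.mp t1
      have t2' := abs_le.mp t2
      rw [e4, e3, hn2] at t2'
      rw [hn2] at t1'
      refine ⟨i3, ?_⟩
      have key : 2 * (phiInt A ω p (2 * n) e - phiInt A ω p n e) - 2 * Real.exp (-c * n) ≤
          phiInt A ω p (2 * (2 * n)) e - phiInt A ω p (2 * n) e := by linarith
      refine le_trans ?_ key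
      -- the loss `exp (-c n)` at each use is at most half of the current reserve `n δ / 2^k`
      have hres : Real.exp (-c * n) ≤ n * (δ / 2 ^ (k + 1)) := by
        have f1 : (n : ℝ) * (δ / 2 ^ (k + 1)) = n₀ * (δ / 2) := by
          rw [hn]; push_cast; field_simp; ring
        have f2 : (1 : ℝ) ≤ n₀ := by exact_mod_cast hn₀
        rw [f1]
        nlinarith
      have f3 : δ / 2 ^ k = 2 * (δ / 2 ^ (k + 1)) := by
        field_simp; ring
      rw [f3] at i2
      push_cast
      nlinarith
  have hsub : Filter.Tendsto (fun k : ℕ => 2 ^ k * n₀) Filter.atTop Filter.atTop :=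
    Filter.Tendsto.atTop_mul_const' (by omega) (tendsto_pow_atTop_atTop_of_one_lt one_lt_two)
  refine ge_of_tendsto ((H.tendsto_sumLyapFin hp e).comp hsub) (Filter.Eventually.of_forall fun k => ?_)
  have h := (hstep k).1
  have hpos : (0 : ℝ) < ((2 ^ k * n₀ : ℕ) : ℝ) := by
    exact_mod_cast Nat.mul_pos (by positivity) (by omega)
  simp only [Function.comp, sumLyapFin_eq]
  rw [le_div_iff₀ hpos]
  linarith

set_option maxHeartbeats 1000000 in
/-- Near a parameter `e₀` satisfying the gap condition, the second difference of the means at the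
scales `n, 2n, 4n` is exponentially small. -/
theorem CocycleHyp.local_rate (H : CocycleHyp A ω) {p : ℕ} (hp1 : 1 ≤ p) (hpd : p < d)
    {κ : ℝ} (hκ : 0 < κ) :
    ∃ c > (0 : ℝ), ∀ e₀ : ε,
      κ ≤ 2 * sumLyap A ω p e₀ - sumLyap A ω (p - 1) e₀ - sumLyap A ω (p + 1) e₀ →
      ∃ n₀ : ℕ, ∀ᶠ e in nhds e₀, ∀ n ≥ n₀,
        |phiInt A ω p (4 * n) e + 2 * phiInt A ω p n e - 3 * phiInt A ω p (2 * n) e| ≤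
          2 * Real.exp (-c * n) := by
  obtain ⟨c, hc, N, h3⟩ := H.three_block hp1 hpd hκ
  refine ⟨c, hc, fun e₀ hgap => ?_⟩
  set δ := κ / 100 with hδdef
  have hδ : 0 < δ := by positivity
  obtain ⟨n₁, hup⟩ := H.upper_bound_all e₀ hδ (p + 1) hpd
  obtain ⟨n₂, hn₂⟩ := Filter.eventually_atTop.mp (eventually_poly_exp_le (2 / δ) c hc 1)
  set n₀ := max (max N n₁) (max n₂ 1) with hn₀
  have hN : N ≤ n₀ := (le_max_left _ _).trans (le_max_left _ _)
  have hn₁ : n₁ ≤ n₀ := (le_max_right _ _).trans (le_max_left _ _)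
  have hn₂' : n₂ ≤ n₀ := (le_max_left _ _).trans (le_max_right _ _)
  have hn1 : 1 ≤ n₀ := (le_max_right _ _).trans (le_max_right _ _)
  have hn1' : (1 : ℝ) ≤ n₀ := by exact_mod_cast hn1
  refine ⟨n₀, ?_⟩
  filter_upwards [hup, H.eventually_phi_close hpd.le n₀ e₀ hδ,
    H.eventually_phi_close hpd.le (2 * n₀) e₀ hδ] with e hupe hc1 hc2
  have hc1' := abs_le.mp (H.phiInt_close hpd.le n₀ hc1)
  have hc2' := abs_le.mp (H.phiInt_close hpd.le (2 * n₀) hc2)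
  have hL1 := H.mul_sumLyap_le hpd.le n₀ e₀
  have hL2 := H.mul_sumLyap_le hpd.le (2 * n₀) e₀
  set Λ := sumLyap A ω p e₀ with hΛ
  have h3' : ∀ n ≥ n₀, ∀ a : ℕ, n ≤ a → a ≤ 2 * n → n * (Λ - 5 * δ) ≤ phiInt A ω p n e →
      ((a + n : ℕ) : ℝ) * (Λ - 5 * δ) ≤ phiInt A ω p (a + n) e →
      ((n + n : ℕ) : ℝ) * (Λ - 5 * δ) ≤ phiInt A ω p (n + n) e →
      |phiInt A ω p (a + (n + n)) e + phiInt A ω p n e - phiInt A ω p (a + n) e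
        - phiInt A ω p (n + n) e| ≤ Real.exp (-c * n) := by
    intro n hn a ha1 ha2 l1 l2 l3
    exact h3 n (hN.trans hn) e (fun q => sumLyap A ω q e₀) a ha1 ha2
      (fun q m hq hm x => hupe q m hq (hn₁.trans (hn.le.trans hm)) x) hgap l1 l2 l3
  have hupint : phiInt A ω p n₀ e ≤ n₀ * (Λ + δ) := by
    have h := intervalIntegral.integral_mono (μ := volume) zero_le_one
      (H.intervalIntegrable_phi hpd.le n₀ e 0 1)
      (intervalIntegrable_const (c := (n₀ : ℝ) * (Λ + δ)))
      (fun x => hupe p n₀ (by omega) hn₁ x)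
    simpa [phiInt] using h
  have hlow : Λ - 4 * δ ≤ sumLyap A ω p e := by
    refine H.propagate hpd.le (c := c) hn1 hδ ?_ h3' ?_ ?_
    · intro m hm
      have h := hn₂ m (hn₂'.trans hm)
      rw [pow_one] at h
      have h' : Real.exp (-(c / 2) * m) ≤ 1 := Real.exp_le_one_iff.mpr (by
        have : (0 : ℝ) ≤ m := m.cast_nonneg
        nlinarith)
      have h'' := h.trans h'
      rw [div_mul_eq_mul_div, div_mul_eq_mul_div, div_le_one hδ] at h''
      linarith
    · nlinarith
    · push_cast at hL2
      nlinarith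
  have hall : ∀ m : ℕ, (m : ℝ) * (Λ - 5 * δ) ≤ phiInt A ω p m e := by
    intro m
    have h := H.mul_sumLyap_le hpd.le m e
    have : (0 : ℝ) ≤ m := m.cast_nonneg
    nlinarith
  intro n hn
  -- the three-block estimates with outer blocks `n` and `2 n`; eliminating the mean at scale `3 n`
  -- leaves the second difference
  have t1 := abs_le.mp (h3' n hn n le_rfl (by omega) (hall _) (hall _) (hall _))
  have t2 := abs_le.mp (h3' n hn (2 * n) (by omega) le_rfl (hall _) (hall _) (hall _))
  rw [show 2 * n + (n + n) = 4 * n by ring, show 2 * n + n = n + (n + n) by ring,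
    show n + n = 2 * n by ring] at t2
  rw [show n + n = 2 * n by ring] at t1
  rw [abs_le]
  constructor <;> linarith

/-- Uniform version of `CocycleHyp.local_rate`, by compactness of the parameter space. -/
theorem CocycleHyp.uniform_rate (H : CocycleHyp A ω) {p : ℕ} (hp1 : 1 ≤ p) (hpd : p < d)
    {κ : ℝ} (hκ : 0 < κ)
    (hgap : ∀ e, κ ≤ 2 * sumLyap A ω p e - sumLyap A ω (p - 1) e - sumLyap A ω (p + 1) e) :
    ∃ c > (0 : ℝ), ∃ n₀ : ℕ, ∀ n ≥ n₀, ∀ e,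
        |phiInt A ω p (4 * n) e + 2 * phiInt A ω p n e - 3 * phiInt A ω p (2 * n) e| ≤
          2 * Real.exp (-c * n) := by
  obtain ⟨c, hc, h⟩ := H.local_rate hp1 hpd hκ
  refine ⟨c, hc, ?_⟩
  choose N hN using fun e₀ => h e₀ (hgap e₀)
  obtain ⟨t, -, ht⟩ := (isCompact_univ (X := ε)).elim_nhds_subcover _ fun e₀ _ => hN e₀
  refine ⟨t.sup N, fun n hn e => ?_⟩
  obtain ⟨e₀, he₀, he⟩ := Set.mem_iUnion₂.mp (ht (Set.mem_univ e))
  exact he n ((Finset.le_sup he₀).trans hn)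

/-- The exponent sum is approximated by `2 L_{2n} - L_n` up to an exponentially small error, by
telescoping along the scales `2^k n`. -/
theorem CocycleHyp.sum_rate (H : CocycleHyp A ω) {p : ℕ} (hp : p ≤ d)
    {κ : ℝ} (hκ : 0 < κ)
    (hgap : ∀ e, 1 ≤ p → p < d →
      κ ≤ 2 * sumLyap A ω p e - sumLyap A ω (p - 1) e - sumLyap A ω (p + 1) e) :
    ∃ c > (0 : ℝ), ∃ n₀ : ℕ, ∀ n ≥ n₀, ∀ e,
      |sumLyap A ω p e - 2 * sumLyapFin A ω p (2 * n) e + sumLyapFin A ω p n e| ≤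
        Real.exp (-c * n) := by
  -- if the means are exactly linear in `n`, the left-hand side vanishes
  have htriv : (∀ n e, phiInt A ω p n e = n * phiInt A ω p 1 e) → ∃ c > (0 : ℝ), ∃ n₀ : ℕ,
      ∀ n ≥ n₀, ∀ e, |sumLyap A ω p e - 2 * sumLyapFin A ω p (2 * n) e + sumLyapFin A ω p n e| ≤
        Real.exp (-c * n) := by
    intro hlin
    have hfin : ∀ n ≥ 1, ∀ e, sumLyapFin A ω p n e = phiInt A ω p 1 e := by
      intro n hn e
      have : (n : ℝ) ≠ 0 := by positivity
      rw [sumLyapFin_eq, hlin]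
      field_simp
    refine ⟨1, one_pos, 1, fun n hn e => ?_⟩
    have hL : sumLyap A ω p e = phiInt A ω p 1 e := by
      refine tendsto_nhds_unique (H.tendsto_sumLyapFin hp e)
        (tendsto_const_nhds.congr' ?_)
      filter_upwards [Filter.eventually_ge_atTop 1] with m hm
      exact (hfin m hm e).symm
    rw [hL, hfin _ (by omega), hfin n hn]
    have : phiInt A ω p 1 e - 2 * phiInt A ω p 1 e + phiInt A ω p 1 e = 0 := by ring
    rw [this, abs_zero]
    exact (Real.exp_pos _).le
  rcases Nat.eq_zero_or_pos p with rfl | hp1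
  · refine htriv fun n e => ?_
    simp [phiInt, phi_zero_left]
  rcases hp.eq_or_lt with rfl | hpd
  · exact htriv fun n e => H.phiInt_top n e
  obtain ⟨c, hc, n₀, h⟩ := H.uniform_rate hp1 hpd hκ fun e => hgap e hp1 hpd
  obtain ⟨n₂, hn₂⟩ := Filter.eventually_atTop.mp (eventually_poly_exp_le 2 c hc 0)
  refine ⟨c / 2, by positivity, max (max n₀ n₂) 1, fun n hn e => ?_⟩
  have hnn₀ : n₀ ≤ n := (le_max_left _ _).trans ((le_max_left _ _).trans hn)
  have hnn₂ : n₂ ≤ n := (le_max_right _ _).trans ((le_max_left _ _).trans hn)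
  have hn1 : 1 ≤ n := (le_max_right _ _).trans hn
  have hn1' : (1 : ℝ) ≤ n := by exact_mod_cast hn1
  have hq := hn₂ n hnn₂
  rw [pow_zero, mul_one] at hq
  set q := Real.exp (-c * n) with hqdef
  have hq0 : 0 < q := Real.exp_pos _
  have hq2 : q ≤ 1 / 2 := by
    have : Real.exp (-(c / 2) * n) ≤ 1 := Real.exp_le_one_iff.mpr (by nlinarith)
    linarith
  set G : ℕ → ℝ := fun k => 2 * sumLyapFin A ω p (2 * (2 ^ k * n)) e - sumLyapFin A ω p (2 ^ k * n) e
    with hG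
  have hGstep : ∀ k, |G (k + 1) - G k| ≤ q * (1 / 2) ^ k := by
    intro k
    set m := 2 ^ k * n with hm
    have hnm : n ≤ m := Nat.le_mul_of_pos_left _ (by positivity)
    have hm1 : (1 : ℝ) ≤ m := by exact_mod_cast hn1.trans hnm
    have e1 : 2 ^ (k + 1) * n = 2 * m := by rw [hm]; ring
    have hstep := h m (hnn₀.trans hnm) e
    have e2 : G (k + 1) - G k =
        (phiInt A ω p (4 * m) e + 2 * phiInt A ω p m e - 3 * phiInt A ω p (2 * m) e) / (2 * m) := by
      rw [hG]
      simp only [e1, sumLyapFin_eq, ← hm]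
      rw [show 2 * (2 * m) = 4 * m by ring]
      push_cast
      field_simp
      ring
    rw [e2, abs_div, abs_of_pos (show (0 : ℝ) < 2 * m by positivity), div_le_iff₀ (by positivity)]
    have e3 : Real.exp (-c * m) ≤ q * (1 / 2) ^ k := by
      have f1 : q * q ^ k = Real.exp (-c * ((k + 1) * n)) := by
        rw [hqdef, ← Real.exp_nat_mul, ← Real.exp_add]; congr 1; ring
      have f2 : ((k : ℝ) + 1) * n ≤ m := by
        have : k + 1 ≤ 2 ^ k := Nat.lt_two_pow_self
        rw [hm]
        exact_mod_cast Nat.mul_le_mul_right n this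
      calc Real.exp (-c * m) ≤ Real.exp (-c * ((k + 1) * n)) := by
            apply Real.exp_le_exp.mpr
            nlinarith
        _ = q * q ^ k := f1.symm
        _ ≤ _ := by gcongr
    have f3 : 0 ≤ q * (1 / 2) ^ k := by positivity
    nlinarith
  have hGk : ∀ k, |G k - G 0| ≤ 2 * q * (1 - (1 / 2) ^ k) := by
    intro k
    induction k with
    | zero => simp
    | succ k ih =>
      have h1 := abs_add_le (G (k + 1) - G k) (G k - G 0)
      rw [sub_add_sub_cancel] at h1
      have h2 := hGstep k
      rw [pow_succ]
      linarith
  have hsub : Filter.Tendsto (fun k : ℕ => 2 ^ k * n) Filter.atTop Filter.atTop :=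
    Filter.Tendsto.atTop_mul_const' (by omega) (tendsto_pow_atTop_atTop_of_one_lt one_lt_two)
  have hsub2 : Filter.Tendsto (fun k : ℕ => 2 * (2 ^ k * n)) Filter.atTop Filter.atTop :=
    Filter.Tendsto.const_mul_atTop' two_pos hsub
  have hlim : Filter.Tendsto G Filter.atTop (nhds (sumLyap A ω p e)) := by
    have h1 := ((H.tendsto_sumLyapFin hp e).comp hsub2).const_mul 2
    have h2 := h1.sub ((H.tendsto_sumLyapFin hp e).comp hsub)
    have h3 : 2 * sumLyap A ω p e - sumLyap A ω p e = sumLyap A ω p e := by ring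
    rw [h3] at h2
    exact h2
  have hbound : |sumLyap A ω p e - G 0| ≤ 2 * q := by
    refine le_of_tendsto ((hlim.sub_const (G 0)).abs) (Filter.Eventually.of_forall fun k => ?_)
    refine (hGk k).trans ?_
    have : (0 : ℝ) < (1 / 2) ^ k := by positivity
    nlinarith
  have e0 : sumLyap A ω p e - 2 * sumLyapFin A ω p (2 * n) e + sumLyapFin A ω p n e =
      sumLyap A ω p e - G 0 := by
    rw [hG]; simp only [pow_zero, one_mul]; ring
  rw [e0]
  exact hbound.trans hq

end

/-! ### The dichotomy along doubled scales -/

/-- A sequence with `2 y (2ℓ) = y ℓ + O(exp (-c ℓ))` cannot decay faster than `1/n` along the scales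
`2^k ℓ₁`, once it exceeds `4 exp (-c ℓ₁)` at a large scale `ℓ₁`. -/
theorem doubling_lower_bound {y : ℕ → ℝ} {c : ℝ} (hc : 0 < c) {ℓ₂ ℓ₁ : ℕ}
    (hy : ∀ ℓ ≥ ℓ₂, |2 * y (2 * ℓ) - y ℓ| ≤ Real.exp (-c * ℓ)) (hℓ : ℓ₂ ≤ ℓ₁)
    (hq : Real.exp (-c * ℓ₁) ≤ 1 / 4) (hbig : 4 * Real.exp (-c * ℓ₁) < |y ℓ₁|) (k : ℕ) :
    (1 / 2 ^ (k + 1) : ℝ) * |y ℓ₁| < |y (2 ^ k * ℓ₁)| := by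
  set q := Real.exp (-c * ℓ₁) with hqdef
  have hq0 : 0 < q := Real.exp_pos _
  have hk : ∀ k : ℕ, |y ℓ₁| - 2 * q * (1 - (1 / 2) ^ k) ≤ 2 ^ k * |y (2 ^ k * ℓ₁)| := by
    intro k
    induction k with
    | zero => simp
    | succ k ih =>
      set m := 2 ^ k * ℓ₁ with hm
      have hle : ℓ₁ ≤ m := Nat.le_mul_of_pos_left _ (by positivity)
      have e1 : 2 ^ (k + 1) * ℓ₁ = 2 * m := by rw [hm]; ring
      rw [e1]
      have h1 := hy m (hℓ.trans hle)
      have h2 : |y m| ≤ 2 * |y (2 * m)| + Real.exp (-c * m) := by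
        have a1 := abs_sub_abs_le_abs_sub (y m) (2 * y (2 * m))
        rw [abs_sub_comm, abs_mul, abs_two] at a1
        linarith
      have h3 : (2 : ℝ) ^ k * Real.exp (-c * m) ≤ q * (1 / 2) ^ k := by
        have f1 : q * q ^ k = Real.exp (-c * ((k + 1) * ℓ₁)) := by
          rw [hqdef, ← Real.exp_nat_mul, ← Real.exp_add]; congr 1; ring
        have f2 : ((k : ℝ) + 1) * ℓ₁ ≤ m := by
          have : k + 1 ≤ 2 ^ k := Nat.lt_two_pow_self
          rw [hm]
          exact_mod_cast Nat.mul_le_mul_right ℓ₁ this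
        calc (2 : ℝ) ^ k * Real.exp (-c * m) ≤ 2 ^ k * Real.exp (-c * ((k + 1) * ℓ₁)) := by
              refine mul_le_mul_of_nonneg_left (Real.exp_le_exp.mpr ?_) (by positivity)
              nlinarith
          _ = 2 ^ k * (q * q ^ k) := by rw [f1]
          _ ≤ 2 ^ k * (q * (1 / 4) ^ k) := by gcongr
          _ = q * (1 / 2) ^ k := by
            rw [mul_left_comm, ← mul_pow]; norm_num
      have h4 := mul_le_mul_of_nonneg_left h2 (show (0 : ℝ) ≤ 2 ^ k by positivity)
      rw [pow_succ, pow_succ]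
      linarith
  have h1 := hk k
  have h2 : (0 : ℝ) < (1 / 2) ^ k := by positivity
  have h3 : |y ℓ₁| / 2 < 2 ^ k * |y (2 ^ k * ℓ₁)| := by nlinarith
  have h4 : (0 : ℝ) < 2 ^ k := by positivity
  rw [pow_succ, one_div, inv_mul_lt_iff₀ (by positivity)]
  linarith

section
variable {K : Type*} [RCLike K] {d : ℕ} {ε : Type*} [MetricSpace ε] [CompactSpace ε]
variable {A : ℝ → ε → Matrix (Fin d) (Fin d) K} {ω : ℝ}

theorem CocycleHyp.sum_rate_all (H : CocycleHyp A ω) {κ : ℝ} (hκ : 0 < κ)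
    (hgap : ∀ (e : ε) (j : ℕ), 1 ≤ j → j < d → κ < lyap A ω j e - lyap A ω (j + 1) e)
    (r : ℕ) (hr : r ≤ d) :
    ∃ c > (0 : ℝ), ∃ n₀ : ℕ, ∀ n ≥ n₀, ∀ e, ∀ p ≤ r,
      |sumLyap A ω p e - 2 * sumLyapFin A ω p (2 * n) e + sumLyapFin A ω p n e| ≤
        Real.exp (-c * n) := by
  have hgap' : ∀ p : ℕ, ∀ e, 1 ≤ p → p < d →
      κ ≤ 2 * sumLyap A ω p e - sumLyap A ω (p - 1) e - sumLyap A ω (p + 1) e := by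
    intro p e h1 h2
    have h := hgap e p h1 h2
    unfold lyap at h
    rw [Nat.add_sub_cancel] at h
    linarith
  induction r with
  | zero =>
    obtain ⟨c, hc, n₀, h⟩ := H.sum_rate hr hκ (hgap' 0)
    refine ⟨c, hc, n₀, fun n hn e p hp => ?_⟩
    obtain rfl : p = 0 := by omega
    exact h n hn e
  | succ r ih =>
    obtain ⟨c, hc, n₀, h⟩ := ih (by omega)
    obtain ⟨c₂, hc₂, n₀', h'⟩ := H.sum_rate hr hκ (hgap' (r + 1))
    refine ⟨min c c₂, lt_min hc hc₂, max n₀ n₀', fun n hn e p hp => ?_⟩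
    have hn0 : (0 : ℝ) ≤ n := n.cast_nonneg
    rcases Nat.lt_or_ge p (r + 1) with hlt | hge
    · refine (h n ((le_max_left _ _).trans hn) e p (by omega)).trans (Real.exp_le_exp.mpr ?_)
      nlinarith [min_le_left c c₂]
    · obtain rfl : p = r + 1 := by omega
      refine (h' n ((le_max_right _ _).trans hn) e).trans (Real.exp_le_exp.mpr ?_)
      nlinarith [min_le_right c c₂]

/-- The second-difference estimate for the individual exponents, as differences of exponent sums. -/
theorem CocycleHyp.lyap_rate (H : CocycleHyp A ω) {κ : ℝ} (hκ : 0 < κ)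
    (hgap : ∀ (e : ε) (j : ℕ), 1 ≤ j → j < d → κ < lyap A ω j e - lyap A ω (j + 1) e) :
    ∃ c > (0 : ℝ), ∃ n₀ : ℕ, ∀ n ≥ n₀, ∀ (e : ε) (j : ℕ), j ≤ d →
      |lyap A ω j e - 2 * lyapFin A ω j (2 * n) e + lyapFin A ω j n e| ≤ Real.exp (-c * n) := by
  obtain ⟨c, hc, n₀, h⟩ := H.sum_rate_all hκ hgap d le_rfl
  obtain ⟨n₂, hn₂⟩ := Filter.eventually_atTop.mp (eventually_poly_exp_le 2 c hc 0)
  refine ⟨c / 2, by positivity, max n₀ n₂, fun n hn e j hj => ?_⟩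
  have h1 := abs_le.mp (h n ((le_max_left _ _).trans hn) e j hj)
  have h2 := abs_le.mp (h n ((le_max_left _ _).trans hn) e (j - 1) (by omega))
  have h3 := hn₂ n ((le_max_right _ _).trans hn)
  rw [pow_zero, mul_one] at h3
  unfold lyap lyapFin
  rw [abs_le]
  constructor <;> linarith

end

/-- **Dichotomy for convergence rates (Corollary 6.2).** Under the hypotheses of the main
theorem there is `c₁ = c₁(κ,A,ℰ,ω) > 0` with
`|λ_j(E) − 2λ_{j,2ℓ}(E) + λ_{j,ℓ}(E)| ≤ exp(−c₁ℓ)` for all large `ℓ`; there is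
`ℓ₀ = ℓ₀(c₁)` such that if `|λ_{j,ℓ₁}(E) − λ_j(E)| > 4exp(−c₁ℓ₁)` for some `ℓ₁ ≥ ℓ₀`,
then `|λ_{j,2^k ℓ₁}(E) − λ_j(E)| > 2^{−(k+1)}|λ_{j,ℓ₁}(E) − λ_j(E)|` for all `k ≥ 0`;
consequently, for each `E` and `j`, either `λ_{j,n}(E) → λ_j(E)` exponentially fast, or
`|λ_{j,n}(E) − λ_j(E)| > C(E)/n` for infinitely many `n`. -/
theorem dichotomy_for_convergence_rates
    {K : Type*} [RCLike K] {d : ℕ} {ε : Type*} [MetricSpace ε] [CompactSpace ε]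
    (ω a : ℝ) (ha : 1 < a) (hdio : Diophantine ω a)
    (A : ℝ → ε → Matrix (Fin d) (Fin d) K)
    (hcont : Continuous fun q : ℝ × ε => A q.1 q.2)
    (hper : ∀ x e, A (x + 1) e = A x e)
    (hinv : ∀ x e, IsUnit (A x e))
    (hanal : AnalyticOnStrip A)
    (hbinv : ∃ M : ℝ, ∀ (x : ℝ) (e : ε), matOpNorm (A x e)⁻¹ ≤ M)
    (β₀ C₀ : ℝ) (hβ₀ : 0 < β₀) (hβ₁ : β₀ ≤ 1)
    (hHolder : ∀ (x : ℝ) (e e' : ε),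
      matOpNorm (A x e - A x e') ≤ C₀ * dist e e' ^ β₀)
    (κ : ℝ) (hκ : 0 < κ)
    (hgap : ∀ (e : ε) (j : ℕ), 1 ≤ j → j < d →
      κ < lyap A ω j e - lyap A ω (j + 1) e) :
    ∃ c₁ > (0:ℝ),
      (∃ ℓ₂ : ℕ, ∀ ℓ : ℕ, ℓ₂ ≤ ℓ → ∀ (e : ε) (j : ℕ), 1 ≤ j → j ≤ d →
        |lyap A ω j e - 2 * lyapFin A ω j (2 * ℓ) e + lyapFin A ω j ℓ e| ≤
          Real.exp (-c₁ * ℓ)) ∧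
      (∃ ℓ₀ : ℕ, ∀ (e : ε) (j ℓ₁ : ℕ), 1 ≤ j → j ≤ d → ℓ₀ ≤ ℓ₁ →
        4 * Real.exp (-c₁ * ℓ₁) < |lyapFin A ω j ℓ₁ e - lyap A ω j e| →
        ∀ k : ℕ,
          (1 / 2 ^ (k + 1) : ℝ) * |lyapFin A ω j ℓ₁ e - lyap A ω j e| <
            |lyapFin A ω j (2 ^ k * ℓ₁) e - lyap A ω j e|) ∧
      (∀ (e : ε) (j : ℕ), 1 ≤ j → j ≤ d →
        (∃ c > (0:ℝ), ∃ C : ℝ, ∀ n : ℕ, 1 ≤ n →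
          |lyapFin A ω j n e - lyap A ω j e| ≤ C * Real.exp (-c * n)) ∨
        (∃ CE > (0:ℝ), ∀ N : ℕ, ∃ n : ℕ, N ≤ n ∧
          CE / n < |lyapFin A ω j n e - lyap A ω j e|)) := by
  have H : CocycleHyp A ω := ⟨hcont, hper, hinv, hanal, hbinv, hdio.quadratic ha⟩
  obtain ⟨c₁, hc₁, ℓ₂, hrate⟩ := H.lyap_rate hκ hgap
  have hlim : Filter.Tendsto (fun n : ℕ => Real.exp (-c₁ * n)) Filter.atTop (nhds 0) :=
    Real.tendsto_exp_atBot.comp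
      ((tendsto_natCast_atTop_atTop (R := ℝ)).const_mul_atTop_of_neg (by linarith))
  obtain ⟨ℓ₃, hℓ₃⟩ := Filter.eventually_atTop.mp
    (hlim.eventually (ge_mem_nhds (show (0 : ℝ) < 1 / 4 by norm_num)))
  have hdev : ∀ (e : ε) (j : ℕ), j ≤ d → ∀ ℓ ≥ ℓ₂,
      |2 * (lyapFin A ω j (2 * ℓ) e - lyap A ω j e) - (lyapFin A ω j ℓ e - lyap A ω j e)| ≤
        Real.exp (-c₁ * ℓ) := by
    intro e j hj ℓ hℓ
    have h := hrate ℓ hℓ e j hj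
    rw [← abs_neg] at h
    convert h using 2
    ring
  have hpart2 : ∀ (e : ε) (j ℓ₁ : ℕ), 1 ≤ j → j ≤ d → max (max ℓ₂ ℓ₃) 1 ≤ ℓ₁ →
      4 * Real.exp (-c₁ * ℓ₁) < |lyapFin A ω j ℓ₁ e - lyap A ω j e| → ∀ k : ℕ,
        (1 / 2 ^ (k + 1) : ℝ) * |lyapFin A ω j ℓ₁ e - lyap A ω j e| <
          |lyapFin A ω j (2 ^ k * ℓ₁) e - lyap A ω j e| := by
    intro e j ℓ₁ _ hj hℓ hbig k
    exact doubling_lower_bound (y := fun n => lyapFin A ω j n e - lyap A ω j e) hc₁ (hdev e j hj)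
      ((le_max_left _ _).trans ((le_max_left _ _).trans hℓ))
      (hℓ₃ ℓ₁ ((le_max_right _ _).trans ((le_max_left _ _).trans hℓ))) hbig k
  refine ⟨c₁, hc₁, ⟨ℓ₂, fun ℓ hℓ e j _ hj => hrate ℓ hℓ e j hj⟩, ⟨_, hpart2⟩, fun e j hj1 hj => ?_⟩
  by_cases hbig : ∃ ℓ₁ ≥ max (max ℓ₂ ℓ₃) 1,
      4 * Real.exp (-c₁ * ℓ₁) < |lyapFin A ω j ℓ₁ e - lyap A ω j e|
  · right
    obtain ⟨ℓ₁, hℓ, hbig⟩ := hbig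
    have hℓ1 : 1 ≤ ℓ₁ := (le_max_right _ _).trans hℓ
    have hℓ1' : (0 : ℝ) < ℓ₁ := by exact_mod_cast hℓ1
    have hpos : 0 < |lyapFin A ω j ℓ₁ e - lyap A ω j e| :=
      lt_trans (mul_pos four_pos (Real.exp_pos _)) hbig
    refine ⟨ℓ₁ * |lyapFin A ω j ℓ₁ e - lyap A ω j e| / 2, half_pos (mul_pos hℓ1' hpos),
      fun N => ⟨2 ^ N * ℓ₁, ?_, ?_⟩⟩
    · calc N ≤ 2 ^ N := Nat.lt_two_pow_self.le
        _ ≤ 2 ^ N * ℓ₁ := Nat.le_mul_of_pos_right _ hℓ1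
    · refine lt_of_eq_of_lt ?_ (hpart2 e j ℓ₁ hj1 hj hℓ hbig N)
      push_cast
      rw [pow_succ]
      field_simp
  · left
    push Not at hbig
    set ℓ₀ := max (max ℓ₂ ℓ₃) 1
    -- the finitely many scales below `ℓ₀` are absorbed into the constant
    refine ⟨c₁, hc₁, 4 + ∑ m ∈ Finset.range ℓ₀,
      |lyapFin A ω j m e - lyap A ω j e| * Real.exp (c₁ * m), fun n _ => ?_⟩
    have hterm : ∀ m : ℕ, 0 ≤ |lyapFin A ω j m e - lyap A ω j e| * Real.exp (c₁ * m) := fun m =>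
      mul_nonneg (abs_nonneg _) (Real.exp_pos _).le
    rcases Nat.lt_or_ge n ℓ₀ with hlt | hge
    · have h1 := Finset.single_le_sum (fun m _ => hterm m) (Finset.mem_range.mpr hlt)
      have h2 : |lyapFin A ω j n e - lyap A ω j e| =
          |lyapFin A ω j n e - lyap A ω j e| * Real.exp (c₁ * n) * Real.exp (-c₁ * n) := by
        rw [mul_assoc, ← Real.exp_add]
        simp
      rw [h2]
      exact mul_le_mul_of_nonneg_right (by linarith) (Real.exp_pos _).le
    · refine (hbig n hge).trans (mul_le_mul_of_nonneg_right ?_ (Real.exp_pos _).le)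
      linarith [Finset.sum_nonneg (s := Finset.range ℓ₀) fun m _ => hterm m]

end
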